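/- (Asymptotic Hopf's lemma for antisymmetric functions.) Fix λ ∈ ℝ and 0 < s < 1. Let T_λ = {x ∈ ℝⁿ : x₁ = λ}, Σ̃_λ = {x ∈ ℝⁿ : x₁ > λ}, and for x ∈ ℝⁿ let x^λ = (2λ − x₁, x₂, …, x_n). Suppose w_λ ∈ (C^{1,1}_loc(Σ̃_λ) ∩ 𝓛_{2s}) × C¹((0,∞)) is bounded on ℝⁿ × (0,∞) and satisfies: (i) ∂w_λ/∂t(x,t) + (−Δ)^s w_λ(x,t) = c_λ(x,t) w_λ(x,t) for all (x,t) ∈ Σ̃_λ × (0,∞), where c_λ is bounded uniformly in t; (ii) w_λ(x^λ, t) = −w_λ(x,t) for all (x,t) ∈ Σ̃_λ × (0,∞); (iii) liminf_{t→∞} w_λ(x,t) ≥ 0 for every x ∈ Σ̃_λ. Let ψ_λ be an ω-limit of w_λ, i.e. there exists a sequence t_k → ∞ such that w_λ(·, t_k) → ψ_λ uniformly on ℝⁿ. If ψ_λ ≥ 0 on Σ̃_λ and ψ_λ(x) > 0 for some x ∈ Σ̃_λ, then for every point x ∈ T_λ = ∂Σ̃_λ one has ∂ψ_λ/∂ν(x)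 < 0, where ν = (−1, 0, …, 0) is the outward normal to Σ̃_λ; equivalently, liminf_{h→0⁺} ψ_λ(x + h e₁)/h > 0 for every x ∈ T_λ, where e₁ = (1,0,…,0). -/

import Mathlib

open MeasureTheory Filter Metric Topology Set

noncomputable section

/-- Euclidean space `ℝⁿ`. -/
abbrev Eucl (n : ℕ) := EuclideanSpace ℝ (Fin n)

/-- `v` is locally `C^{1,1}` on the open set `Ω`. -/
def C11loc {n : ℕ} (Ω : Set (Eucl n)) (v : Eucl n → ℝ) : Prop :=
  ∀ x ∈ Ω, ∃ r > 0, ball x r ⊆ Ω ∧ DifferentiableOn ℝ v (ball x r) ∧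
    ∃ K : NNReal, LipschitzOnWith K (fderiv ℝ v) (ball x r)

/-- The tail-integrability class `𝓛_{2s}`. -/
def L2s {n : ℕ} (s : ℝ) (v : Eucl n → ℝ) : Prop :=
  LocallyIntegrable v volume ∧
    Integrable (fun x => |v x| / (1 + ‖x‖ ^ ((n : ℝ) + 2 * s))) volume

/-- `L` is the value of the fractional Laplacian `(-Δ)^s v (x)`, defined as a
principal value:  `L = C_{n,s} P.V. ∫ (v(x) - v(y)) / |x-y|^{n+2s} dy`. -/
def IsFracLap {n : ℕ} (Cns s : ℝ) (v : Eucl n → ℝ) (x : Eucl n) (L : ℝ) : Prop :=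
  Tendsto (fun ε : ℝ =>
      Cns * ∫ y in {y : Eucl n | ε < dist x y}, (v x - v y) / dist x y ^ ((n : ℝ) + 2 * s))
    (𝓝[>] 0) (𝓝 L)

/-- The reflection `x^λ = (2λ - x₁, x₂, …, xₙ)` of `x` across the hyperplane `{x₁ = λ}`. -/
def reflect {n : ℕ} [NeZero n] (lam : ℝ) (x : Eucl n) : Eucl n :=
  x + (2 * (lam - x 0)) • EuclideanSpace.single (0 : Fin n) (1 : ℝ)

/-!
The equation holds only pointwise in time, so it is first transferred to the spatial mollifications
of `w`. At times near which the second differences of `w` are uniformly bounded this is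
differentiation under the integral sign; a Baire category argument together with a comparison
estimate across the gaps between bad times shows that no other times occur.

Fix `x₀ ∈ T_λ`. On a short time interval ending at `t_k` the mollification of `w` is compared with
`κ (t - a) / δ * P - η (1 + (t - a))`, where `P` is a cut-off of `x₁ - λ` near `x₀` and `η`
controls the negative part of `w` on `Σ̃_λ`, which disappears as `t → ∞`. At a first touching
point `x`, folding the nonlocal term along the reflection leaves the kernel
`k(x - y) - k(x - y^λ)`, which is bounded below by a multiple of `x₁ - λ`. The mass of `w` near a
point where `ψ_λ > 0` therefore contributes a term linear in `x₁ - λ`, which for small `κ` beats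
the cost of the barrier. In the limit `κ (x₁ - λ) ≤ ψ_λ(x)` near `x₀`.
-/

section SecondDifference

variable {E : Type*}

/-- The symmetric second difference of `v` at `x` in direction `z`, with the sign for which the
fractional Laplacian is its integral against a positive kernel. -/
def secondDiff [AddCommGroup E] (v : E → ℝ) (x z : E) : ℝ := 2 * v x - v (x + z) - v (x - z)

/-- The weight against which Lévy measures are integrable. -/
def levyWeight [Norm E] (z : E) : ℝ := min 1 (‖z‖ ^ 2)

lemma secondDiff_neg [AddCommGroup E] (v : E → ℝ) (x z : E) :
    secondDiff (fun y => -v y) x z = -secondDiff v x z := by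
  unfold secondDiff; ring

lemma measurable_secondDiff [AddCommGroup E] [MeasurableSpace E] [MeasurableAdd E]
    [MeasurableSub E] {v : E → ℝ} (hv : Measurable v) (x : E) :
    Measurable (secondDiff v x) := by
  unfold secondDiff; fun_prop

lemma abs_secondDiff_le_of_bdd [AddCommGroup E] {v : E → ℝ} {M : ℝ} (hM : ∀ x, |v x| ≤ M)
    (x z : E) : |secondDiff v x z| ≤ 4 * M := by
  unfold secondDiff
  have h₀ := abs_le.1 (hM x)
  have h₁ := abs_le.1 (hM (x + z))
  have h₂ := abs_le.1 (hM (x - z))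
  rw [abs_le]; constructor <;> linarith

variable [NormedAddCommGroup E]

lemma levyWeight_nonneg (z : E) : 0 ≤ levyWeight z := by
  unfold levyWeight; positivity

lemma levyWeight_of_one_le {z : E} (hz : 1 ≤ ‖z‖) : levyWeight z = 1 :=
  min_eq_left (one_le_pow₀ hz)

lemma abs_secondDiff_le_levyWeight {v : E → ℝ} {M N : ℝ} (hM : ∀ x, |v x| ≤ M) {x z : E}
    (hN : |secondDiff v x z| ≤ N * ‖z‖ ^ 2) :
    |secondDiff v x z| ≤ max N (4 * M) * levyWeight z := by
  unfold levyWeight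
  rcases le_total 1 (‖z‖ ^ 2) with h | h
  · rw [min_eq_left h, mul_one]
    exact (abs_secondDiff_le_of_bdd hM x z).trans (le_max_right _ _)
  · rw [min_eq_right h]
    exact hN.trans (by gcongr; exact le_max_left _ _)

variable [NormedSpace ℝ E]

lemma add_smul_mem_ball {x z : E} {r σ : ℝ} (hz : ‖z‖ < r) (hσ : |σ| ≤ 1) :
    x + σ • z ∈ ball x r := by
  rw [mem_ball, dist_self_add_left, norm_smul]
  exact (mul_le_of_le_one_left (norm_nonneg z) hσ).trans_lt hz

lemma norm_fderiv_sub_fderiv_neg_le_of_lipschitzOnWith {v : E → ℝ} {x z : E} {r τ : ℝ} {K : NNReal}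
    (hK : LipschitzOnWith K (fderiv ℝ v) (ball x r)) (hz : ‖z‖ < r) (hτ : |τ| ≤ 1) :
    ‖fderiv ℝ v (x + τ • z) z - fderiv ℝ v (x + (-τ) • z) z‖ ≤ 2 * K * ‖z‖ ^ 2 := by
  have hdist : dist (x + τ • z) (x + (-τ) • z) ≤ 2 * ‖z‖ := by
    rw [dist_add_left, dist_eq_norm, ← sub_smul, norm_smul, sub_neg_eq_add, ← two_mul, norm_mul,
      Real.norm_two, Real.norm_eq_abs]
    gcongr
    exact mul_le_of_le_one_right zero_le_two hτ
  have hlip := hK.dist_le_mul _ (add_smul_mem_ball hz hτ)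
    _ (add_smul_mem_ball hz ((abs_neg τ).trans_le hτ))
  calc ‖fderiv ℝ v (x + τ • z) z - fderiv ℝ v (x + (-τ) • z) z‖
      ≤ ‖fderiv ℝ v (x + τ • z) - fderiv ℝ v (x + (-τ) • z)‖ * ‖z‖ :=
        (fderiv ℝ v (x + τ • z) - fderiv ℝ v (x + (-τ) • z)).le_opNorm z
    _ ≤ K * (2 * ‖z‖) * ‖z‖ := by
        rw [← dist_eq_norm]
        gcongr
        exact hlip.trans (by gcongr)
    _ = 2 * K * ‖z‖ ^ 2 := by ring

lemma abs_secondDiff_le_of_lipschitzOnWith_fderiv {v : E → ℝ} {x : E} {r : ℝ} {K : NNReal}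
    (hd : DifferentiableOn ℝ v (ball x r)) (hK : LipschitzOnWith K (fderiv ℝ v) (ball x r))
    {z : E} (hz : ‖z‖ < r) : |secondDiff v x z| ≤ 2 * K * ‖z‖ ^ 2 := by
  have hasDeriv : ∀ σ : ℝ, |σ| ≤ 1 →
      HasDerivAt (fun σ : ℝ => v (x + σ • z)) (fderiv ℝ v (x + σ • z) z) σ := by
    intro σ hσ
    refine HasFDerivAt.comp_hasDerivAt (f := fun σ : ℝ => x + σ • z) σ
      (hd.differentiableAt (isOpen_ball.mem_nhds (add_smul_mem_ball hz hσ))).hasFDerivAt ?_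
    simpa using ((hasDerivAt_id σ).smul_const z).const_add x
  have habs : ∀ τ ∈ Icc (0 : ℝ) 1, |τ| ≤ 1 := fun τ hτ => (abs_of_nonneg hτ.1).trans_le hτ.2
  have hderiv : ∀ τ ∈ Icc (0 : ℝ) 1,
      HasDerivWithinAt (fun τ : ℝ => v (x + τ • z) + v (x + (-τ) • z))
        (fderiv ℝ v (x + τ • z) z - fderiv ℝ v (x + (-τ) • z) z) (Icc 0 1) τ := by
    intro τ hτ
    have hneg := (hasDeriv (-τ) ((abs_neg τ).trans_le (habs τ hτ))).scomp τ (hasDerivAt_neg τ)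
    rw [neg_one_smul] at hneg
    exact ((hasDeriv τ (habs τ hτ)).fun_add hneg).hasDerivWithinAt
  have hbound : ∀ τ ∈ Ico (0 : ℝ) 1,
      ‖fderiv ℝ v (x + τ • z) z - fderiv ℝ v (x + (-τ) • z) z‖ ≤ 2 * K * ‖z‖ ^ 2 := fun τ hτ =>
    norm_fderiv_sub_fderiv_neg_le_of_lipschitzOnWith hK hz (habs τ (Ico_subset_Icc_self hτ))
  have hmean := norm_image_sub_le_of_norm_deriv_le_segment' hderiv hbound 1
    (right_mem_Icc.2 zero_le_one)
  simp only [one_smul, neg_smul, ← sub_eq_add_neg, zero_smul, neg_zero, add_zero, sub_zero,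
    mul_one, Real.norm_eq_abs] at hmean
  rw [abs_sub_comm] at hmean
  convert hmean using 2
  unfold secondDiff; ring

lemma exists_abs_secondDiff_le_of_contDiff {v : E → ℝ} (hv : ContDiff ℝ 2 v)
    (hc : HasCompactSupport v) :
    ∃ A, 0 ≤ A ∧ ∀ x z, |secondDiff v x z| ≤ A * levyWeight z := by
  obtain ⟨M, hM⟩ := hv.continuous.bounded_above_of_compact_support hc
  have hfderiv : ContDiff ℝ 1 (fderiv ℝ v) := hv.fderiv_right (by norm_num)
  obtain ⟨K, hK⟩ := hfderiv.lipschitzWith_of_hasCompactSupport (hc.fderiv (𝕜 := ℝ)) (by simp)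
  refine ⟨max (2 * K) (4 * M), le_max_of_le_left (by positivity), fun x z => ?_⟩
  exact abs_secondDiff_le_levyWeight hM
    (abs_secondDiff_le_of_lipschitzOnWith_fderiv (r := ‖z‖ + 1)
      (hv.differentiable (by norm_num)).differentiableOn hK.lipschitzOnWith (by linarith))

end SecondDifference

section BddMeasurable

/-- `v` is measurable and `|v| ≤ M` everywhere. -/
structure IsBddMeasurable {E : Type*} [MeasurableSpace E] (v : E → ℝ) (M : ℝ) : Prop where
  measurable : Measurable v
  abs_le : ∀ x, |v x| ≤ M

variable {E : Type*} [MeasurableSpace E] {u v : E → ℝ} {M : ℝ}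

lemma IsBddMeasurable.neg (hv : IsBddMeasurable v M) : IsBddMeasurable (fun x => -v x) M :=
  ⟨hv.measurable.neg, fun x => (abs_neg (v x)).trans_le (hv.abs_le x)⟩

lemma IsBddMeasurable.abs (hv : IsBddMeasurable v M) : IsBddMeasurable (fun x => |v x|) M :=
  ⟨hv.measurable.abs, fun x => (abs_abs (v x)).trans_le (hv.abs_le x)⟩

lemma IsBddMeasurable.comp (hv : IsBddMeasurable v M) {g : E → E} (hg : Measurable g) :
    IsBddMeasurable (fun x => v (g x)) M :=
  ⟨hv.measurable.comp hg, fun x => hv.abs_le (g x)⟩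

end BddMeasurable

section LevyOperator

variable {E : Type*} [NormedAddCommGroup E] [InnerProductSpace ℝ E] [FiniteDimensional ℝ E]
  [MeasurableSpace E] [BorelSpace E]

/-- `k` is the density of a Lévy measure. -/
structure IsLevyKernel (k : E → ℝ) : Prop where
  nonneg : ∀ z, 0 ≤ k z
  measurable : Measurable k
  integrable : Integrable fun z => levyWeight z * k z

/-- The integro-differential operator with kernel `k`, written with second differences so that no
principal value is needed. -/
def levyOp (k v : E → ℝ) (x : E) : ℝ := ∫ z, secondDiff v x z * k z

/-- The integral of `levyWeight` against `k`, which bounds `levyOp k` on functions with controlled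
second differences. -/
def levyMass (k : E → ℝ) : ℝ := ∫ z, levyWeight z * k z

variable {k v : E → ℝ} {x : E} {A : ℝ}

lemma IsLevyKernel.levyMass_nonneg (hk : IsLevyKernel k) : 0 ≤ levyMass k :=
  integral_nonneg fun z => mul_nonneg (levyWeight_nonneg z) (hk.nonneg z)

lemma levyOp_neg (k v : E → ℝ) (x : E) : levyOp k (fun y => -v y) x = -levyOp k v x := by
  simp only [levyOp, secondDiff_neg, neg_mul, integral_neg]

lemma IsLevyKernel.norm_mul_le (hk : IsLevyKernel k) {z : E} {r : ℝ}
    (hr : |r| ≤ A * levyWeight z) : ‖r * k z‖ ≤ A * (levyWeight z * k z) := by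
  rw [Real.norm_eq_abs, abs_mul, abs_of_nonneg (hk.nonneg z), ← mul_assoc]
  exact mul_le_mul_of_nonneg_right hr (hk.nonneg z)

lemma IsLevyKernel.integrable_secondDiff_mul (hk : IsLevyKernel k) (hv : Measurable v)
    (hA : ∀ z, |secondDiff v x z| ≤ A * levyWeight z) :
    Integrable fun z => secondDiff v x z * k z :=
  (hk.integrable.const_mul A).mono'
    ((measurable_secondDiff hv x).mul hk.measurable).aestronglyMeasurable
    (ae_of_all _ fun z => hk.norm_mul_le (hA z))

lemma IsLevyKernel.abs_levyOp_le (hk : IsLevyKernel k)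
    (hA : ∀ z, |secondDiff v x z| ≤ A * levyWeight z) : |levyOp k v x| ≤ A * levyMass k := by
  unfold levyOp levyMass
  rw [← integral_const_mul]
  exact norm_integral_le_of_norm_le (hk.integrable.const_mul A)
    (ae_of_all _ fun z => hk.norm_mul_le (hA z))

lemma IsLevyKernel.levyOp_le (hk : IsLevyKernel k)
    (hint : Integrable fun z => secondDiff v x z * k z)
    (hA : ∀ z, secondDiff v x z ≤ A * levyWeight z) : levyOp k v x ≤ A * levyMass k := by
  unfold levyOp levyMass
  rw [← integral_const_mul]
  refine integral_mono hint (hk.integrable.const_mul A) fun z => ?_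
  simpa only [mul_assoc] using mul_le_mul_of_nonneg_right (hA z) (hk.nonneg z)

/-- The kernel `c / |z|^p` of a multiple of the fractional Laplacian, where `p = n + 2s`. -/
def fracKernel (c p : ℝ) (z : E) : ℝ := c / ‖z‖ ^ p

lemma isLevyKernel_fracKernel [Nontrivial E] {c p : ℝ} (hc : 0 ≤ c)
    (hp : Module.finrank ℝ E < p) (hp' : p < Module.finrank ℝ E + 2) :
    IsLevyKernel (fracKernel c p : E → ℝ) where
  nonneg z := by unfold fracKernel; positivity
  measurable := by unfold fracKernel; fun_prop
  integrable := by
    have rpow_finrank : ∀ y : ℝ, 0 < y →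
        y ^ (Module.finrank ℝ E - 1) = y ^ ((Module.finrank ℝ E : ℝ) - 1) := by
      intro y _
      rw [← Real.rpow_natCast, Nat.cast_sub Module.finrank_pos, Nat.cast_one]
    unfold levyWeight fracKernel
    rw [integrable_fun_norm_addHaar volume (f := fun r : ℝ => min 1 (r ^ 2) * (c / r ^ p)),
      ← Ioc_union_Ioi_eq_Ioi zero_le_one]
    apply IntegrableOn.union
    · have hnear : IntegrableOn (fun y : ℝ => c * y ^ (Module.finrank ℝ E + 1 - p)) (Ioc 0 1) :=
        ((intervalIntegrable_iff_integrableOn_Ioc_of_le zero_le_one).1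
          (intervalIntegral.intervalIntegrable_rpow' (by linarith))).const_mul c
      refine hnear.congr_fun (fun y hy => ?_) measurableSet_Ioc
      have hy0 : 0 < y := hy.1
      simp only [smul_eq_mul, min_eq_right (pow_le_one₀ hy0.le hy.2), rpow_finrank y hy0,
        div_eq_mul_inv]
      rw [← Real.rpow_natCast y 2, ← Real.rpow_neg hy0.le,
        show (Module.finrank ℝ E : ℝ) + 1 - p = (Module.finrank ℝ E - 1) + ((2 : ℕ) + -p) by
          push_cast; ring, Real.rpow_add hy0, Real.rpow_add hy0]
      ring
    · have hfar : IntegrableOn (fun y : ℝ => c * y ^ (Module.finrank ℝ E - 1 - p)) (Ioi 1) :=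
        (integrableOn_Ioi_rpow_of_lt (by linarith) zero_lt_one).const_mul c
      refine hfar.congr_fun (fun y hy => ?_) measurableSet_Ioi
      have hy0 : 0 < y := zero_lt_one.trans hy
      simp only [smul_eq_mul, min_eq_left (one_le_pow₀ (mem_Ioi.1 hy).le), rpow_finrank y hy0,
        div_eq_mul_inv, one_mul]
      rw [← Real.rpow_neg hy0.le, sub_eq_add_neg _ p, Real.rpow_add hy0]
      ring

end LevyOperator

section Mollifier

variable {E : Type*} [NormedAddCommGroup E] [InnerProductSpace ℝ E] [FiniteDimensional ℝ E]
  [MeasurableSpace E] [BorelSpace E]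

/-- A radially decreasing `C²` mollifier supported in the ball of radius `ε`. Monotonicity in `‖z‖`
also encodes radial symmetry. -/
structure IsRadialMollifier (ρ : E → ℝ) (ε : ℝ) : Prop where
  pos : 0 < ε
  contDiff : ContDiff ℝ 2 ρ
  nonneg : ∀ z, 0 ≤ ρ z
  eq_zero_of_le_norm : ∀ z, ε ≤ ‖z‖ → ρ z = 0
  integral_eq_one : ∫ z, ρ z = 1
  antitone : ∀ y z, ‖y‖ ≤ ‖z‖ → ρ z ≤ ρ y

omit [MeasurableSpace E] [BorelSpace E] in
lemma hasCompactSupport_of_eq_zero_of_le_norm {ρ : E → ℝ} {ε : ℝ} (h : ∀ z, ε ≤ ‖z‖ → ρ z = 0) :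
    HasCompactSupport ρ :=
  .of_support_subset_isCompact (isCompact_closedBall 0 ε) fun z hz =>
    mem_closedBall_zero_iff.2 (not_le.1 fun hle => hz (h z hle)).le

lemma exists_isRadialMollifier {ε : ℝ} (hε : 0 < ε) : ∃ ρ : E → ℝ, IsRadialMollifier ρ ε := by
  let f : E → ℝ := fun z => Real.smoothTransition (1 - ‖z‖ ^ 2 / ε ^ 2)
  have f_contDiff : ContDiff ℝ 2 f :=
    (Real.smoothTransition.contDiff (n := 2)).comp
      (contDiff_const.sub ((contDiff_norm_sq ℝ).div_const _))
  have f_nonneg : ∀ z, 0 ≤ f z := fun z => Real.smoothTransition.nonneg _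
  have f_eq_zero : ∀ z, ε ≤ ‖z‖ → f z = 0 := fun z hz =>
    Real.smoothTransition.zero_of_nonpos <|
      sub_nonpos.2 ((one_le_div (by positivity)).2 (by gcongr))
  have f_antitone : ∀ y z, ‖y‖ ≤ ‖z‖ → f z ≤ f y := fun y z hyz =>
    Real.smoothTransition.monotone (by gcongr)
  have integral_pos : 0 < ∫ z, f z :=
    f_contDiff.continuous.integral_pos_of_hasCompactSupport_nonneg_nonzero
      (hasCompactSupport_of_eq_zero_of_le_norm f_eq_zero) f_nonneg (x := 0) (by simp [f])
  exact
    ⟨fun z => (∫ z, f z)⁻¹ * f z,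
      { pos := hε
        contDiff := contDiff_const.mul f_contDiff
        nonneg := fun z => mul_nonneg (inv_nonneg.2 integral_pos.le) (f_nonneg z)
        eq_zero_of_le_norm := fun z hz => by rw [f_eq_zero z hz, mul_zero]
        integral_eq_one := by rw [integral_const_mul, inv_mul_cancel₀ integral_pos.ne']
        antitone := fun y z hyz =>
          mul_le_mul_of_nonneg_left (f_antitone y z hyz) (inv_nonneg.2 integral_pos.le) }⟩

namespace IsRadialMollifier

variable {ρ : E → ℝ} {ε : ℝ}

lemma hasCompactSupport (h : IsRadialMollifier ρ ε) : HasCompactSupport ρ :=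
  hasCompactSupport_of_eq_zero_of_le_norm h.eq_zero_of_le_norm

lemma continuous (h : IsRadialMollifier ρ ε) : Continuous ρ := h.contDiff.continuous

lemma integrable (h : IsRadialMollifier ρ ε) : Integrable ρ :=
  h.continuous.integrable_of_hasCompactSupport h.hasCompactSupport

lemma le_apply_zero (h : IsRadialMollifier ρ ε) (z : E) : ρ z ≤ ρ 0 :=
  h.antitone _ _ (by simp only [norm_zero, norm_nonneg])

lemma norm_lt (h : IsRadialMollifier ρ ε) {z : E} (hz : ρ z ≠ 0) : ‖z‖ < ε :=
  not_le.1 fun hle => hz (h.eq_zero_of_le_norm z hle)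

lemma apply_zero_pos (h : IsRadialMollifier ρ ε) : 0 < ρ 0 := by
  refine (h.nonneg 0).lt_of_ne' fun h0 => one_ne_zero (α := ℝ) ?_
  have : ∀ z, ρ z = 0 := fun z => le_antisymm (h0 ▸ h.le_apply_zero z) (h.nonneg z)
  simpa only [this, integral_zero] using h.integral_eq_one.symm

end IsRadialMollifier

end Mollifier

section Mollify

variable {E : Type*} [NormedAddCommGroup E] [InnerProductSpace ℝ E] [FiniteDimensional ℝ E]
  [MeasurableSpace E] [BorelSpace E]

/-- The convolution of `v` with the mollifier `ρ`. -/
def mollify (ρ v : E → ℝ) : E → ℝ := convolution ρ v (ContinuousLinearMap.lsmul ℝ ℝ) volume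

lemma mollify_apply (ρ v : E → ℝ) (x : E) : mollify ρ v x = ∫ y, ρ y * v (x - y) := rfl

lemma mollify_apply_swap (ρ v : E → ℝ) (x : E) : mollify ρ v x = ∫ y, ρ (x - y) * v y :=
  convolution_lsmul_swap

lemma mollify_neg (ρ v : E → ℝ) (x : E) : mollify ρ (fun y => -v y) x = -mollify ρ v x := by
  simp only [mollify_apply, mul_neg, integral_neg]

variable {ρ u v : E → ℝ} {ε M c : ℝ} {x : E}

lemma integrable_mollify (hρ : IsRadialMollifier ρ ε) (hv : IsBddMeasurable v M) (x : E) :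
    Integrable fun y => ρ y * v (x - y) :=
  hρ.integrable.mul_bdd (c := M)
    (hv.measurable.comp (measurable_const.sub measurable_id)).aestronglyMeasurable
    (ae_of_all _ fun y => hv.abs_le (x - y))

lemma integrable_mollify_swap (hρ : IsRadialMollifier ρ ε) (hv : IsBddMeasurable v M) (x : E) :
    Integrable fun y => ρ (x - y) * v y := by
  simpa only [sub_sub_cancel] using (integrable_mollify hρ hv x).comp_sub_left x

lemma mollify_const (hρ : IsRadialMollifier ρ ε) (c : ℝ) (x : E) :
    mollify ρ (fun _ => c) x = c := by
  rw [mollify_apply, integral_mul_const, hρ.integral_eq_one, one_mul]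

lemma mollify_mono (hρ : IsRadialMollifier ρ ε) (hu : Integrable fun y => ρ y * u (x - y))
    (hv : Integrable fun y => ρ y * v (x - y)) (hle : ∀ y, ‖y‖ < ε → u (x - y) ≤ v (x - y)) :
    mollify ρ u x ≤ mollify ρ v x := by
  rw [mollify_apply, mollify_apply]
  refine integral_mono hu hv fun y => ?_
  rcases eq_or_ne (ρ y) 0 with hy | hy
  · simp only [hy, zero_mul, le_refl]
  · exact mul_le_mul_of_nonneg_left (hle y (hρ.norm_lt hy)) (hρ.nonneg y)

lemma le_mollify (hρ : IsRadialMollifier ρ ε) (hv : Integrable fun y => ρ y * v (x - y))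
    (hle : ∀ y, ‖y‖ < ε → c ≤ v (x - y)) : c ≤ mollify ρ v x :=
  (mollify_const hρ c x).symm.trans_le (mollify_mono hρ (hρ.integrable.mul_const c) hv hle)

lemma abs_mollify_le (hρ : IsRadialMollifier ρ ε) (hc : ∀ y, ‖y‖ < ε → |v (x - y)| ≤ c) :
    |mollify ρ v x| ≤ c := by
  rw [← mollify_const hρ c x, mollify_apply, mollify_apply, ← Real.norm_eq_abs]
  refine norm_integral_le_of_norm_le (hρ.integrable.mul_const c) (ae_of_all _ fun y => ?_)
  rw [Real.norm_eq_abs, abs_mul, abs_of_nonneg (hρ.nonneg y)]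
  rcases eq_or_ne (ρ y) 0 with hy | hy
  · simp only [hy, zero_mul, le_refl]
  · exact mul_le_mul_of_nonneg_left (hc y (hρ.norm_lt hy)) (hρ.nonneg y)

lemma mollify_sub (hu : Integrable fun y => ρ y * u (x - y))
    (hv : Integrable fun y => ρ y * v (x - y)) :
    mollify ρ (fun y => u y - v y) x = mollify ρ u x - mollify ρ v x := by
  simp only [mollify_apply, mul_sub]
  exact integral_sub hu hv

lemma exists_abs_mollify_sub_le (hv : IsBddMeasurable v M) (hx : ContinuousAt v x) {δ : ℝ}
    (hδ : 0 < δ) :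
    ∃ ε₀ > 0, ∀ ρ ε, IsRadialMollifier ρ ε → ε < ε₀ → |mollify ρ v x - v x| ≤ δ := by
  obtain ⟨ε₀, hε₀, hclose⟩ := Metric.continuousAt_iff.1 hx δ hδ
  refine ⟨ε₀, hε₀, fun ρ ε hρ hε => ?_⟩
  have hsub := mollify_sub (v := fun _ => v x) (integrable_mollify hρ hv x)
    (hρ.integrable.mul_const (v x))
  rw [mollify_const hρ] at hsub
  rw [← hsub]
  refine abs_mollify_le hρ fun y hy => (hclose ?_).le
  rw [dist_self_sub_left]
  exact hy.trans hε

lemma integral_two_mul_sub_sub {f g h : E → ℝ} (hf : Integrable f) (hg : Integrable g)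
    (hh : Integrable h) :
    ∫ y, (2 * f y - g y - h y) = 2 * (∫ y, f y) - (∫ y, g y) - ∫ y, h y := by
  have hfg : Integrable fun y => 2 * f y - g y := (hf.const_mul 2).sub hg
  rw [integral_sub hfg hh, integral_sub (hf.const_mul 2) hg, integral_const_mul]

lemma secondDiff_mollify (hρ : IsRadialMollifier ρ ε) (hv : IsBddMeasurable v M) (x z : E) :
    secondDiff (mollify ρ v) x z = mollify ρ (fun y => secondDiff v y z) x := by
  have shift (a : E) : mollify ρ v (x + a) = mollify ρ (fun y => v (y + a)) x := by
    simp only [mollify_apply, add_sub_right_comm]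
  have int_shift (a : E) : Integrable fun y => ρ y * v (x - y + a) :=
    integrable_mollify hρ (hv.comp (g := (· + a)) (measurable_add_const a)) x
  unfold secondDiff
  rw [shift z, sub_eq_add_neg x z, shift (-z)]
  simp only [mollify_apply, sub_eq_add_neg _ z]
  rw [← integral_two_mul_sub_sub (integrable_mollify hρ hv x) (int_shift z) (int_shift (-z))]
  congr 1; ext y; ring

lemma secondDiff_mollify_swap (hρ : IsRadialMollifier ρ ε) (hv : IsBddMeasurable v M) (x z : E) :
    secondDiff (mollify ρ v) x z = ∫ y, secondDiff ρ (x - y) z * v y := by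
  have int_shift (a : E) : Integrable fun y => ρ (x - y + a) * v y := by
    simpa only [add_sub_right_comm] using integrable_mollify_swap hρ hv (x + a)
  have int_zero := integrable_mollify_swap hρ hv x
  unfold secondDiff
  rw [sub_eq_add_neg x z]
  simp only [mollify_apply_swap, add_sub_right_comm, sub_eq_add_neg _ z]
  rw [← integral_two_mul_sub_sub int_zero (int_shift z) (int_shift (-z))]
  congr 1; ext y; ring

lemma integrable_secondDiff (hρ : Integrable ρ) (z : E) :
    Integrable fun y => secondDiff ρ y z :=
  ((hρ.const_mul 2).sub (hρ.comp_add_right z)).sub (hρ.comp_sub_right z)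

lemma IsRadialMollifier.integral_abs_secondDiff_le_four (hρ : IsRadialMollifier ρ ε) (z : E) :
    ∫ y, |secondDiff ρ y z| ≤ 4 := by
  have h₀ := hρ.integrable
  have hadd : Integrable fun y => 2 * ρ y + ρ (y + z) :=
    (h₀.const_mul 2).add (h₀.comp_add_right z)
  calc ∫ y, |secondDiff ρ y z| ≤ ∫ y, (2 * ρ y + ρ (y + z) + ρ (y - z)) := by
        refine integral_mono (integrable_secondDiff h₀ z).abs
          (hadd.add (h₀.comp_sub_right z)) fun y => ?_
        have := hρ.nonneg y
        have := hρ.nonneg (y + z)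
        have := hρ.nonneg (y - z)
        unfold secondDiff
        rw [abs_le]
        constructor <;> linarith
    _ = 4 := by
        rw [integral_add hadd (h₀.comp_sub_right z),
          integral_add (h₀.const_mul 2) (h₀.comp_add_right z), integral_const_mul,
          integral_add_right_eq_self ρ z, integral_sub_right_eq_self ρ z, hρ.integral_eq_one]
        norm_num

lemma IsRadialMollifier.exists_integral_abs_secondDiff_le (hρ : IsRadialMollifier ρ ε) :
    ∃ A, 0 ≤ A ∧ ∀ z, ∫ y, |secondDiff ρ y z| ≤ A * levyWeight z := by
  obtain ⟨A, _, hA⟩ := exists_abs_secondDiff_le_of_contDiff hρ.contDiff hρ.hasCompactSupport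
  set V := volume.real (closedBall (0 : E) (ε + 1))
  refine ⟨max 4 (A * V), le_max_of_le_left (by norm_num), fun z => ?_⟩
  rcases le_total 1 ‖z‖ with hz | hz
  · rw [levyWeight_of_one_le hz, mul_one]
    exact (hρ.integral_abs_secondDiff_le_four z).trans (le_max_left _ _)
  have eq_zero : ∀ y, y ∉ closedBall (0 : E) (ε + 1) → |secondDiff ρ y z| = 0 := by
    intro y hy
    rw [mem_closedBall_zero_iff, not_le] at hy
    have hadd := norm_sub_norm_le y (-z)
    rw [norm_neg, sub_neg_eq_add] at hadd
    have hsub := norm_sub_norm_le y z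
    unfold secondDiff
    rw [hρ.eq_zero_of_le_norm y (by linarith), hρ.eq_zero_of_le_norm (y + z) (by linarith),
      hρ.eq_zero_of_le_norm (y - z) (by linarith)]
    norm_num
  calc ∫ y, |secondDiff ρ y z| = ∫ y in closedBall 0 (ε + 1), |secondDiff ρ y z| :=
        (setIntegral_eq_integral_of_forall_compl_eq_zero eq_zero).symm
    _ ≤ ∫ _ in closedBall (0 : E) (ε + 1), A * levyWeight z :=
        setIntegral_mono (integrable_secondDiff hρ.integrable z).abs.integrableOn
          (integrableOn_const measure_closedBall_lt_top.ne) fun y => hA y z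
    _ = A * V * levyWeight z := by rw [setIntegral_const, smul_eq_mul]; ring
    _ ≤ max 4 (A * V) * levyWeight z := by
        have := levyWeight_nonneg z
        gcongr
        exact le_max_right _ _

lemma IsRadialMollifier.exists_abs_secondDiff_mollify_le (hρ : IsRadialMollifier ρ ε) :
    ∃ A, 0 ≤ A ∧ ∀ v M, IsBddMeasurable v M → ∀ x z,
      |secondDiff (mollify ρ v) x z| ≤ M * A * levyWeight z := by
  obtain ⟨A, hA0, hA⟩ := hρ.exists_integral_abs_secondDiff_le
  refine ⟨A, hA0, fun v M hv x z => ?_⟩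
  have hM : 0 ≤ M := (abs_nonneg _).trans (hv.abs_le 0)
  calc |secondDiff (mollify ρ v) x z| = |∫ y, secondDiff ρ (x - y) z * v y| := by
        rw [secondDiff_mollify_swap hρ hv]
    _ ≤ ∫ y, |secondDiff ρ (x - y) z| * M := by
        rw [← Real.norm_eq_abs]
        refine norm_integral_le_of_norm_le
          (((integrable_secondDiff hρ.integrable z).comp_sub_left x).abs.mul_const M)
          (ae_of_all _ fun y => ?_)
        rw [Real.norm_eq_abs, abs_mul]
        exact mul_le_mul_of_nonneg_left (hv.abs_le y) (abs_nonneg _)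
    _ = M * ∫ y, |secondDiff ρ y z| := by
        rw [integral_mul_const, integral_sub_left_eq_self (fun y => |secondDiff ρ y z|) volume x,
          mul_comm]
    _ ≤ M * A * levyWeight z := by
        rw [mul_assoc]; exact mul_le_mul_of_nonneg_left (hA z) hM

variable {k : E → ℝ} {A : ℝ}

lemma IsLevyKernel.integrable_prod_mollify (hk : IsLevyKernel k) (hρ : IsRadialMollifier ρ ε)
    (hv : Measurable v)
    (hA : ∀ y, ‖y‖ < ε → ∀ z, |secondDiff v (x - y) z| ≤ A * levyWeight z) :
    Integrable (fun q : E × E => ρ q.1 * (secondDiff v (x - q.1) q.2 * k q.2))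
      (volume.prod volume) := by
  refine (hρ.integrable.mul_prod (hk.integrable.const_mul A)).mono' ?_ (ae_of_all _ ?_)
  · have hk_meas := hk.measurable
    have hρ_meas := hρ.continuous.measurable
    unfold secondDiff
    exact Measurable.aestronglyMeasurable (by fun_prop)
  · rintro ⟨y, z⟩
    rw [norm_mul, Real.norm_of_nonneg (hρ.nonneg y)]
    rcases eq_or_ne (ρ y) 0 with hy | hy
    · simp only [hy, zero_mul, le_refl]
    · exact mul_le_mul_of_nonneg_left (hk.norm_mul_le (hA y (hρ.norm_lt hy) z)) (hρ.nonneg y)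

lemma IsLevyKernel.integrable_mollify_levyOp (hk : IsLevyKernel k) (hρ : IsRadialMollifier ρ ε)
    (hv : Measurable v)
    (hA : ∀ y, ‖y‖ < ε → ∀ z, |secondDiff v (x - y) z| ≤ A * levyWeight z) :
    Integrable fun y => ρ y * levyOp k v (x - y) := by
  simpa only [integral_const_mul, levyOp] using
    (hk.integrable_prod_mollify hρ hv hA).integral_prod_left

lemma IsLevyKernel.levyOp_mollify (hk : IsLevyKernel k) (hρ : IsRadialMollifier ρ ε)
    (hv : IsBddMeasurable v M)
    (hA : ∀ y, ‖y‖ < ε → ∀ z, |secondDiff v (x - y) z| ≤ A * levyWeight z) :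
    levyOp k (mollify ρ v) x = mollify ρ (levyOp k v) x := by
  simp only [levyOp, mollify_apply, ← integral_const_mul]
  rw [integral_integral_swap (hk.integrable_prod_mollify hρ hv.measurable hA)]
  congr 1; ext z
  rw [secondDiff_mollify hρ hv, mollify_apply, ← integral_mul_const]
  simp only [mul_assoc]

end Mollify

section Evolution

variable {E : Type*} [NormedAddCommGroup E] [InnerProductSpace ℝ E] [FiniteDimensional ℝ E]
  [MeasurableSpace E] [BorelSpace E]

/-- A function on `E × (0, ∞)` bounded by `M`, measurable in space and continuous in time. -/
structure IsBddEvolution (w : E → ℝ → ℝ) (M : ℝ) : Prop where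
  slice : ∀ t > 0, IsBddMeasurable (fun x => w x t) M
  continuousOn : ∀ x, ContinuousOn (w x) (Ioi 0)

namespace IsBddEvolution

variable {w : E → ℝ → ℝ} {ρ k : E → ℝ} {ε M : ℝ}

omit [NormedAddCommGroup E] [InnerProductSpace ℝ E] [FiniteDimensional ℝ E] [BorelSpace E] in
lemma neg (hw : IsBddEvolution w M) : IsBddEvolution (fun x t => -w x t) M :=
  ⟨fun t ht => (hw.slice t ht).neg, fun x => (hw.continuousOn x).neg⟩

omit [NormedAddCommGroup E] [InnerProductSpace ℝ E] [FiniteDimensional ℝ E] [BorelSpace E] in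
lemma abs (hw : IsBddEvolution w M) : IsBddEvolution (fun x t => |w x t|) M :=
  ⟨fun t ht => (hw.slice t ht).abs, fun x => (hw.continuousOn x).abs⟩

lemma continuousOn_mollify (hw : IsBddEvolution w M) (hρ : IsRadialMollifier ρ ε) :
    ContinuousOn (fun q : E × ℝ => mollify ρ (fun x => w x q.2) q.1) (univ ×ˢ Ioi 0) := by
  rintro ⟨x₀, t₀⟩ ⟨-, ht₀ : 0 < t₀⟩
  refine ContinuousAt.continuousWithinAt ?_
  simp only [mollify_apply_swap]
  have hnear : ∀ᶠ q : E × ℝ in 𝓝 (x₀, t₀), q.1 ∈ ball x₀ 1 ∧ 0 < q.2 :=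
    (isOpen_ball.prod isOpen_Ioi).mem_nhds ⟨mem_ball_self one_pos, ht₀⟩
  refine tendsto_integral_filter_of_dominated_convergence
    (bound := (closedBall x₀ (1 + ε)).indicator fun _ => ρ 0 * M) ?_ ?_ ?_ ?_
  · filter_upwards [hnear] with q hq
    exact (integrable_mollify_swap hρ (hw.slice q.2 hq.2) q.1).aestronglyMeasurable
  · filter_upwards [hnear] with q hq
    refine ae_of_all _ fun y => ?_
    rw [norm_mul, Real.norm_of_nonneg (hρ.nonneg _)]
    by_cases hy : y ∈ closedBall x₀ (1 + ε)
    · rw [indicator_of_mem hy]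
      exact mul_le_mul (hρ.le_apply_zero _) ((hw.slice q.2 hq.2).abs_le y) (norm_nonneg _)
        (hρ.nonneg 0)
    · have hfar : ε ≤ ‖q.1 - y‖ := by
        rw [mem_closedBall, not_le] at hy
        rw [← dist_eq_norm, dist_comm]
        linarith [dist_triangle y q.1 x₀, mem_ball.1 hq.1]
      rw [indicator_of_notMem hy, hρ.eq_zero_of_le_norm _ hfar, zero_mul]
  · exact (integrable_indicator_iff measurableSet_closedBall).2
      (integrableOn_const measure_closedBall_lt_top.ne)
  · refine ae_of_all _ fun y => ?_
    have hρ_tendsto : Continuous fun q : E × ℝ => ρ (q.1 - y) := hρ.continuous.comp (by fun_prop)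
    exact (hρ_tendsto.tendsto _).mul
      (((hw.continuousOn y).continuousAt (Ioi_mem_nhds ht₀)).tendsto.comp
        (continuous_snd.tendsto (x₀, t₀)))

lemma continuousOn_mollify_time (hw : IsBddEvolution w M) (hρ : IsRadialMollifier ρ ε) (x : E) :
    ContinuousOn (fun t => mollify ρ (fun y => w y t) x) (Ioi 0) :=
  (hw.continuousOn_mollify hρ).comp (f := fun t : ℝ => (x, t)) (by fun_prop)
    fun _ ht => ⟨mem_univ _, ht⟩

lemma continuous_mollify_slice (hw : IsBddEvolution w M) (hρ : IsRadialMollifier ρ ε) {t : ℝ}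
    (ht : 0 < t) : Continuous (mollify ρ fun y => w y t) :=
  continuousOn_univ.1 <| (hw.continuousOn_mollify hρ).comp (f := fun x : E => (x, t))
    (by fun_prop) fun x _ => ⟨mem_univ x, ht⟩

lemma continuousOn_levyOp_mollify (hw : IsBddEvolution w M) (hk : IsLevyKernel k)
    (hρ : IsRadialMollifier ρ ε) (x : E) :
    ContinuousOn (fun t => levyOp k (mollify ρ fun y => w y t) x) (Ioi 0) := by
  obtain ⟨A, -, hA⟩ := hρ.exists_abs_secondDiff_mollify_le
  intro t₀ ht₀
  have hpos : ∀ᶠ t in 𝓝[Ioi 0] t₀, 0 < t := self_mem_nhdsWithin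
  refine tendsto_integral_filter_of_dominated_convergence
    (bound := fun z => M * A * (levyWeight z * k z)) ?_ ?_ (hk.integrable.const_mul _) ?_
  · filter_upwards [hpos] with t ht
    exact ((measurable_secondDiff (hw.continuous_mollify_slice hρ ht).measurable x).mul
      hk.measurable).aestronglyMeasurable
  · filter_upwards [hpos] with t ht
    exact ae_of_all _ fun z => hk.norm_mul_le (hA _ _ (hw.slice t ht) x z)
  · refine ae_of_all _ fun z => Tendsto.mul_const _ ?_
    have tendsto_at (y : E) := hw.continuousOn_mollify_time hρ y t₀ ht₀
    exact (((tendsto_at x).const_mul 2).sub (tendsto_at (x + z))).sub (tendsto_at (x - z))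

end IsBddEvolution

end Evolution

section RealAnalysis

lemma le_of_hasDerivWithinAt_right_pos {f : ℝ → ℝ} {a b : ℝ} (hab : a ≤ b)
    (hf : ContinuousOn f (Icc a b))
    (hderiv : ∀ τ ∈ Ico a b, ∃ d > 0, HasDerivWithinAt f d (Ici τ) τ) : f a ≤ f b := by
  choose! d hd hfd using hderiv
  have hle := image_le_of_deriv_right_le_deriv_boundary hf.neg (fun τ hτ => (hfd τ hτ).neg)
    (B := fun _ => -f a) (B' := 0) le_rfl continuousOn_const
    (fun τ _ => hasDerivWithinAt_const τ _ _) (fun τ hτ => (neg_neg_of_pos (hd τ hτ)).le)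
    (right_mem_Icc.2 hab)
  exact neg_le_neg_iff.1 hle

lemma pos_of_forall_first_touch {X : Type*} [TopologicalSpace X] [T2Space X] {S : Set X}
    (hS : IsCompact S) {u : X → ℝ → ℝ} {a T : ℝ}
    (hcont : ContinuousOn (fun q : X × ℝ => u q.1 q.2) (S ×ˢ Icc a T))
    (hinit : ∀ x ∈ S, 0 < u x a)
    (htouch : ∀ x ∈ S, ∀ t ∈ Ioc a T, u x t = 0 → (∀ y ∈ S, 0 ≤ u y t) →
      ∀ᶠ τ in 𝓝[<] t, ∃ d > 0, HasDerivWithinAt (u x) d (Ici τ) τ) :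
    ∀ x ∈ S, ∀ t ∈ Icc a T, 0 < u x t := by
  by_contra! hneg
  have hcompact : IsCompact (S ×ˢ Icc a T ∩ (fun q : X × ℝ => u q.1 q.2) ⁻¹' Iic 0) :=
    (hS.prod isCompact_Icc).of_isClosed_subset
      (hcont.preimage_isClosed_of_isClosed (hS.isClosed.prod isClosed_Icc) isClosed_Iic)
      inter_subset_left
  obtain ⟨x₁, hx₁, t₁, ht₁, hut₁⟩ := hneg
  obtain ⟨⟨x, t⟩, ⟨⟨hx, ht⟩, hut⟩, hmin⟩ :=
    hcompact.exists_isMinOn ⟨(x₁, t₁), ⟨hx₁, ht₁⟩, hut₁⟩ continuous_snd.continuousOn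
  have hslice : ∀ y ∈ S, ContinuousOn (u y) (Icc a T) := fun y hy =>
    hcont.comp (f := fun τ : ℝ => (y, τ)) (by fun_prop) fun τ hτ => ⟨hy, hτ⟩
  have hat : a < t := ht.1.lt_of_ne fun h => (hinit x hx).not_ge (h ▸ hut)
  have hbefore : ∀ y ∈ S, ∀ τ ∈ Ico a t, 0 < u y τ := fun y hy τ hτ =>
    not_le.1 fun hle => (hmin (a := (y, τ)) ⟨⟨hy, hτ.1, hτ.2.le.trans ht.2⟩, hle⟩).not_gt hτ.2
  have hnonneg : ∀ y ∈ S, 0 ≤ u y t := fun y hy => by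
    have hlim : Tendsto (u y) (𝓝[Ico a t] t) (𝓝 (u y t)) :=
      (hslice y hy t ht).mono_left (nhdsWithin_mono _ fun τ hτ => ⟨hτ.1, hτ.2.le.trans ht.2⟩)
    have : (𝓝[Ico a t] t).NeBot := by
      rw [nhdsWithin_Ico_eq_nhdsLT hat]; infer_instance
    exact ge_of_tendsto hlim (eventually_nhdsWithin_of_forall fun τ hτ => (hbefore y hy τ hτ).le)
  have hzero : u x t = 0 := le_antisymm hut (hnonneg x hx)
  obtain ⟨l, hl, hderiv⟩ := (mem_nhdsLT_iff_exists_mem_Ico_Ioo_subset hat).1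
    (htouch x hx t ⟨hat, ht.2⟩ hzero hnonneg)
  obtain ⟨τ₀, hlτ₀, hτ₀t⟩ := exists_between hl.2
  have hincr := le_of_hasDerivWithinAt_right_pos hτ₀t.le
    ((hslice x hx).mono (Icc_subset_Icc (hl.1.trans hlτ₀.le) ht.2))
    fun τ hτ => hderiv ⟨hlτ₀.trans_le hτ.1, hτ.2⟩
  exact (hbefore x hx τ₀ ⟨hl.1.trans hlτ₀.le, hτ₀t⟩).not_ge (hincr.trans hut)

lemma exists_mem_disjoint_Ioo {B : Set ℝ} {σ v b₀ : ℝ} (hB : IsClosed (Icc σ b₀ ∩ B))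
    (hσv : σ < v) (hv : Disjoint (Ioo σ v) B) (hσb₀ : σ < b₀) (hb₀ : b₀ ∈ B) :
    ∃ b ∈ B, σ < b ∧ b ≤ b₀ ∧ Disjoint (Ioo σ b) B := by
  obtain ⟨l, hσl, hl⟩ := exists_between (lt_min hσv hσb₀)
  rw [lt_min_iff] at hl
  have hcompact : IsCompact (Icc l b₀ ∩ (Icc σ b₀ ∩ B)) := isCompact_Icc.inter_right hB
  obtain ⟨b, ⟨⟨hlb, hbb₀⟩, -, hbB⟩, hbmin⟩ :=
    hcompact.exists_isLeast ⟨b₀, right_mem_Icc.2 hl.2.le, right_mem_Icc.2 hσb₀.le, hb₀⟩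
  refine ⟨b, hbB, hσl.trans_le hlb, hbb₀, disjoint_left.2 fun c hc hcB => ?_⟩
  rcases lt_or_ge c l with hcl | hlc
  · exact disjoint_left.1 hv ⟨hc.1, hcl.trans hl.1⟩ hcB
  · have hcb₀ := hc.2.le.trans hbb₀
    exact hc.2.not_ge (hbmin ⟨⟨hlc, hcb₀⟩, ⟨hc.1.le, hcb₀⟩, hcB⟩)

lemma neg_mul_sub_le_of_gaps {y : ℝ → ℝ} {B : Set ℝ} {t τ K : ℝ} (htτ : t ≤ τ) (htB : t ∈ B)
    (hB : IsClosed (Icc t τ ∩ B)) (hy : ContinuousOn y (Icc t τ))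
    (hderiv : ∀ a ∈ B, a ∈ Icc t τ → ∃ d > -K, HasDerivWithinAt y d (Ici a) a)
    (hgap : ∀ a ∈ B, ∀ b, t ≤ a → a ≤ b → b ≤ τ → Disjoint (Ioo a b) B →
      -(K * (b - a)) ≤ y b - y a) :
    -(K * (τ - t)) ≤ y τ - y t := by
  have hS : IsCompact (Icc t τ ∩ B ∩ (fun σ => y σ + K * (σ - t)) ⁻¹' Ici (y t)) := by
    refine isCompact_Icc.of_isClosed_subset (ContinuousOn.preimage_isClosed_of_isClosed ?_ hB
      isClosed_Ici) (inter_subset_left.trans inter_subset_left)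
    exact (hy.mono inter_subset_left).add (by fun_prop)
  obtain ⟨σ, ⟨⟨hσ, hσB⟩, hσy : y t ≤ y σ + K * (σ - t)⟩, hmax⟩ :=
    hS.exists_isGreatest ⟨t, ⟨left_mem_Icc.2 htτ, htB⟩,
      show y t ≤ y t + K * (t - t) by rw [sub_self, mul_zero, add_zero]⟩
  have notMem : ∀ b ∈ Ioc σ τ, -(K * (b - σ)) ≤ y b - y σ → b ∉ B := fun b hb hyb hbB =>
    hb.1.not_ge (hmax ⟨⟨⟨hσ.1.trans hb.1.le, hb.2⟩, hbB⟩,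
      show y t ≤ y b + K * (b - t) by linarith⟩)
  obtain ⟨d, hdK, hd⟩ := hderiv σ hσB hσ
  have hlocal : ∀ᶠ b in 𝓝[>] σ, -(K * (b - σ)) ≤ y b - y σ := by
    filter_upwards [(hasDerivWithinAt_iff_tendsto_slope' (lt_irrefl σ)).1
      hd.Ioi_of_Ici |>.eventually (lt_mem_nhds hdK), self_mem_nhdsWithin] with b hb hσb
    rw [slope_def_field, lt_div_iff₀ (sub_pos.2 hσb)] at hb
    linarith
  obtain ⟨v, hσv : σ < v, hv⟩ := mem_nhdsGT_iff_exists_Ioo_subset.1 hlocal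
  have hfree : Disjoint (Ioo σ τ) B := by
    refine disjoint_left.2 fun b₀ hb₀ hb₀B => ?_
    have hB' : IsClosed (Icc σ b₀ ∩ B) := by
      rw [← inter_eq_self_of_subset_left (Icc_subset_Icc hσ.1 hb₀.2.le), inter_assoc]
      exact isClosed_Icc.inter hB
    obtain ⟨b, hbB, hσb, hbb₀, hdisj⟩ := exists_mem_disjoint_Ioo hB'
      (lt_min hσv (hb₀.1.trans hb₀.2)) (disjoint_left.2 fun c hc => notMem c
        ⟨hc.1, (hc.2.trans_le (min_le_right _ _)).le⟩
        (hv ⟨hc.1, hc.2.trans_le (min_le_left _ _)⟩)) hb₀.1 hb₀B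
    have hbτ := hbb₀.trans hb₀.2.le
    exact notMem b ⟨hσb, hbτ⟩ (hgap σ hσB b hσ.1 hσb.le hbτ hdisj) hbB
  linarith [hgap σ hσB τ hσ.1 hσ.2 le_rfl hfree]

end RealAnalysis

section TimeRegularity

variable {E : Type*} [NormedAddCommGroup E] [InnerProductSpace ℝ E] [FiniteDimensional ℝ E]
  [MeasurableSpace E] [BorelSpace E]

/-- A bounded function `w` satisfying `|∂ₜw + levyOp k w| ≤ C |w|` pointwise on `Ω × (0, ∞)`, with
second differences controlled on compact subsets of `Ω` at each fixed time. No uniformity in time,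
and in particular no continuity of `∂ₜw` jointly in space and time, is assumed. -/
structure IsSolution (Ω : Set E) (k : E → ℝ) (C M : ℝ) (w : E → ℝ → ℝ) : Prop
    extends IsBddEvolution w M where
  kernel : IsLevyKernel k
  C_nonneg : 0 ≤ C
  continuousAt_slice : ∀ t > 0, ∀ x ∈ Ω, ContinuousAt (fun y => w y t) x
  exists_abs_secondDiff_le : ∀ t > 0, ∀ S ⊆ Ω, IsCompact S →
    ∃ N, 0 ≤ N ∧ ∀ x ∈ S, ∀ z, |secondDiff (fun y => w y t) x z| ≤ N * levyWeight z
  differentiableAt : ∀ x ∈ Ω, ∀ t > 0, DifferentiableAt ℝ (w x) t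
  abs_deriv_add_levyOp_le : ∀ x ∈ Ω, ∀ t > 0,
    |deriv (w x) t + levyOp k (fun y => w y t) x| ≤ C * |w x t|

/-- At time `t` all mollifications of `w` supported in `ball x₀ R` satisfy the mollified equation,
with a right time derivative. -/
def MollifiedEquationAt (k : E → ℝ) (C : ℝ) (w : E → ℝ → ℝ) (x₀ : E) (R t : ℝ) : Prop :=
  ∀ x ρ ε, IsRadialMollifier ρ ε → dist x x₀ + ε < R →
    ∃ d, HasDerivWithinAt (fun τ => mollify ρ (fun y => w y τ) x) d (Ici t) t ∧
      |d + levyOp k (mollify ρ fun y => w y t) x| ≤ C * mollify ρ (fun y => |w y t|) x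

variable {Ω : Set E} {k ρ : E → ℝ} {C M N R t ε : ℝ} {w : E → ℝ → ℝ} {x x₀ : E}

lemma MollifiedEquationAt.neg (h : MollifiedEquationAt k C w x₀ R t) :
    MollifiedEquationAt k C (fun x t => -w x t) x₀ R t := by
  intro x ρ ε hρ hx
  obtain ⟨d, hd, hle⟩ := h x ρ ε hρ hx
  refine ⟨-d, by simpa only [mollify_neg] using hd.fun_neg, ?_⟩
  simp only [abs_neg]
  rwa [funext (mollify_neg ρ fun y => w y t), levyOp_neg, ← neg_add, abs_neg]

namespace IsSolution

lemma M_nonneg (h : IsSolution Ω k C M w) : 0 ≤ M :=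
  (abs_nonneg _).trans ((h.slice 1 one_pos).abs_le 0)

lemma neg (h : IsSolution Ω k C M w) : IsSolution Ω k C M fun x t => -w x t where
  toIsBddEvolution := h.toIsBddEvolution.neg
  kernel := h.kernel
  C_nonneg := h.C_nonneg
  continuousAt_slice t ht x hx := (h.continuousAt_slice t ht x hx).neg
  exists_abs_secondDiff_le t ht S hS hS' := by
    simpa only [secondDiff_neg, abs_neg] using h.exists_abs_secondDiff_le t ht S hS hS'
  differentiableAt x hx t ht := (h.differentiableAt x hx t ht).neg
  abs_deriv_add_levyOp_le x hx t ht := by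
    have hderiv : deriv (fun τ => -w x τ) t = -deriv (w x) t := deriv.fun_neg
    rw [hderiv, levyOp_neg, ← neg_add, abs_neg, abs_neg]
    exact h.abs_deriv_add_levyOp_le x hx t ht

lemma abs_deriv_le (h : IsSolution Ω k C M w) (hx : x ∈ Ω) (ht : 0 < t)
    (hN : ∀ z, |secondDiff (fun y => w y t) x z| ≤ N * levyWeight z) :
    |deriv (w x) t| ≤ N * levyMass k + C * M := by
  have hw : C * |w x t| ≤ C * M := mul_le_mul_of_nonneg_left ((h.slice t ht).abs_le x) h.C_nonneg
  have heq := abs_le.1 ((h.abs_deriv_add_levyOp_le x hx t ht).trans hw)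
  have hL := abs_le.1 (h.kernel.abs_levyOp_le hN)
  rw [abs_le]
  constructor <;> linarith

end IsSolution

lemma abs_secondDiff_mollify_le (hρ : IsRadialMollifier ρ ε) {v : E → ℝ} (hv : IsBddMeasurable v M)
    {A : ℝ} {z : E} (hA : ∀ y, ‖y‖ < ε → |secondDiff v (x - y) z| ≤ A) :
    |secondDiff (mollify ρ v) x z| ≤ A := by
  rw [secondDiff_mollify hρ hv]
  exact abs_mollify_le hρ hA

omit [InnerProductSpace ℝ E] [FiniteDimensional ℝ E] [MeasurableSpace E] [BorelSpace E] in
lemma sub_mem_closedBall_of_dist_add_lt (hx : dist x x₀ + ε < R) {y : E} (hy : ‖y‖ < ε) :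
    x - y ∈ closedBall x₀ R := by
  have := dist_triangle (x - y) x x₀
  rw [dist_comm (x - y) x, dist_self_sub_right] at this
  rw [mem_closedBall]
  linarith

/-- The comparison function of the gap estimate: it is positive initially and near the boundary of
the ball where `f` lives, and its zeros bound the growth of the mollification of `w`. -/
def gapBarrier (ρ f : E → ℝ) (w : E → ℝ → ℝ) (a K M η : ℝ) (x : E) (t : ℝ) : ℝ :=
  mollify ρ (fun y => w y t) x - mollify ρ (fun y => w y a) x + K * (t - a) +
    3 * M * (1 - f x) + η

section Gap

variable {f : E → ℝ} {a b K η A : ℝ}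

lemma secondDiff_gapBarrier (ρ f : E → ℝ) (w : E → ℝ → ℝ) (a K M η : ℝ) (x : E) (t : ℝ) (z : E) :
    secondDiff (fun y => gapBarrier ρ f w a K M η y t) x z =
      secondDiff (mollify ρ fun y => w y t) x z - secondDiff (mollify ρ fun y => w y a) x z -
        3 * M * secondDiff f x z := by
  unfold secondDiff gapBarrier; ring

lemma gapBarrier_pos_of_eq_zero (hw : IsBddEvolution w M) (hρ : IsRadialMollifier ρ ε)
    (hM : 0 ≤ M) (hK : 0 ≤ K) (hη : 0 < η) (ha : 0 < a) (hat : a ≤ t) (hf : f x = 0) :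
    0 < gapBarrier ρ f w a K M η x t := by
  have h₁ := abs_le.1 (abs_mollify_le (v := fun y => w y t) (x := x) hρ
    fun y _ => (hw.slice t (ha.trans_le hat)).abs_le _)
  have h₂ := abs_le.1 (abs_mollify_le (v := fun y => w y a) (x := x) hρ
    fun y _ => (hw.slice a ha).abs_le _)
  have h₃ := mul_nonneg hK (sub_nonneg.2 hat)
  unfold gapBarrier
  rw [hf]
  linarith

lemma levyOp_mollify_le_of_gapBarrier_touch (hw : IsBddEvolution w M) (hk : IsLevyKernel k)
    (hρ : IsRadialMollifier ρ ε) (ht : 0 < t)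
    (hM : 0 ≤ M) (hA : ∀ z, |secondDiff f x z| ≤ A * levyWeight z)
    (hN : ∀ z, |secondDiff (mollify ρ fun y => w y a) x z| ≤ N * levyWeight z)
    (hzero : gapBarrier ρ f w a K M η x t = 0) (hnonneg : ∀ y, 0 ≤ gapBarrier ρ f w a K M η y t) :
    levyOp k (mollify ρ fun y => w y t) x ≤ (N + 3 * M * A) * levyMass k := by
  obtain ⟨A', -, hA'⟩ := hρ.exists_abs_secondDiff_mollify_le
  refine hk.levyOp_le (hk.integrable_secondDiff_mul (hw.continuous_mollify_slice hρ ht).measurable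
    (hA' _ _ (hw.slice t ht) x)) fun z => ?_
  have hmin : secondDiff (fun y => gapBarrier ρ f w a K M η y t) x z ≤ 0 := by
    have h₁ := hnonneg (x + z)
    have h₂ := hnonneg (x - z)
    unfold secondDiff
    linarith
  rw [secondDiff_gapBarrier] at hmin
  have hfz : 3 * M * secondDiff f x z ≤ 3 * M * (A * levyWeight z) := by
    gcongr; exact (abs_le.1 (hA z)).2
  linarith [(abs_le.1 (hN z)).2]

lemma gapBarrier_pos (hw : IsBddEvolution w M) (hk : IsLevyKernel k) (hC : 0 ≤ C)
    (hρ : IsRadialMollifier ρ ε) (ha : 0 < a) (hM : 0 ≤ M)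
    (hf : Continuous f) (hf_le : ∀ x, f x ≤ 1) (hA0 : 0 ≤ A)
    (hA : ∀ x z, |secondDiff f x z| ≤ A * levyWeight z)
    (hsupp : ∀ x, f x ≠ 0 → dist x x₀ + ε < R)
    (hgood : ∀ t ∈ Ioo a b, MollifiedEquationAt k C w x₀ R t) (hN0 : 0 ≤ N)
    (hN : ∀ x ∈ closedBall x₀ R, ∀ z, |secondDiff (fun y => w y a) x z| ≤ N * levyWeight z)
    (hK : (N + 3 * M * A) * levyMass k + C * M + 1 ≤ K) (hη : 0 < η) :
    ∀ x ∈ closedBall x₀ R, ∀ t ∈ Icc a b, 0 < gapBarrier ρ f w a K M η x t := by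
  have : 0 ≤ C * M := mul_nonneg hC hM
  have hK0 : 0 ≤ K := by
    have := hk.levyMass_nonneg
    exact le_trans (by positivity) hK
  refine pos_of_forall_first_touch (isCompact_closedBall x₀ R) ?_ (fun x _ => ?_)
    fun x _ t ht hzero hnonneg => ?_
  · have hcont := (hw.continuousOn_mollify hρ).mono
      (show closedBall x₀ R ×ˢ Icc a b ⊆ univ ×ˢ Ioi 0 from
        prod_mono (subset_univ _) fun t ht => ha.trans_le ht.1)
    have hcont_a := hw.continuous_mollify_slice hρ ha
    unfold gapBarrier
    fun_prop
  · have := mul_nonneg (mul_nonneg zero_le_three hM) (sub_nonneg.2 (hf_le x))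
    unfold gapBarrier
    linarith
  have ht0 : 0 < t := ha.trans ht.1
  have hfx : f x ≠ 0 := fun h0 =>
    (gapBarrier_pos_of_eq_zero hw hρ hM hK0 hη ha ht.1.le h0).ne' hzero
  have hL : levyOp k (mollify ρ fun y => w y t) x < K - C * M := by
    refine (levyOp_mollify_le_of_gapBarrier_touch (N := N) hw hk hρ ht0 hM (hA x)
      (fun z => ?_) hzero fun y => ?_).trans_lt (by linarith)
    · exact abs_secondDiff_mollify_le hρ (hw.slice a ha) fun y hy =>
        hN _ (sub_mem_closedBall_of_dist_add_lt (hsupp x hfx) hy) z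
    · rcases eq_or_ne (f y) 0 with h0 | hne
      · exact (gapBarrier_pos_of_eq_zero hw hρ hM hK0 hη ha ht.1.le h0).le
      · exact hnonneg y (by rw [mem_closedBall]; linarith [hsupp y hne, hρ.pos])
  have hL_near : ∀ᶠ τ in 𝓝[<] t, levyOp k (mollify ρ fun y => w y τ) x < K - C * M :=
    (((hw.continuousOn_levyOp_mollify hk hρ x).continuousAt (Ioi_mem_nhds ht0)).eventually
      (gt_mem_nhds hL)).filter_mono nhdsWithin_le_nhds
  filter_upwards [hL_near, Ioo_mem_nhdsLT ht.1] with τ hLτ hτ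
  obtain ⟨d, hd, hle⟩ := hgood τ ⟨hτ.1, hτ.2.trans_le ht.2⟩ x ρ ε hρ (hsupp x hfx)
  refine ⟨d + K, ?_, ?_⟩
  · have hw_le : mollify ρ (fun y => |w y τ|) x ≤ M :=
      (abs_le.1 (abs_mollify_le (v := fun y => |w y τ|) hρ fun y _ =>
        (abs_abs _).trans_le ((hw.slice τ (ha.trans hτ.1)).abs_le _))).2
    linarith [(abs_le.1 hle).1, mul_le_mul_of_nonneg_left hw_le hC]
  · have hlin : HasDerivWithinAt (fun σ => K * (σ - a)) K (Ici τ) τ := by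
      simpa only [mul_one, id_eq] using
        (((hasDerivAt_id τ).sub_const a).const_mul K).hasDerivWithinAt
    exact (((hd.sub_const _).add hlin).add_const _).add_const _

lemma IsSolution.exists_gap_bound (h : IsSolution Ω k C M w) (hΩ : closedBall x₀ R ⊆ Ω) {R' : ℝ}
    (hR' : 0 < R') (hR : R' < R) (hN0 : 0 ≤ N) :
    ∃ K, N * levyMass k + C * M < K ∧ ∀ a b, 0 < a → a ≤ b →
      (∀ t ∈ Ioo a b, MollifiedEquationAt k C w x₀ R t) →
      (∀ x ∈ closedBall x₀ R, ∀ z, |secondDiff (fun y => w y a) x z| ≤ N * levyWeight z) →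
      ∀ x ∈ closedBall x₀ R', -(K * (b - a)) ≤ w x b - w x a := by
  let f : ContDiffBump x₀ := ⟨R', (R' + R) / 2, hR', by linarith⟩
  obtain ⟨A, hA0, hA⟩ := exists_abs_secondDiff_le_of_contDiff f.contDiff f.hasCompactSupport
  have hM := h.M_nonneg
  have hmass := h.kernel.levyMass_nonneg
  refine ⟨(N + 3 * M * A) * levyMass k + C * M + 1, ?_, fun a b ha hab hgood hN x hx => ?_⟩
  · have : 0 ≤ 3 * M * A * levyMass k := by positivity
    linarith
  set K := (N + 3 * M * A) * levyMass k + C * M + 1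
  have hxΩ : x ∈ Ω := hΩ (closedBall_subset_closedBall hR.le hx)
  have hb : 0 < b := ha.trans_le hab
  have hmol : ∀ ρ ε, IsRadialMollifier ρ ε → ε < (R - R') / 2 →
      -(K * (b - a)) ≤ mollify ρ (fun y => w y b) x - mollify ρ (fun y => w y a) x := by
    intro ρ ε hρ hε
    refine le_of_forall_pos_le_add fun η hη => ?_
    have hpos := gapBarrier_pos h.toIsBddEvolution h.kernel h.C_nonneg hρ ha hM f.continuous
      (fun _ => f.le_one) hA0 hA (fun y hy => ?_) hgood hN0 hN le_rfl hη x
      (closedBall_subset_closedBall hR.le hx) b (right_mem_Icc.2 hab)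
    · unfold gapBarrier at hpos
      rw [f.one_of_mem_closedBall hx] at hpos
      linarith
    · have hy' : y ∈ ball x₀ ((R' + R) / 2) := f.support_eq ▸ hy
      linarith [mem_ball.1 hy']
  refine le_of_forall_pos_le_add fun δ hδ => ?_
  obtain ⟨ε₁, hε₁, h₁⟩ := exists_abs_mollify_sub_le (h.slice a ha)
    (h.continuousAt_slice a ha x hxΩ) (half_pos hδ)
  obtain ⟨ε₂, hε₂, h₂⟩ := exists_abs_mollify_sub_le (h.slice b hb)
    (h.continuousAt_slice b hb x hxΩ) (half_pos hδ)
  obtain ⟨ε, hε, hε_lt⟩ := exists_between (lt_min (lt_min hε₁ hε₂) (half_pos (sub_pos.2 hR)))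
  rw [lt_min_iff, lt_min_iff] at hε_lt
  obtain ⟨ρ, hρ⟩ := exists_isRadialMollifier (E := E) hε
  linarith [hmol ρ ε hρ hε_lt.2, abs_le.1 (h₁ ρ ε hρ hε_lt.1.1), abs_le.1 (h₂ ρ ε hρ hε_lt.1.2)]

end Gap

lemma integrable_of_dominated_convergence {α ι : Type*} [MeasurableSpace α] {μ : Measure α}
    {l : Filter ι} [l.NeBot] [l.IsCountablyGenerated] {F : ι → α → ℝ} {f bound : α → ℝ}
    (hF : ∀ᶠ i in l, AEStronglyMeasurable (F i) μ)
    (hbound : ∀ᶠ i in l, ∀ᵐ x ∂μ, ‖F i x‖ ≤ bound x) (hbound_int : Integrable bound μ)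
    (hlim : ∀ᵐ x ∂μ, Tendsto (fun i => F i x) l (𝓝 (f x))) : Integrable f μ := by
  obtain ⟨u, hu⟩ := exists_seq_tendsto l
  obtain ⟨m, hm⟩ := (hu.eventually (hF.and hbound)).exists_forall_of_atTop
  have hlim' : ∀ᵐ x ∂μ, Tendsto (fun j => F (u (j + m)) x) atTop (𝓝 (f x)) :=
    hlim.mono fun x hx => hx.comp ((tendsto_add_atTop_iff_nat m).2 hu)
  refine hbound_int.mono' (aestronglyMeasurable_of_tendsto_ae atTop
    (fun j => (hm (j + m) (Nat.le_add_left m j)).1) hlim') ?_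
  filter_upwards [hlim', ae_all_iff.2 fun j => (hm (j + m) (Nat.le_add_left m j)).2] with x hx hle
  exact le_of_tendsto' hx.norm hle

lemma IsBddEvolution.hasDerivWithinAt_mollify (hw : IsBddEvolution w M)
    (hρ : IsRadialMollifier ρ ε) (ht : 0 < t)
    (hdiff : ∀ y, ‖y‖ < ε → DifferentiableAt ℝ (w (x - y)) t) {K : ℝ}
    (hK : ∀ᶠ τ in 𝓝[>] t, ∀ y, ‖y‖ < ε → |w (x - y) τ - w (x - y) t| ≤ K * (τ - t)) :
    Integrable (fun y => ρ y * deriv (w (x - y)) t) ∧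
      HasDerivWithinAt (fun τ => mollify ρ (fun y => w y τ) x)
        (mollify ρ (fun y => deriv (w y) t) x) (Ici t) t := by
  have hgt : ∀ᶠ τ in 𝓝[>] t, t < τ := self_mem_nhdsWithin
  have hint : ∀ τ, 0 < τ → Integrable fun y => ρ y * w (x - y) τ := fun τ hτ =>
    integrable_mollify hρ (hw.slice τ hτ) x
  have slope_eq : ∀ τ y, ρ y * slope (w (x - y)) t τ =
      (ρ y * w (x - y) τ - ρ y * w (x - y) t) / (τ - t) := fun τ y => by
    rw [slope_def_field]; ring
  have hmeas : ∀ᶠ τ in 𝓝[>] t,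
      AEStronglyMeasurable (fun y => ρ y * slope (w (x - y)) t τ) volume := by
    filter_upwards [hgt] with τ hτ
    simp only [slope_eq]
    exact (((hint τ (ht.trans hτ)).sub (hint t ht)).div_const _).aestronglyMeasurable
  have hbound : ∀ᶠ τ in 𝓝[>] t, ∀ᵐ y, ‖ρ y * slope (w (x - y)) t τ‖ ≤ K * ρ y := by
    filter_upwards [hK, hgt] with τ hKτ hτ
    refine ae_of_all _ fun y => ?_
    rw [norm_mul, Real.norm_of_nonneg (hρ.nonneg y), mul_comm]
    rcases eq_or_ne (ρ y) 0 with hy | hy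
    · simp only [hy, mul_zero, le_refl]
    · refine mul_le_mul_of_nonneg_right ?_ (hρ.nonneg y)
      rw [slope_def_field, Real.norm_eq_abs, abs_div, abs_of_pos (sub_pos.2 hτ),
        div_le_iff₀ (sub_pos.2 hτ)]
      exact hKτ y (hρ.norm_lt hy)
  have hlim : ∀ᵐ y, Tendsto (fun τ => ρ y * slope (w (x - y)) t τ) (𝓝[>] t)
      (𝓝 (ρ y * deriv (w (x - y)) t)) := by
    refine ae_of_all _ fun y => ?_
    rcases eq_or_ne (ρ y) 0 with hy | hy
    · simp only [hy, zero_mul, tendsto_const_nhds_iff]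
    · exact ((hasDerivWithinAt_iff_tendsto_slope' (lt_irrefl t)).1
        (hdiff y (hρ.norm_lt hy)).hasDerivAt.hasDerivWithinAt).const_mul _
  have hK_int : Integrable fun y => K * ρ y := hρ.integrable.const_mul K
  constructor
  · exact integrable_of_dominated_convergence hmeas hbound hK_int hlim
  · rw [← hasDerivWithinAt_Ioi_iff_Ici, hasDerivWithinAt_iff_tendsto_slope' self_notMem_Ioi]
    refine (tendsto_integral_filter_of_dominated_convergence _ hmeas hbound hK_int hlim).congr' ?_
    filter_upwards [hgt] with τ hτ
    simp only [slope_eq]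
    rw [integral_div, integral_sub (hint τ (ht.trans hτ)) (hint t ht), slope_def_field]
    rfl

lemma IsSolution.mollifiedEquation (h : IsSolution Ω k C M w) (hΩ : closedBall x ε ⊆ Ω)
    (hρ : IsRadialMollifier ρ ε) (ht : 0 < t) {K : ℝ}
    (hK : ∀ᶠ τ in 𝓝[>] t, ∀ y ∈ closedBall x ε, |w y τ - w y t| ≤ K * (τ - t)) :
    ∃ d, HasDerivWithinAt (fun τ => mollify ρ (fun y => w y τ) x) d (Ici t) t ∧
      |d + levyOp k (mollify ρ fun y => w y t) x| ≤ C * mollify ρ (fun y => |w y t|) x := by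
  have hmem : ∀ y, ‖y‖ < ε → x - y ∈ closedBall x ε := fun y hy => by
    rw [mem_closedBall, dist_comm, dist_self_sub_right]; exact hy.le
  have hw := h.slice t ht
  obtain ⟨N, -, hN⟩ := h.exists_abs_secondDiff_le t ht _ hΩ (isCompact_closedBall x ε)
  have hN' : ∀ y, ‖y‖ < ε → ∀ z, |secondDiff (fun y => w y t) (x - y) z| ≤ N * levyWeight z :=
    fun y hy => hN _ (hmem y hy)
  obtain ⟨hint, hderiv⟩ := h.hasDerivWithinAt_mollify hρ ht
    (fun y hy => h.differentiableAt _ (hΩ (hmem y hy)) t ht)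
    (hK.mono fun τ hτ y hy => hτ _ (hmem y hy))
  have hint_L := h.kernel.integrable_mollify_levyOp hρ hw.measurable hN'
  have hint_abs := integrable_mollify hρ hw.abs x
  refine ⟨_, hderiv, ?_⟩
  rw [h.kernel.levyOp_mollify hρ hw hN', mollify_apply, mollify_apply, mollify_apply,
    ← integral_add hint hint_L, ← integral_const_mul, ← Real.norm_eq_abs]
  refine norm_integral_le_of_norm_le (hint_abs.const_mul C) (ae_of_all _ fun y => ?_)
  rw [← mul_add, norm_mul, Real.norm_of_nonneg (hρ.nonneg y), mul_left_comm]
  rcases eq_or_ne (ρ y) 0 with hy | hy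
  · simp only [hy, zero_mul, le_refl]
  · exact mul_le_mul_of_nonneg_left
      (h.abs_deriv_add_levyOp_le _ (hΩ (hmem y (hρ.norm_lt hy))) t ht) (hρ.nonneg y)

lemma exists_isOpen_inter_subset_of_isLocallyClosed {X : Type*} [TopologicalSpace X] [T2Space X]
    [LocallyCompactSpace X] {B : Set X} (hB : IsLocallyClosed B) (hne : B.Nonempty) {F : ℕ → Set X}
    (hF : ∀ N, IsClosed ((↑) ⁻¹' F N : Set B)) (hcover : B ⊆ ⋃ N, F N) :
    ∃ N, ∃ U, IsOpen U ∧ (U ∩ B).Nonempty ∧ U ∩ B ⊆ F N := by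
  have : LocallyCompactSpace B := hB.locallyCompactSpace
  have : Nonempty B := hne.to_subtype
  obtain ⟨N, t, ht⟩ := nonempty_interior_of_iUnion_of_closed hF
    (eq_univ_of_forall fun t => by
      obtain ⟨N, hN⟩ := mem_iUnion.1 (hcover t.2)
      exact mem_iUnion.2 ⟨N, hN⟩)
  obtain ⟨U, hU, hUeq⟩ := isOpen_induced_iff.1 (isOpen_interior (s := ((↑) ⁻¹' F N : Set B)))
  have hmem : ∀ t : B, (t : X) ∈ U ↔ t ∈ interior ((↑) ⁻¹' F N : Set B) := fun t => by
    rw [← hUeq]; rfl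
  exact ⟨N, U, hU, ⟨t, (hmem t).2 ht, t.2⟩,
    fun t ht => mem_preimage.1 (interior_subset ((hmem ⟨t, ht.2⟩).1 ht.1))⟩

lemma IsSolution.exists_one_sided_lipschitz (h : IsSolution Ω k C M w)
    (hΩ : closedBall x₀ R ⊆ Ω) {R' : ℝ} (hR' : 0 < R') (hR : R' < R) (hN0 : 0 ≤ N) {B : Set ℝ}
    {α β : ℝ} (hα : Ioo α β ⊆ Ioi 0) (hB : IsClosed B)
    (hgood : ∀ t ∈ Ioo α β \ B, MollifiedEquationAt k C w x₀ R t)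
    (hN : ∀ t ∈ Ioo α β ∩ B, ∀ x ∈ closedBall x₀ R, ∀ z,
      |secondDiff (fun y => w y t) x z| ≤ N * levyWeight z) :
    ∃ K, ∀ x ∈ closedBall x₀ R', ∀ t ∈ Ioo α β ∩ B, ∀ τ ∈ Ioo α β, t ≤ τ →
      -(K * (τ - t)) ≤ w x τ - w x t := by
  obtain ⟨K, hK, hgap⟩ := h.exists_gap_bound hΩ hR' hR hN0
  refine ⟨K, fun x hx t ht τ hτ htτ => ?_⟩
  have hxR : x ∈ closedBall x₀ R := closedBall_subset_closedBall hR.le hx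
  have hsub : Icc t τ ⊆ Ioo α β := Icc_subset_Ioo ht.1.1 hτ.2
  have hpos : ∀ a ∈ Icc t τ, 0 < a := fun a ha => hα (hsub ha)
  refine neg_mul_sub_le_of_gaps htτ ht.2 (isClosed_Icc.inter hB)
    ((h.continuousOn x).mono hpos) (fun a haB ha => ?_) fun a haB b hta hab hbτ hdisj => ?_
  · refine ⟨deriv (w x) a, ?_, (h.differentiableAt x (hΩ hxR) a
      (hpos a ha)).hasDerivAt.hasDerivWithinAt⟩
    linarith [(abs_le.1 (h.abs_deriv_le (hΩ hxR) (hpos a ha) (hN a ⟨hsub ha, haB⟩ x hxR))).1]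
  · have ha : a ∈ Icc t τ := ⟨hta, hab.trans hbτ⟩
    exact hgap a b (hpos a ha) hab
      (fun c hc => hgood c ⟨hsub ⟨hta.trans hc.1.le, hc.2.le.trans hbτ⟩, disjoint_left.1 hdisj hc⟩)
      (hN a ⟨hsub ha, haB⟩) x hx

lemma IsSolution.mollifiedEquationAt_of_bad_set (h : IsSolution Ω k C M w)
    (hΩ : closedBall x₀ R ⊆ Ω) (hN0 : 0 ≤ N) {B : Set ℝ} {α β : ℝ}
    (hα : Ioo α β ⊆ Ioi 0) (hB : IsClosed B)
    (hgood : ∀ t ∈ Ioo α β \ B, MollifiedEquationAt k C w x₀ R t)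
    (hN : ∀ t ∈ Ioo α β ∩ B, ∀ x ∈ closedBall x₀ R, ∀ z,
      |secondDiff (fun y => w y t) x z| ≤ N * levyWeight z) :
    ∀ t ∈ Ioo α β, MollifiedEquationAt k C w x₀ R t := by
  intro t ht
  by_cases htB : t ∈ B
  swap
  · exact hgood t ⟨ht, htB⟩
  intro x ρ ε hρ hx
  have hsub : closedBall x ε ⊆ closedBall x₀ (dist x x₀ + ε) :=
    closedBall_subset_closedBall' (add_comm _ _).le
  have hpos : 0 < dist x x₀ + ε := add_pos_of_nonneg_of_pos dist_nonneg hρ.pos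
  obtain ⟨K₁, hK₁⟩ := h.exists_one_sided_lipschitz hΩ hpos hx hN0 hα hB hgood hN
  obtain ⟨K₂, hK₂⟩ := h.neg.exists_one_sided_lipschitz hΩ hpos hx hN0 hα hB
    (fun t ht => (hgood t ht).neg) (by simpa only [secondDiff_neg, abs_neg] using hN)
  refine h.mollifiedEquation (K := max K₁ K₂)
    ((hsub.trans (closedBall_subset_closedBall hx.le)).trans hΩ) hρ (hα ht) ?_
  filter_upwards [Ioo_mem_nhdsGT ht.2] with τ hτ y hy
  have hτ' : τ ∈ Ioo α β := ⟨ht.1.trans hτ.1, hτ.2⟩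
  have h₁ := hK₁ y (hsub hy) t ⟨ht, htB⟩ τ hτ' hτ.1.le
  have h₂ := hK₂ y (hsub hy) t ⟨ht, htB⟩ τ hτ' hτ.1.le
  have hτt := sub_nonneg.2 hτ.1.le
  have hm₁ := mul_le_mul_of_nonneg_right (le_max_left K₁ K₂) hτt
  have hm₂ := mul_le_mul_of_nonneg_right (le_max_right K₁ K₂) hτt
  rw [abs_le]; constructor <;> linarith

/- By Baire's theorem the closed set of bad times would contain a portion on which the second
differences of `w` are uniformly bounded; there `w` is Lipschitz in time, so the portion is good. -/
theorem IsSolution.mollifiedEquationAt (h : IsSolution Ω k C M w) (hΩ : closedBall x₀ R ⊆ Ω) :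
    ∀ t > 0, MollifiedEquationAt k C w x₀ R t := by
  set good : Set ℝ := {t | MollifiedEquationAt k C w x₀ R t}
  suffices hbad : Ioi 0 ∩ (interior good)ᶜ = ∅ from fun t ht => by
    by_contra hc
    exact (hbad.subset ⟨ht, fun hmem => hc (interior_subset hmem)⟩).elim
  by_contra hne
  let F : ℕ → Set ℝ := fun N => {t | ∀ x ∈ closedBall x₀ R, ∀ z,
    |secondDiff (fun y => w y t) x z| ≤ N * levyWeight z}
  have hF : ∀ N, IsClosed ((↑) ⁻¹' F N : Set ↥(Ioi 0 ∩ (interior good)ᶜ)) := by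
    intro N
    have hF_eq : (Subtype.val ⁻¹' (F N)) = ⋂ x ∈ closedBall x₀ R, ⋂ z,
        {t : ↥(Ioi 0 ∩ (interior good)ᶜ) |
          |secondDiff (fun y => w y t) x z| ≤ N * levyWeight z} := by
      ext; simp [F]
    rw [hF_eq]
    refine isClosed_biInter fun x _ => isClosed_iInter fun z => isClosed_le ?_ continuous_const
    have hcont : ∀ y, Continuous fun t : ↥(Ioi 0 ∩ (interior good)ᶜ) => w y t := fun y =>
      (h.continuousOn y).comp_continuous continuous_subtype_val fun t => t.2.1
    exact (((continuous_const.mul (hcont x)).sub (hcont (x + z))).sub (hcont (x - z))).abs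
  have hcover : Ioi 0 ∩ (interior good)ᶜ ⊆ ⋃ N, F N := fun t ht => by
    obtain ⟨N, -, hN⟩ := h.exists_abs_secondDiff_le t ht.1 _ hΩ (isCompact_closedBall x₀ R)
    obtain ⟨m, hm⟩ := exists_nat_ge N
    exact mem_iUnion.2 ⟨m, fun x hx z => (hN x hx z).trans
      (mul_le_mul_of_nonneg_right hm (levyWeight_nonneg z))⟩
  obtain ⟨N, U, hU, ⟨t₀, ht₀U, ht₀, ht₀_bad⟩, hUF⟩ := exists_isOpen_inter_subset_of_isLocallyClosed
    (isOpen_Ioi.isLocallyClosed.inter isOpen_interior.isClosed_compl.isLocallyClosed)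
    (nonempty_iff_ne_empty.2 hne) hF hcover
  obtain ⟨r, hr, hrU⟩ := Metric.isOpen_iff.1 (hU.inter isOpen_Ioi) t₀ ⟨ht₀U, ht₀⟩
  refine ht₀_bad (interior_maximal (fun t ht => ?_) isOpen_ball (mem_ball_self hr))
  rw [Real.ball_eq_Ioo] at hrU ht
  refine h.mollifiedEquationAt_of_bad_set hΩ N.cast_nonneg (fun t ht => (hrU ht).2)
    isOpen_interior.isClosed_compl (fun t ht => interior_subset (notMem_compl_iff.1 ht.2))
    (fun t ht => hUF ⟨(hrU ht.1).1, (hrU ht.1).2, ht.2⟩) t ht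

end TimeRegularity

section Reflection

variable {n : ℕ} [NeZero n] {lam : ℝ}

/-- The open half-space `Σ̃_λ = {x : x₁ > λ}`. -/
def halfSpace (n : ℕ) [NeZero n] (lam : ℝ) : Set (Eucl n) := {x | lam < x 0}

lemma isOpen_halfSpace : IsOpen (halfSpace n lam) := isOpen_lt continuous_const (by fun_prop)

lemma abs_coord_sub_le_dist (x y : Eucl n) : |x 0 - y 0| ≤ dist x y := by
  rw [dist_eq_norm]
  exact PiLp.norm_apply_le (x - y) 0

lemma closedBall_subset_halfSpace {x : Eucl n} {r : ℝ} (hx : lam + r < x 0) :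
    closedBall x r ⊆ halfSpace n lam := fun y hy => by
  have hcoord := (abs_le.1 ((abs_coord_sub_le_dist y x).trans hy)).1
  change lam < y 0
  linarith

lemma sub_mem_halfSpace {x y : Eucl n} {r : ℝ} (hx : lam + r < x 0) (hy : ‖y‖ < r) :
    x - y ∈ halfSpace n lam :=
  closedBall_subset_halfSpace hx (by simpa [dist_eq_norm] using hy.le)

lemma reflect_apply_zero (x : Eucl n) : reflect lam x 0 = 2 * lam - x 0 := by
  simp only [reflect, PiLp.add_apply, PiLp.smul_apply, PiLp.single_apply, if_true, smul_eq_mul]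
  ring

lemma reflect_mem_halfSpace {x : Eucl n} (hx : x 0 < lam) : reflect lam x ∈ halfSpace n lam := by
  change lam < reflect lam x 0
  rw [reflect_apply_zero]
  linarith

lemma reflect_apply_of_ne_zero (x : Eucl n) {i : Fin n} (hi : i ≠ 0) : reflect lam x i = x i := by
  simp [reflect, hi]

lemma reflect_reflect (x : Eucl n) : reflect lam (reflect lam x) = x := by
  ext i
  rcases eq_or_ne i 0 with rfl | hi
  · rw [reflect_apply_zero, reflect_apply_zero, sub_sub_cancel]
  · rw [reflect_apply_of_ne_zero _ hi, reflect_apply_of_ne_zero _ hi]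

lemma reflect_of_apply_zero_eq {x : Eucl n} (hx : x 0 = lam) : reflect lam x = x := by
  simp [reflect, hx]

lemma reflect_eq_reflection_add (x : Eucl n) : reflect lam x =
    (ℝ ∙ EuclideanSpace.single (0 : Fin n) (1 : ℝ))ᗮ.reflection x +
      (2 * lam) • EuclideanSpace.single (0 : Fin n) (1 : ℝ) := by
  rw [Submodule.reflection_orthogonal_apply, Submodule.reflection_singleton_apply]
  ext i
  rcases eq_or_ne i 0 with rfl | hi
  · simp [reflect, EuclideanSpace.inner_single_left]; ring
  · simp [reflect, hi]

lemma reflect_add (x z : Eucl n) : reflect lam (x + z) = reflect lam x + reflect 0 z := by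
  simp only [reflect_eq_reflection_add, map_add, mul_zero, zero_smul, add_zero]
  abel

lemma reflect_zero_neg (z : Eucl n) : reflect 0 (-z) = -reflect 0 z := by
  simp only [reflect_eq_reflection_add, map_neg, mul_zero, zero_smul, add_zero]

lemma norm_reflect_zero (z : Eucl n) : ‖reflect 0 z‖ = ‖z‖ := by
  simp only [reflect_eq_reflection_add, mul_zero, zero_smul, add_zero, LinearIsometryEquiv.norm_map]

lemma norm_reflect_sub_reflect (x y : Eucl n) : ‖reflect lam x - reflect lam y‖ = ‖x - y‖ := by
  rw [reflect_eq_reflection_add, reflect_eq_reflection_add, add_sub_add_right_eq_sub, ← map_sub,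
    LinearIsometryEquiv.norm_map]

lemma norm_reflect_sub (x y : Eucl n) : ‖reflect lam x - y‖ = ‖x - reflect lam y‖ := by
  rw [← norm_reflect_sub_reflect (lam := lam) x, reflect_reflect]

lemma sq_norm_sub_reflect (x y : Eucl n) :
    ‖x - reflect lam y‖ ^ 2 = ‖x - y‖ ^ 2 + 4 * (x 0 - lam) * (y 0 - lam) := by
  have hinner : inner ℝ (x - y) (EuclideanSpace.single (0 : Fin n) (1 : ℝ)) = x 0 - y 0 := by
    simp [EuclideanSpace.inner_single_right]
  rw [reflect, ← sub_sub, norm_sub_sq_real, norm_smul, inner_smul_right, hinner, mul_pow,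
    Real.norm_eq_abs, sq_abs, PiLp.norm_single, norm_one]
  ring

lemma norm_sub_le_norm_sub_reflect {x y : Eucl n} (hx : lam ≤ x 0) (hy : lam ≤ y 0) :
    ‖x - y‖ ≤ ‖x - reflect lam y‖ := by
  rw [← sq_le_sq₀ (norm_nonneg _) (norm_nonneg _), sq_norm_sub_reflect]
  linarith [mul_nonneg (sub_nonneg.2 hx) (sub_nonneg.2 hy)]

lemma measurePreserving_reflect : MeasurePreserving (reflect lam : Eucl n → Eucl n) := by
  have hcomp := (measurePreserving_add_right volume
    ((2 * lam) • EuclideanSpace.single (0 : Fin n) (1 : ℝ))).comp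
      ((ℝ ∙ EuclideanSpace.single (0 : Fin n) (1 : ℝ))ᗮ.reflection.measurePreserving)
  exact (funext reflect_eq_reflection_add : (reflect lam : Eucl n → Eucl n) = _) ▸ hcomp

lemma measurableEmbedding_reflect : MeasurableEmbedding (reflect lam : Eucl n → Eucl n) :=
  (MeasurableEquiv.mk ⟨reflect lam, reflect lam, reflect_reflect, reflect_reflect⟩
    measurePreserving_reflect.measurable measurePreserving_reflect.measurable).measurableEmbedding

lemma integral_comp_reflect (lam : ℝ) (f : Eucl n → ℝ) :
    ∫ y, f (reflect lam y) = ∫ y, f y :=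
  measurePreserving_reflect.integral_comp measurableEmbedding_reflect f

lemma integral_mono_of_add_reflect_le {f g : Eucl n → ℝ} (hf : Integrable f) (hg : Integrable g)
    (hle : ∀ y : Eucl n, lam ≤ y 0 → g y + g (reflect lam y) ≤ f y + f (reflect lam y)) :
    ∫ y, g y ≤ ∫ y, f y := by
  have hall : ∀ y : Eucl n, g y + g (reflect lam y) ≤ f y + f (reflect lam y) := fun y => by
    rcases le_total lam (y 0) with hy | hy
    · exact hle y hy
    · have := hle (reflect lam y) (by rw [reflect_apply_zero]; linarith)
      rw [reflect_reflect] at this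
      linarith
  have hsplit : ∀ {h : Eucl n → ℝ}, Integrable h →
      Integrable (fun y => h y + h (reflect lam y)) ∧
        ∫ y, (h y + h (reflect lam y)) = 2 * ∫ y, h y := fun {h} hh => by
    have hr : Integrable fun y => h (reflect lam y) :=
      measurePreserving_reflect.integrable_comp_of_integrable hh
    exact ⟨hh.add hr, by rw [integral_add hh hr, integral_comp_reflect, two_mul]⟩
  have := integral_mono (hsplit hg).1 (hsplit hf).1 hall
  rw [(hsplit hg).2, (hsplit hf).2] at this
  linarith

/-- `v` is antisymmetric with respect to the hyperplane `{x₁ = λ}`. -/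
def IsReflAntisymm (lam : ℝ) (v : Eucl n → ℝ) : Prop := ∀ x, v (reflect lam x) = -v x

lemma IsReflAntisymm.eq_zero {v : Eucl n → ℝ} (hv : IsReflAntisymm lam v) {x : Eucl n}
    (hx : x 0 = lam) : v x = 0 := by
  have := hv x
  rw [reflect_of_apply_zero_eq hx] at this
  linarith

/-- The negative part of `v` on the half-space `Σ̃_λ`, extended by zero. -/
def halfSpaceNegPart (lam : ℝ) (v : Eucl n → ℝ) : Eucl n → ℝ :=
  (halfSpace n lam).indicator fun y => (v y)⁻

variable {v ρ : Eucl n → ℝ} {ε M : ℝ} {x : Eucl n}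

lemma halfSpaceNegPart_of_mem (v : Eucl n → ℝ) (hx : lam < x 0) :
    halfSpaceNegPart lam v x = (v x)⁻ :=
  indicator_of_mem (s := halfSpace n lam) hx _

lemma halfSpaceNegPart_of_le (v : Eucl n → ℝ) (hx : x 0 ≤ lam) : halfSpaceNegPart lam v x = 0 :=
  indicator_of_notMem (s := halfSpace n lam) (not_lt.2 hx) _

lemma halfSpaceNegPart_nonneg (lam : ℝ) (v : Eucl n → ℝ) (x : Eucl n) :
    0 ≤ halfSpaceNegPart lam v x :=
  indicator_nonneg (fun _ _ => negPart_nonneg _) x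

lemma isBddMeasurable_halfSpaceNegPart (hv : IsBddMeasurable v M) (lam : ℝ) :
    IsBddMeasurable (halfSpaceNegPart lam v) M where
  measurable := (hv.measurable.neg.max measurable_const).indicator isOpen_halfSpace.measurableSet
  abs_le x := by
    rw [abs_of_nonneg (halfSpaceNegPart_nonneg lam v x)]
    rcases lt_or_ge lam (x 0) with hx | hx
    · rw [halfSpaceNegPart_of_mem v hx]
      linarith [posPart_add_negPart (v x), posPart_nonneg (v x), hv.abs_le x]
    · rw [halfSpaceNegPart_of_le v hx]
      exact (abs_nonneg _).trans (hv.abs_le x)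

lemma isReflAntisymm_mollify (hρ : IsRadialMollifier ρ ε) (hv : IsReflAntisymm lam v) :
    IsReflAntisymm lam (mollify ρ v) := fun x => by
  rw [mollify_apply_swap, mollify_apply_swap, ← integral_comp_reflect lam, ← integral_neg]
  congr 1 with y
  have hdist := norm_reflect_sub_reflect (lam := lam) x y
  rw [hv, mul_neg, le_antisymm (hρ.antitone _ _ hdist.ge) (hρ.antitone _ _ hdist.le)]

lemma neg_mollify_halfSpaceNegPart_le (hρ : IsRadialMollifier ρ ε)
    (hv : IsBddMeasurable v M) (hanti : IsReflAntisymm lam v) (hx : lam ≤ x 0) :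
    -mollify ρ (halfSpaceNegPart lam v) x ≤ mollify ρ v x := by
  rw [mollify_apply_swap, mollify_apply_swap, ← integral_neg]
  refine integral_mono_of_add_reflect_le (lam := lam) (integrable_mollify_swap hρ hv x)
    (integrable_mollify_swap hρ (isBddMeasurable_halfSpaceNegPart hv lam) x).neg fun y hy => ?_
  have hmono := hρ.antitone _ _ (norm_sub_le_norm_sub_reflect hx hy)
  have hnonneg := hρ.nonneg (x - reflect lam y)
  rw [halfSpaceNegPart_of_le v (x := reflect lam y)
    (by rw [reflect_apply_zero]; linarith), hanti]
  rcases hy.eq_or_lt with hy | hy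
  · rw [hanti.eq_zero hy.symm, halfSpaceNegPart_of_le v hy.ge]
    simp
  · rw [halfSpaceNegPart_of_mem v hy]
    have hsum : 0 ≤ (v y)⁻ + v y := by linarith [neg_le_negPart (v y)]
    have hneg := mul_nonneg (sub_nonneg.2 hmono) hsum
    linarith [mul_nonneg hnonneg (negPart_nonneg (v y))]

lemma mollify_abs_le_add (hρ : IsRadialMollifier ρ ε) (hv : IsBddMeasurable v M)
    (hx : lam + ε < x 0) : mollify ρ (fun y => |v y|) x ≤
      mollify ρ v x + 2 * mollify ρ (halfSpaceNegPart lam v) x := by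
  have hint := integrable_mollify hρ hv x
  have hint_neg := (integrable_mollify hρ (isBddMeasurable_halfSpaceNegPart hv lam) x).const_mul 2
  simp only [mollify_apply]
  rw [← integral_const_mul, ← integral_add hint hint_neg]
  refine integral_mono (integrable_mollify hρ hv.abs x) (hint.add hint_neg) fun y => ?_
  by_cases hy : ρ y = 0
  · simp [hy]
  · have hmem : lam < (x - y) 0 := sub_mem_halfSpace hx (hρ.norm_lt hy)
    have habs : |v (x - y)| = v (x - y) + 2 * (v (x - y))⁻ := by
      rw [← posPart_add_negPart]
      linarith [posPart_sub_negPart (v (x - y))]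
    change ρ y * |v (x - y)| ≤ ρ y * v (x - y) + 2 * (ρ y * halfSpaceNegPart lam v (x - y))
    rw [halfSpaceNegPart_of_mem v hmem, habs]
    exact (by ring : _ = _).le

end Reflection

section LocalMinimum

variable {E : Type*} [NormedAddCommGroup E] [InnerProductSpace ℝ E] [FiniteDimensional ℝ E]
  [MeasurableSpace E] [BorelSpace E] {k v : E → ℝ} {x : E} {A M : ℝ}

omit [InnerProductSpace ℝ E] [FiniteDimensional ℝ E] [MeasurableSpace E] [BorelSpace E] in
lemma min_one_sq_le_levyWeight {z : E} {r : ℝ} (hr : 0 ≤ r) (hz : r ≤ ‖z‖) :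
    min 1 (r ^ 2) ≤ levyWeight z :=
  min_le_min le_rfl (pow_le_pow_left₀ hr hz 2)

/-- The kernel `y ↦ k (y - x₀)` truncated to the complement of the ball of radius `r` around
`x₀`; it measures the influence of far away values on the nonlocal operator near `x₀`. -/
def kernelTail (k : E → ℝ) (x₀ : E) (r : ℝ) : E → ℝ := (ball x₀ r)ᶜ.indicator fun y => k (y - x₀)

omit [InnerProductSpace ℝ E] [FiniteDimensional ℝ E] [MeasurableSpace E] [BorelSpace E] in
lemma kernelTail_of_notMem {y x₀ : E} {r : ℝ} (hy : y ∉ ball x₀ r) :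
    kernelTail k x₀ r y = k (y - x₀) :=
  indicator_of_mem (mem_compl hy) _

lemma IsLevyKernel.kernelTail_nonneg (hk : IsLevyKernel k) (x₀ : E) (r : ℝ) (y : E) :
    0 ≤ kernelTail k x₀ r y :=
  indicator_nonneg (fun _ _ => hk.nonneg _) y

lemma IsLevyKernel.integrable_kernelTail (hk : IsLevyKernel k) (x₀ : E) {r : ℝ} (hr : 0 < r) :
    Integrable (kernelTail k x₀ r) := by
  refine ((hk.integrable.comp_sub_right x₀).const_mul (min 1 (r ^ 2))⁻¹).mono'
    ((hk.measurable.comp (by fun_prop)).indicator measurableSet_ball.compl).aestronglyMeasurable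
    (ae_of_all _ fun y => ?_)
  have hr' : 0 < min 1 (r ^ 2) := by positivity
  rw [Real.norm_eq_abs, abs_of_nonneg (hk.kernelTail_nonneg _ _ _)]
  by_cases hy : y ∈ ball x₀ r
  · rw [kernelTail, indicator_of_notMem (notMem_compl_iff.2 hy)]
    exact mul_nonneg (inv_nonneg.2 hr'.le) (mul_nonneg (levyWeight_nonneg _) (hk.nonneg _))
  · have hy' : r ≤ ‖y - x₀‖ := by simpa [dist_eq_norm] using hy
    rw [kernelTail_of_notMem hy, ← mul_assoc]
    exact le_mul_of_one_le_left (hk.nonneg _)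
      ((one_le_inv_mul₀ hr').2 (min_one_sq_le_levyWeight hr.le hy'))

/- Both increments `v (x ± z) - v x` are nonnegative for small `z`, so each of them is dominated by
their sum `-secondDiff v x z`. -/
omit [InnerProductSpace ℝ E] [FiniteDimensional ℝ E] [BorelSpace E] in
lemma IsBddMeasurable.exists_abs_sub_le_of_isLocalMin (hv : IsBddMeasurable v M)
    (hA : ∀ z, |secondDiff v x z| ≤ A * levyWeight z) (hmin : IsLocalMin v x) :
    ∃ B, ∀ z, |v (x + z) - v x| ≤ B * levyWeight z := by
  obtain ⟨r, hr, hball⟩ := Metric.eventually_nhds_iff_ball.1 hmin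
  have hr' : 0 < min 1 (r ^ 2) := by positivity
  refine ⟨max A (2 * M / min 1 (r ^ 2)), fun z => ?_⟩
  rcases lt_or_ge ‖z‖ r with hz | hz
  · have hplus := hball (x + z) (by simpa [dist_eq_norm] using hz)
    have hminus := hball (x - z) (by simpa [dist_eq_norm] using hz)
    have hdiff := neg_le_of_abs_le (hA z)
    unfold secondDiff at hdiff
    have hmax := mul_le_mul_of_nonneg_right (le_max_left A (2 * M / min 1 (r ^ 2)))
      (levyWeight_nonneg z)
    rw [abs_of_nonneg (by linarith)]
    linarith
  · have hM : |v (x + z) - v x| ≤ 2 * M :=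
      (abs_sub _ _).trans (by linarith [hv.abs_le (x + z), hv.abs_le x])
    calc |v (x + z) - v x| ≤ 2 * M / min 1 (r ^ 2) * min 1 (r ^ 2) := by
          rwa [div_mul_cancel₀ _ hr'.ne']
      _ ≤ 2 * M / min 1 (r ^ 2) * levyWeight z := by
          have hM' : 0 ≤ 2 * M := (abs_nonneg _).trans hM
          exact mul_le_mul_of_nonneg_left (min_one_sq_le_levyWeight hr.le hz) (by positivity)
      _ ≤ _ := mul_le_mul_of_nonneg_right (le_max_right _ _) (levyWeight_nonneg z)

lemma IsLevyKernel.integrable_sub_mul_of_isLocalMin (hk : IsLevyKernel k)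
    (hv : IsBddMeasurable v M) (hA : ∀ z, |secondDiff v x z| ≤ A * levyWeight z)
    (hmin : IsLocalMin v x) : Integrable fun z => (v (x + z) - v x) * k z := by
  obtain ⟨B, hB⟩ := hv.exists_abs_sub_le_of_isLocalMin hA hmin
  exact (hk.integrable.const_mul B).mono' (((hv.measurable.comp (by fun_prop)).sub_const _).mul
    hk.measurable).aestronglyMeasurable (ae_of_all _ fun z => hk.norm_mul_le (hB z))

lemma integral_sub_mul_eq_neg_half_levyOp (heven : ∀ z, k (-z) = k z)
    (hint : Integrable fun z => (v (x + z) - v x) * k z) :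
    (Integrable fun y => (v y - v x) * k (x - y)) ∧
      ∫ y, (v y - v x) * k (x - y) = -(1 / 2) * levyOp k v x := by
  have hshift : (fun y => (v y - v x) * k (x - y)) =
      fun y => (v (x + (y - x)) - v x) * k (y - x) := by
    ext y
    rw [add_sub_cancel, ← heven, neg_sub]
  have hint_neg : Integrable fun z => (v (x - z) - v x) * k z := by
    simpa only [heven, ← sub_eq_add_neg] using hint.comp_neg
  have hneg : ∫ z, (v (x - z) - v x) * k z = ∫ z, (v (x + z) - v x) * k z := by
    rw [← integral_neg_eq_self]
    simp only [heven, sub_neg_eq_add]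
  refine ⟨hshift ▸ hint.comp_sub_right x, ?_⟩
  have hsum : levyOp k v x =
      -((∫ z, (v (x + z) - v x) * k z) + ∫ z, (v (x - z) - v x) * k z) := by
    rw [← integral_add hint hint_neg, ← integral_neg]
    unfold levyOp secondDiff
    congr 1 with z
    ring
  rw [hshift, integral_sub_right_eq_self (fun z => (v (x + z) - v x) * k z) x, hsum, hneg]
  ring

end LocalMinimum

section FracKernel

variable {E : Type*} [NormedAddCommGroup E] {c p : ℝ}

lemma fracKernel_nonneg (hc : 0 ≤ c) (z : E) : 0 ≤ fracKernel c p z := by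
  unfold fracKernel; positivity

lemma fracKernel_neg (c p : ℝ) (z : E) : fracKernel c p (-z) = fracKernel c p z := by
  rw [fracKernel, norm_neg, fracKernel]

lemma fracKernel_le_of_norm_le (hc : 0 ≤ c) (hp : 0 ≤ p) {y z : E} (hy : y ≠ 0) (h : ‖y‖ ≤ ‖z‖) :
    fracKernel c p z ≤ fracKernel c p y := by
  have := norm_pos_iff.2 hy
  unfold fracKernel
  gcongr

lemma fracKernel_le_two_rpow_mul (hc : 0 ≤ c) (hp : 0 ≤ p) {y z : E} (hz : z ≠ 0)
    (h : ‖z‖ ≤ 2 * ‖y‖) : fracKernel c p y ≤ 2 ^ p * fracKernel c p z := by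
  have hz' := norm_pos_iff.2 hz
  have hy' : 0 < ‖y‖ := by linarith
  unfold fracKernel
  rw [mul_div_assoc', div_le_div_iff₀ (by positivity) (by positivity), mul_right_comm, mul_comm c,
    ← Real.mul_rpow two_pos.le hy'.le]
  gcongr

end FracKernel

section AntisymmetricKernel

variable {n : ℕ} [NeZero n] {lam c p : ℝ}

lemma fracKernel_sub_reflect_le (hc : 0 ≤ c) (hp : 0 ≤ p) {x y : Eucl n} (hx : lam ≤ x 0)
    (hy : lam ≤ y 0) (hxy : x ≠ y) :
    fracKernel c p (x - reflect lam y) ≤ fracKernel c p (x - y) :=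
  fracKernel_le_of_norm_le hc hp (sub_ne_zero.2 hxy) (norm_sub_le_norm_sub_reflect hx hy)

lemma two_mul_div_sq_le_norm_div_sub_one {x y : Eucl n} {D d : ℝ} (hx : lam ≤ x 0) (hd : 0 ≤ d)
    (hy : lam + d ≤ y 0) (hxy : x ≠ y) (hD : ‖x - reflect lam y‖ ≤ D) :
    2 * d * (x 0 - lam) / D ^ 2 ≤ ‖x - reflect lam y‖ / ‖x - y‖ - 1 := by
  have hle := norm_sub_le_norm_sub_reflect hx (by linarith : lam ≤ y 0)
  have hsq := sq_norm_sub_reflect (lam := lam) x y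
  have ha : 0 < ‖x - y‖ := norm_pos_iff.2 (sub_ne_zero.2 hxy)
  have := sub_nonneg.2 hx
  set a := ‖x - y‖
  set b := ‖x - reflect lam y‖
  have hD' : 0 < D := by linarith
  rw [div_sub_one ha.ne', div_le_div_iff₀ (by positivity) ha]
  have hgap : 4 * (d * (x 0 - lam)) ≤ (b - a) * (2 * D) := calc
    4 * (d * (x 0 - lam)) ≤ 4 * ((y 0 - lam) * (x 0 - lam)) := by gcongr; linarith
    _ = (b - a) * (b + a) := by linear_combination hsq.symm
    _ ≤ (b - a) * (2 * D) := mul_le_mul_of_nonneg_left (by linarith) (by linarith)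
  calc 2 * d * (x 0 - lam) * a = 4 * (d * (x 0 - lam)) * (a / 2) := by ring
    _ ≤ (b - a) * (2 * D) * (a / 2) := by gcongr
    _ = (b - a) * (a * D) := by ring
    _ ≤ (b - a) * (D * D) := by
        have : 0 ≤ b - a := sub_nonneg.2 hle
        gcongr
        linarith
    _ = (b - a) * D ^ 2 := by ring

lemma mul_le_fracKernel_sub_fracKernel_reflect (hc : 0 ≤ c) (hp : 1 ≤ p) {x y : Eucl n} {D d : ℝ}
    (hx : lam ≤ x 0) (hd : 0 ≤ d) (hy : lam + d ≤ y 0) (hxy : x ≠ y)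
    (hD : ‖x - reflect lam y‖ ≤ D) :
    c * (2 * d) / (D ^ 2 * D ^ p) * (x 0 - lam) ≤
      fracKernel c p (x - y) - fracKernel c p (x - reflect lam y) := by
  have hratio := two_mul_div_sq_le_norm_div_sub_one hx hd hy hxy hD
  have hle := norm_sub_le_norm_sub_reflect hx (by linarith : lam ≤ y 0)
  have ha : 0 < ‖x - y‖ := norm_pos_iff.2 (sub_ne_zero.2 hxy)
  unfold fracKernel
  set a := ‖x - y‖
  set b := ‖x - reflect lam y‖
  have hb : 0 < b := ha.trans_le hle
  have hD' : 0 < D := hb.trans_le hD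
  have hba : 1 ≤ b / a := (one_le_div ha).2 hle
  have hrpow : b / a ≤ (b / a) ^ p := Real.self_le_rpow_of_one_le hba hp
  calc c * (2 * d) / (D ^ 2 * D ^ p) * (x 0 - lam)
      = c * (2 * d * (x 0 - lam) / D ^ 2) / D ^ p := by field_simp
    _ ≤ c * ((b / a) ^ p - 1) / D ^ p := by gcongr; linarith
    _ ≤ c * ((b / a) ^ p - 1) / b ^ p := by
        have : 0 ≤ c * ((b / a) ^ p - 1) := mul_nonneg hc (by linarith)
        gcongr
    _ = c / a ^ p - c / b ^ p := by
        rw [Real.div_rpow hb.le ha.le]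
        field_simp

end AntisymmetricKernel

section TouchingFromBelow

lemma mul_sub_mul_le_mul_sub {a b e g K v : ℝ} (hg : 0 ≤ g) (hgab : g ≤ a - b) (he : 0 ≤ e)
    (hev : -e ≤ v) (haK : a ≤ K) (hb : 0 ≤ b) : g * v - e * K ≤ v * (a - b) := by
  have hab : 0 ≤ a - b := hg.trans hgab
  have heK : e * (a - b) ≤ e * K := mul_le_mul_of_nonneg_left (by linarith) he
  rcases le_total 0 v with hv | hv
  · have hgv := mul_le_mul_of_nonneg_right hgab hv
    have heK' : 0 ≤ e * K := (mul_nonneg he hab).trans heK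
    linarith
  · have hgv : g * v ≤ 0 := mul_nonpos_of_nonneg_of_nonpos hg hv
    have hev' := mul_le_mul_of_nonneg_right hev hab
    linarith

variable {n : ℕ} [NeZero n] {lam c p : ℝ} {v e g : Eucl n → ℝ} {x x₀ : Eucl n} {r A M M' : ℝ}

omit [NeZero n] in
lemma fracKernel_le_two_rpow_mul_of_notMem_ball (hc : 0 ≤ c) (hp : 0 ≤ p) (hr : 0 < r)
    (hx : dist x x₀ ≤ r) {y : Eucl n} (hy : y ∉ ball x₀ (2 * r)) :
    fracKernel c p (x - y) ≤ 2 ^ p * fracKernel c p (y - x₀) := by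
  rw [mem_ball, not_lt] at hy
  refine fracKernel_le_two_rpow_mul hc hp (fun h => ?_) ?_
  · rw [sub_eq_zero.1 h, dist_self] at hy
    linarith
  · have := dist_triangle y x x₀
    rw [← dist_eq_norm, ← dist_eq_norm, dist_comm x y]
    linarith

/- Paired with its mirror image, `y` contributes `v y * (a - b) - v x * (a + b)` to the nonlocal
operator at `x`, where `a = k (x - y)` dominates `b = k (x - reflect lam y)` and `v x ≤ 0`. -/
lemma mul_sub_le_add_reflect_of_touching
    (hk : IsLevyKernel (fracKernel c p : Eucl n → ℝ)) (hc : 0 ≤ c) (hp : 0 ≤ p) (hr : 0 < r)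
    (hanti : IsReflAntisymm lam v) (hx : lam < x 0) (hxr : dist x x₀ ≤ r) (hvx : v x ≤ 0)
    (hmin : ∀ y ∈ halfSpace n lam ∩ ball x₀ (2 * r), v x ≤ v y) (he : ∀ y, 0 ≤ e y)
    (hev : ∀ y ∈ halfSpace n lam \ ball x₀ (2 * r), -e y ≤ v y) (hg : ∀ y, 0 ≤ g y)
    (hgk : ∀ y, g y ≤ (halfSpace n lam \ ball x₀ (2 * r)).indicator
      (fun y => fracKernel c p (x - y) - fracKernel c p (x - reflect lam y)) y)
    {y : Eucl n} (hy : lam ≤ y 0) :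
    g y * v y - e y * (2 ^ p * kernelTail (fracKernel c p) x₀ (2 * r) y) ≤
      (v y - v x) * fracKernel c p (x - y) + (-v y - v x) * fracKernel c p (x - reflect lam y) := by
  have ha := fracKernel_nonneg (p := p) hc (x - y)
  have hb := fracKernel_nonneg (p := p) hc (x - reflect lam y)
  have hvab := mul_nonneg (neg_nonneg.2 hvx) (add_nonneg ha hb)
  have htail : 0 ≤ e y * (2 ^ p * kernelTail (fracKernel c p) x₀ (2 * r) y) :=
    mul_nonneg (he y) (mul_nonneg (by positivity) (hk.kernelTail_nonneg _ _ _))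
  rcases hy.eq_or_lt with hyl | hyl
  · rw [hanti.eq_zero hyl.symm]
    linarith
  by_cases hyb : y ∈ ball x₀ (2 * r)
  · have hgy : g y ≤ 0 := (hgk y).trans_eq (indicator_of_notMem (fun h => h.2 hyb) _)
    rw [hgy.antisymm (hg y)]
    rcases eq_or_ne x y with rfl | hxy
    · linarith [mul_nonneg (by linarith : 0 ≤ -v x - v x) hb]
    · have hab := mul_nonneg (sub_nonneg.2 (hmin y ⟨hyl, hyb⟩))
        (sub_nonneg.2 (fracKernel_sub_reflect_le hc hp hx.le hy hxy))
      linarith [mul_nonneg (neg_nonneg.2 hvx) hb]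
  · have hyS : y ∈ halfSpace n lam \ ball x₀ (2 * r) := ⟨hyl, hyb⟩
    rw [kernelTail_of_notMem hyb]
    have hkey := mul_sub_mul_le_mul_sub (hg y) ((hgk y).trans_eq (indicator_of_mem hyS _)) (he y)
      (hev y hyS) (fracKernel_le_two_rpow_mul_of_notMem_ball hc hp hr hxr hyb) hb
    linarith

lemma integral_mul_sub_le_neg_half_levyOp_of_touching
    (hk : IsLevyKernel (fracKernel c p : Eucl n → ℝ))
    (hc : 0 ≤ c) (hp : 0 ≤ p) (hr : 0 < r) (hv : IsBddMeasurable v M)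
    (hanti : IsReflAntisymm lam v) (hA : ∀ z, |secondDiff v x z| ≤ A * levyWeight z)
    (hx : lam < x 0) (hxr : dist x x₀ ≤ r) (hvx : v x ≤ 0)
    (hmin : ∀ y ∈ halfSpace n lam ∩ ball x₀ (2 * r), v x ≤ v y)
    (he : IsBddMeasurable e M') (he0 : ∀ y, 0 ≤ e y)
    (hev : ∀ y ∈ halfSpace n lam \ ball x₀ (2 * r), -e y ≤ v y)
    (hg : Integrable g) (hg0 : ∀ y, 0 ≤ g y)
    (hgk : ∀ y, g y ≤ (halfSpace n lam \ ball x₀ (2 * r)).indicator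
      (fun y => fracKernel c p (x - y) - fracKernel c p (x - reflect lam y)) y) :
    (∫ y, g y * v y) - 2 ^ p * ∫ y, e y * kernelTail (fracKernel c p) x₀ (2 * r) y ≤
      -(1 / 2) * levyOp (fracKernel c p) v x := by
  have hloc : IsLocalMin v x := by
    filter_upwards [(isOpen_halfSpace.inter isOpen_ball).mem_nhds
      ⟨hx, (hxr.trans_lt (by linarith) : x ∈ ball x₀ (2 * r))⟩] with y hy using hmin y hy
  obtain ⟨hint, hlevy⟩ := integral_sub_mul_eq_neg_half_levyOp (fracKernel_neg c p)
    (hk.integrable_sub_mul_of_isLocalMin hv hA hloc)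
  have hgv : Integrable fun y => g y * v y :=
    hg.mul_bdd hv.measurable.aestronglyMeasurable (ae_of_all _ hv.abs_le)
  have hek : Integrable fun y => e y * (2 ^ p * kernelTail (fracKernel c p) x₀ (2 * r) y) :=
    ((hk.integrable_kernelTail x₀ (by positivity : 0 < 2 * r)).const_mul _).bdd_mul
      he.measurable.aestronglyMeasurable (ae_of_all _ he.abs_le)
  have hpull : 2 ^ p * ∫ y, e y * kernelTail (fracKernel c p) x₀ (2 * r) y =
      ∫ y, e y * (2 ^ p * kernelTail (fracKernel c p) x₀ (2 * r) y) := by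
    rw [← integral_const_mul]
    congr 1 with y
    ring
  rw [← hlevy, hpull, ← integral_sub hgv hek]
  refine integral_mono_of_add_reflect_le (lam := lam) hint (hgv.sub hek) fun y hy => ?_
  have hmirror : lam ≥ reflect lam y 0 := by rw [reflect_apply_zero]; linarith
  have hg_mirror : g (reflect lam y) = 0 := ((hgk _).trans_eq
    (indicator_of_notMem (fun h => (h.1 : lam < _).not_ge hmirror) _)).antisymm (hg0 _)
  have htail : 0 ≤
      e (reflect lam y) * (2 ^ p * kernelTail (fracKernel c p) x₀ (2 * r) (reflect lam y)) :=
    mul_nonneg (he0 _) (mul_nonneg (by positivity) (hk.kernelTail_nonneg _ _ _))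
  have hkey := mul_sub_le_add_reflect_of_touching hk hc hp hr hanti hx hxr hvx hmin he0 hev hg0 hgk
    hy
  simp only [hanti y, hg_mirror, zero_mul]
  linarith

end TouchingFromBelow

section DirectionalLipschitz

variable {E : Type*} [NormedAddCommGroup E] [InnerProductSpace ℝ E]
  {k v : E → ℝ}

lemma hasDerivAt_secondDiff_add_smul (hv : Differentiable ℝ v) (x z e : E) (τ : ℝ) :
    HasDerivAt (fun τ : ℝ => secondDiff v (x + τ • e) z)
      (secondDiff (fun y => fderiv ℝ v y e) (x + τ • e) z) τ := by
  have hline (y : E) : HasDerivAt (fun τ : ℝ => v (y + τ • e)) (fderiv ℝ v (y + τ • e) e) τ :=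
    (hv _).hasFDerivAt.comp_hasDerivAt τ
      (by simpa using ((hasDerivAt_id τ).smul_const e).const_add y)
  have hsum := (((hline x).const_mul 2).fun_sub (hline (x + z))).fun_sub (hline (x - z))
  simpa only [secondDiff, add_right_comm x z, sub_add_eq_add_sub x z] using hsum

lemma exists_abs_secondDiff_add_smul_sub_le (hv : ContDiff ℝ 3 v) (hc : HasCompactSupport v)
    (e : E) : ∃ A, 0 ≤ A ∧ ∀ x z (h : ℝ),
      |secondDiff v (x + h • e) z - secondDiff v x z| ≤ A * |h| * levyWeight z := by
  obtain ⟨A, hA, hbound⟩ := exists_abs_secondDiff_le_of_contDiff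
    ((hv.fderiv_right (by norm_num : (2 : WithTop ℕ∞) + 1 ≤ 3)).clm_apply contDiff_const)
    (hc.fderiv_apply (𝕜 := ℝ) e)
  refine ⟨A, hA, fun x z h => ?_⟩
  have hmvt := convex_univ.norm_image_sub_le_of_norm_hasDerivWithin_le (C := A * levyWeight z)
    (fun τ _ => (hasDerivAt_secondDiff_add_smul (hv.differentiable (by norm_num)) x z e
      τ).hasDerivWithinAt) (fun τ _ => hbound _ z) (mem_univ 0) (mem_univ h)
  simpa only [zero_smul, add_zero, sub_zero, Real.norm_eq_abs, mul_right_comm A] using hmvt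

variable [FiniteDimensional ℝ E] [MeasurableSpace E] [BorelSpace E]

lemma IsLevyKernel.exists_abs_levyOp_add_smul_sub_le (hk : IsLevyKernel k) (hv : ContDiff ℝ 3 v)
    (hc : HasCompactSupport v) (e : E) :
    ∃ A, 0 ≤ A ∧ ∀ x (h : ℝ), |levyOp k v (x + h • e) - levyOp k v x| ≤ A * |h| := by
  obtain ⟨A, hA, hlip⟩ := exists_abs_secondDiff_add_smul_sub_le hv hc e
  obtain ⟨A', -, hA'⟩ := exists_abs_secondDiff_le_of_contDiff (hv.of_le (by norm_num)) hc
  refine ⟨A * levyMass k, mul_nonneg hA hk.levyMass_nonneg, fun x h => ?_⟩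
  have hint (y : E) : Integrable fun z => secondDiff v y z * k z :=
    hk.integrable_secondDiff_mul hv.continuous.measurable (hA' y)
  rw [levyOp, levyOp, ← Real.norm_eq_abs, ← integral_sub (hint _) (hint _), mul_right_comm,
    levyMass, ← integral_const_mul]
  refine norm_integral_le_of_norm_le (hk.integrable.const_mul _) (ae_of_all _ fun z => ?_)
  rw [← sub_mul]
  exact hk.norm_mul_le (hlip x z h)

end DirectionalLipschitz

section HopfBarrier

variable {n : ℕ} [NeZero n] {lam r : ℝ} {k v : Eucl n → ℝ} {x x₀ : Eucl n}

lemma levyOp_eq_zero_of_isReflAntisymm (hk : ∀ z, k (reflect 0 z) = k z)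
    (hv : IsReflAntisymm lam v) (hx : x 0 = lam) : levyOp k v x = 0 := by
  have hodd (z : Eucl n) : secondDiff v x (reflect 0 z) = -secondDiff v x z := by
    have hplus : x + reflect 0 z = reflect lam (x + z) := by
      rw [reflect_add, reflect_of_apply_zero_eq hx]
    have hminus : x - reflect 0 z = reflect lam (x - z) := by
      rw [sub_eq_add_neg, sub_eq_add_neg, reflect_add, reflect_of_apply_zero_eq hx,
        reflect_zero_neg]
    rw [secondDiff, hplus, hminus, hv, hv, hv.eq_zero hx, secondDiff, hv.eq_zero hx]
    ring
  have hneg : levyOp k v x = -levyOp k v x := by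
    conv_lhs => rw [levyOp, ← integral_comp_reflect 0]
    simp only [hk, hodd, neg_mul, integral_neg, levyOp]
  linarith

lemma IsLevyKernel.exists_abs_levyOp_le_mul_abs_coord_sub (hk : IsLevyKernel k)
    (hrefl : ∀ z, k (reflect 0 z) = k z) (hv : ContDiff ℝ 3 v) (hc : HasCompactSupport v)
    (hanti : IsReflAntisymm lam v) : ∃ A, 0 ≤ A ∧ ∀ x, |levyOp k v x| ≤ A * |x 0 - lam| := by
  set e : Eucl n := EuclideanSpace.single 0 1 with he
  obtain ⟨A, hA, hlip⟩ := hk.exists_abs_levyOp_add_smul_sub_le hv hc e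
  refine ⟨A, hA, fun x => ?_⟩
  have hproj : (x - (x 0 - lam) • e) 0 = lam := by simp [he]
  simpa only [levyOp_eq_zero_of_isReflAntisymm hrefl hanti hproj, sub_add_cancel, sub_zero]
    using hlip (x - (x 0 - lam) • e) (x 0 - lam)

/-- The signed distance to the hyperplane `x 0 = lam`, smoothly cut off outside the ball of radius
`r` around `x₀`. Small multiples of it are the comparison functions in Hopf's lemma. -/
def hopfBarrier (lam : ℝ) (x₀ : Eucl n) (r : ℝ) (x : Eucl n) : ℝ :=
  (x 0 - lam) * Real.smoothTransition (2 - 2 * ‖x - x₀‖ ^ 2 / r ^ 2)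

lemma contDiff_hopfBarrier (lam : ℝ) (x₀ : Eucl n) (r : ℝ) :
    ContDiff ℝ 3 (hopfBarrier lam x₀ r) := by
  refine (((EuclideanSpace.proj (𝕜 := ℝ) (0 : Fin n)).contDiff).sub contDiff_const).mul
    (Real.smoothTransition.contDiff.comp (contDiff_const.sub (ContDiff.div_const ?_ _)))
  exact contDiff_const.mul ((contDiff_norm_sq ℝ).comp (contDiff_id.sub contDiff_const))

lemma hopfBarrier_eq_zero (hr : 0 < r) (hx : r ≤ dist x x₀) : hopfBarrier lam x₀ r x = 0 := by
  rw [dist_eq_norm] at hx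
  have hratio : 1 ≤ ‖x - x₀‖ ^ 2 / r ^ 2 := (one_le_div (by positivity)).2 (by gcongr)
  rw [hopfBarrier, mul_div_assoc, Real.smoothTransition.zero_of_nonpos (by linarith), mul_zero]

lemma hopfBarrier_eq_coord_sub (hr : 0 < r) (hx : dist x x₀ ≤ r / 2) :
    hopfBarrier lam x₀ r x = x 0 - lam := by
  rw [dist_eq_norm] at hx
  have hratio : ‖x - x₀‖ ^ 2 / r ^ 2 ≤ 1 / 2 := by
    rw [div_le_iff₀ (by positivity)]
    nlinarith [pow_le_pow_left₀ (norm_nonneg _) hx 2]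
  rw [hopfBarrier, mul_div_assoc, Real.smoothTransition.one_of_one_le (by linarith), mul_one]

lemma hopfBarrier_nonneg (hx : lam ≤ x 0) : 0 ≤ hopfBarrier lam x₀ r x :=
  mul_nonneg (sub_nonneg.2 hx) (Real.smoothTransition.nonneg _)

lemma hopfBarrier_le (hx : lam ≤ x 0) : hopfBarrier lam x₀ r x ≤ x 0 - lam :=
  mul_le_of_le_one_right (sub_nonneg.2 hx) (Real.smoothTransition.le_one _)

lemma isReflAntisymm_hopfBarrier (hx₀ : x₀ 0 = lam) :
    IsReflAntisymm lam (hopfBarrier lam x₀ r) := fun x => by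
  rw [hopfBarrier, norm_reflect_sub, reflect_of_apply_zero_eq hx₀, reflect_apply_zero, hopfBarrier]
  ring

lemma hasCompactSupport_hopfBarrier (lam : ℝ) (x₀ : Eucl n) (hr : 0 < r) :
    HasCompactSupport (hopfBarrier lam x₀ r) :=
  HasCompactSupport.of_support_subset_isCompact (isCompact_closedBall x₀ r) fun x hx => by
    by_contra hball
    exact hx (hopfBarrier_eq_zero hr (not_le.1 hball).le)

end HopfBarrier

section MollifiedFamily

variable {E : Type*} [NormedAddCommGroup E] [InnerProductSpace ℝ E] [FiniteDimensional ℝ E]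
  [MeasurableSpace E] [BorelSpace E] {ρ σ v k : E → ℝ} {ε ε' M R : ℝ} {x x₀ : E}

lemma continuous_mollify (hρ : IsRadialMollifier ρ ε) (hv : IsBddMeasurable v M) :
    Continuous (mollify ρ v) :=
  IsBddEvolution.continuous_mollify_slice (w := fun x _ => v x)
    ⟨fun _ _ => hv, fun _ => continuousOn_const⟩ hρ one_pos

lemma isBddMeasurable_mollify (hρ : IsRadialMollifier ρ ε) (hv : IsBddMeasurable v M) :
    IsBddMeasurable (mollify ρ v) M :=
  ⟨(continuous_mollify hρ hv).measurable, fun _ => abs_mollify_le hρ fun _ _ => hv.abs_le _⟩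

lemma mollify_comm (hρ : IsRadialMollifier ρ ε) (hσ : IsRadialMollifier σ ε')
    (hv : IsBddMeasurable v M) (x : E) :
    mollify ρ (mollify σ v) x = mollify σ (mollify ρ v) x := by
  have hint : Integrable (fun q : E × E => ρ q.1 * σ q.2 * v (x - q.1 - q.2))
      (volume.prod volume) :=
    (hρ.integrable.mul_prod hσ.integrable).mul_bdd (c := M)
      (hv.measurable.comp (by fun_prop)).aestronglyMeasurable (ae_of_all _ fun q => hv.abs_le _)
  calc mollify ρ (mollify σ v) x = ∫ y, ∫ z, ρ y * σ z * v (x - y - z) := by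
        simp only [mollify_apply, mul_assoc, integral_const_mul]
    _ = ∫ z, ∫ y, ρ y * σ z * v (x - y - z) := integral_integral_swap hint
    _ = mollify σ (mollify ρ v) x := by
        simp only [mollify_apply, mul_comm (ρ _), mul_assoc, integral_const_mul,
          sub_right_comm x _ _]

lemma mollify_le_mul_setIntegral (hρ : IsRadialMollifier ρ ε) (hv : IsBddMeasurable v M)
    (hv0 : ∀ y, 0 ≤ v y) (hx : x ∈ closedBall x₀ R) :
    mollify ρ v x ≤ ρ 0 * ∫ y in closedBall x₀ (R + ε), v y := by
  rw [mollify_apply_swap, ← integral_const_mul, ← integral_indicator measurableSet_closedBall]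
  have hint : IntegrableOn v (closedBall x₀ (R + ε)) :=
    Measure.integrableOn_of_bounded measure_closedBall_lt_top.ne
      hv.measurable.aestronglyMeasurable (ae_of_all _ hv.abs_le)
  refine integral_mono (integrable_mollify_swap hρ hv x)
    ((integrable_indicator_iff measurableSet_closedBall).2 (hint.const_mul _)) fun y => ?_
  by_cases hy : y ∈ closedBall x₀ (R + ε)
  · rw [indicator_of_mem hy]
    exact mul_le_mul_of_nonneg_right (hρ.le_apply_zero _) (hv0 y)
  · have hfar : ε ≤ ‖x - y‖ := by
      rw [mem_closedBall, not_le] at hy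
      rw [← dist_eq_norm, dist_comm]
      linarith [dist_triangle y x x₀, mem_closedBall.1 hx]
    rw [indicator_of_notMem hy, hρ.eq_zero_of_le_norm _ hfar, zero_mul]

variable {ι : Type*} {l : Filter ι} [l.IsCountablyGenerated] {N : ι → E → ℝ}

lemma tendsto_mollify_zero (hρ : IsRadialMollifier ρ ε) (hN : ∀ᶠ t in l, IsBddMeasurable (N t) M)
    (hlim : ∀ x, Tendsto (fun t => N t x) l (𝓝 0)) (x : E) :
    Tendsto (fun t => mollify ρ (N t) x) l (𝓝 0) := by
  rw [← integral_zero E ℝ (μ := volume)]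
  simp only [mollify_apply]
  refine tendsto_integral_filter_of_dominated_convergence (fun y => ρ y * M) ?_ ?_
    (hρ.integrable.mul_const M) (ae_of_all _ fun y => ?_)
  · filter_upwards [hN] with t ht using (integrable_mollify hρ ht x).aestronglyMeasurable
  · filter_upwards [hN] with t ht
    refine ae_of_all _ fun y => ?_
    rw [norm_mul, Real.norm_of_nonneg (hρ.nonneg y)]
    exact mul_le_mul_of_nonneg_left (ht.abs_le _) (hρ.nonneg y)
  · simpa only [mul_zero] using (hlim (x - y)).const_mul (ρ y)

lemma eventually_forall_mem_closedBall_mollify_le (hρ : IsRadialMollifier ρ ε)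
    (hN : ∀ᶠ t in l, IsBddMeasurable (N t) M) (hN0 : ∀ t y, 0 ≤ N t y)
    (hlim : ∀ x, Tendsto (fun t => N t x) l (𝓝 0)) (x₀ : E) (R : ℝ) {η : ℝ} (hη : 0 < η) :
    ∀ᶠ t in l, ∀ x ∈ closedBall x₀ R, mollify ρ (N t) x ≤ η := by
  have hint : Tendsto (fun t => ∫ y in closedBall x₀ (R + ε), N t y) l (𝓝 0) := by
    rw [← integral_zero E ℝ (μ := volume.restrict (closedBall x₀ (R + ε)))]
    refine tendsto_integral_filter_of_dominated_convergence (fun _ => M) ?_ ?_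
      (integrableOn_const measure_closedBall_lt_top.ne) (ae_of_all _ hlim)
    · filter_upwards [hN] with t ht using ht.measurable.aestronglyMeasurable
    · filter_upwards [hN] with t ht using ae_of_all _ ht.abs_le
  have hbound := hint.const_mul (ρ 0)
  rw [mul_zero] at hbound
  filter_upwards [hbound.eventually_le_const hη, hN] with t hle ht x hx
  exact (mollify_le_mul_setIntegral hρ ht (hN0 t) hx).trans hle

lemma tendsto_integral_mollify_mul_zero (hρ : IsRadialMollifier ρ ε)
    (hN : ∀ᶠ t in l, IsBddMeasurable (N t) M) (hlim : ∀ x, Tendsto (fun t => N t x) l (𝓝 0))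
    (hk : Integrable k) : Tendsto (fun t => ∫ y, mollify ρ (N t) y * k y) l (𝓝 0) := by
  rw [← integral_zero E ℝ]
  refine tendsto_integral_filter_of_dominated_convergence (fun y => M * ‖k y‖) ?_ ?_
    (hk.norm.const_mul M) (ae_of_all _ fun y => ?_)
  · filter_upwards [hN] with t ht
    exact (continuous_mollify hρ ht).aestronglyMeasurable.mul hk.aestronglyMeasurable
  · filter_upwards [hN] with t ht
    refine ae_of_all _ fun y => ?_
    rw [norm_mul]
    exact mul_le_mul_of_nonneg_right ((isBddMeasurable_mollify hρ ht).abs_le y) (norm_nonneg _)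
  · simpa only [zero_mul] using (tendsto_mollify_zero hρ hN hlim y).mul_const (k y)

end MollifiedFamily

section HalfSpaceSolution

variable {n : ℕ} [NeZero n] {lam C M ε t : ℝ} {k ρ ψ : Eucl n → ℝ} {w : Eucl n → ℝ → ℝ}
  {tk : ℕ → ℝ} {x xs : Eucl n}

lemma IsSolution.exists_hasDerivWithinAt_mollify (h : IsSolution (halfSpace n lam) k C M w)
    (hρ : IsRadialMollifier ρ ε) (hx : lam + ε < x 0) (ht : 0 < t) :
    ∃ d, HasDerivWithinAt (fun τ => mollify ρ (fun y => w y τ) x) d (Ici t) t ∧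
      |d + levyOp k (mollify ρ fun y => w y t) x| ≤ C * mollify ρ (fun y => |w y t|) x :=
  h.mollifiedEquationAt (x₀ := x) (R := (ε + (x 0 - lam)) / 2)
    (closedBall_subset_halfSpace (by linarith)) t ht x ρ ε hρ (by rw [dist_self]; linarith)

lemma IsSolution.exists_abs_mollify_sub_le (h : IsSolution (halfSpace n lam) k C M w)
    (hρ : IsRadialMollifier ρ ε) : ∃ K, 0 ≤ K ∧ ∀ x : Eucl n, lam + ε < x 0 → ∀ t t', 0 < t →
      t ≤ t' → |mollify ρ (fun y => w y t') x - mollify ρ (fun y => w y t) x| ≤ K * (t' - t) := by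
  obtain ⟨A, hA0, hA⟩ := hρ.exists_abs_secondDiff_mollify_le
  have hM := h.M_nonneg
  have hC := h.C_nonneg
  have hmass := h.kernel.levyMass_nonneg
  refine ⟨M * A * levyMass k + C * M, by positivity, fun x hx t t' ht htt' => ?_⟩
  have hpos : ∀ τ ∈ Icc t t', 0 < τ := fun τ hτ => ht.trans_le hτ.1
  choose! d hd hd_le using fun τ (hτ : 0 < τ) => h.exists_hasDerivWithinAt_mollify hρ hx hτ
  refine norm_image_sub_le_of_norm_deriv_right_le_segment
    ((h.toIsBddEvolution.continuousOn_mollify_time hρ x).mono hpos)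
    (fun τ hτ => hd τ (hpos τ (Ico_subset_Icc_self hτ))) (fun τ hτ => ?_) t' (right_mem_Icc.2 htt')
  have hτ0 := hpos τ (Ico_subset_Icc_self hτ)
  have hslice := h.slice τ hτ0
  have hlevy := h.kernel.abs_levyOp_le (hA _ M hslice x)
  have habs : mollify ρ (fun y => |w y τ|) x ≤ M :=
    (le_abs_self _).trans (abs_mollify_le hρ fun y _ => by rw [abs_abs]; exact hslice.abs_le _)
  calc ‖d τ‖ = |d τ + levyOp k (mollify ρ fun y => w y τ) x
        - levyOp k (mollify ρ fun y => w y τ) x| := by rw [add_sub_cancel_right, Real.norm_eq_abs]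
    _ ≤ C * M + M * A * levyMass k := (abs_sub _ _).trans
        (add_le_add ((hd_le τ hτ0).trans (mul_le_mul_of_nonneg_left habs hC)) hlevy)
    _ = M * A * levyMass k + C * M := add_comm _ _

lemma IsSolution.continuousOn_of_tendstoUniformlyOn (h : IsSolution (halfSpace n lam) k C M w)
    (htk : Tendsto tk atTop atTop)
    (hconv : TendstoUniformlyOn (fun j y => w y (tk j)) ψ atTop (halfSpace n lam)) :
    ContinuousOn ψ (halfSpace n lam) :=
  hconv.continuousOn ((htk.eventually_gt_atTop 0).mono fun _ hj x hx =>
    (h.continuousAt_slice _ hj x hx).continuousWithinAt).frequently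

/- Uniform convergence gives positivity at the times `tk j` only; the Lipschitz bound in time of the
mollification spreads it to the whole interval `[tk j - δ, tk j]`. -/
lemma IsSolution.exists_le_mollify_near (h : IsSolution (halfSpace n lam) k C M w)
    (htk : Tendsto tk atTop atTop)
    (hconv : TendstoUniformlyOn (fun j y => w y (tk j)) ψ atTop (halfSpace n lam))
    (hxs : xs ∈ halfSpace n lam) (hpos : 0 < ψ xs) :
    ∃ ε₁ ρ₁ m₀ δ, IsRadialMollifier ρ₁ ε₁ ∧ 0 < m₀ ∧ 0 < δ ∧ lam + 3 * ε₁ < xs 0 ∧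
      ∀ᶠ j in atTop, δ < tk j ∧ ∀ t ∈ Icc (tk j - δ) (tk j), ∀ x ∈ closedBall xs ε₁,
        m₀ ≤ mollify ρ₁ (fun y => w y t) x := by
  have hcont := (h.continuousOn_of_tendstoUniformlyOn htk hconv).continuousAt
    (isOpen_halfSpace.mem_nhds hxs)
  obtain ⟨r, hr, hψ⟩ := Metric.eventually_nhds_iff_ball.1
    (hcont.eventually (lt_mem_nhds (half_lt_self hpos)))
  have hxs' : 0 < xs 0 - lam := sub_pos.2 hxs
  obtain ⟨ε₁, hε₁, hε₁r, hε₁x⟩ : ∃ ε₁ > 0, 4 * ε₁ ≤ r ∧ 4 * ε₁ ≤ xs 0 - lam :=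
    ⟨min (r / 4) ((xs 0 - lam) / 4), by positivity,
      by linarith [min_le_left (r / 4) ((xs 0 - lam) / 4)],
      by linarith [min_le_right (r / 4) ((xs 0 - lam) / 4)]⟩
  obtain ⟨ρ₁, hρ₁⟩ := exists_isRadialMollifier (E := Eucl n) hε₁
  obtain ⟨K, hK0, hK⟩ := h.exists_abs_mollify_sub_le hρ₁
  have hδ : 0 < ψ xs / 8 / (K + 1) := by positivity
  refine ⟨ε₁, ρ₁, ψ xs / 8, ψ xs / 8 / (K + 1), hρ₁, by positivity, hδ, by linarith, ?_⟩
  filter_upwards [htk.eventually_gt_atTop (ψ xs / 8 / (K + 1)),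
    Metric.tendstoUniformlyOn_iff.1 hconv (ψ xs / 4) (by positivity)] with j hj hclose
  refine ⟨hj, fun t ht x hx => ?_⟩
  have hxlam : lam + 2 * ε₁ < x 0 := by
    linarith [(abs_le.1 (abs_coord_sub_le_dist x xs)).1, mem_closedBall.1 hx]
  have hat_tk : ψ xs / 4 ≤ mollify ρ₁ (fun y => w y (tk j)) x := by
    refine le_mollify hρ₁ (integrable_mollify hρ₁ (h.slice _ (hδ.trans hj)) x) fun y hy => ?_
    have hball : x - y ∈ ball xs r := by
      have := dist_triangle (x - y) x xs
      rw [dist_self_sub_left] at this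
      exact this.trans_lt (by linarith [mem_closedBall.1 hx])
    have hy' := hclose (x - y) (sub_mem_halfSpace (by linarith) hy)
    rw [Real.dist_eq] at hy'
    linarith [hψ _ hball, (abs_lt.1 hy').2]
  have hlip := hK x (by linarith) t (tk j) (by linarith [ht.1]) ht.2
  have hsmall : K * (tk j - t) ≤ ψ xs / 8 := by
    have : (K + 1) * (tk j - t) ≤ ψ xs / 8 := by
      rw [← le_div_iff₀' (by positivity)]
      linarith [ht.1]
    linarith [ht.2]
  linarith [(abs_le.1 hlip).2]

end HalfSpaceSolution

section SubtractBarrier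

variable {E : Type*} [NormedAddCommGroup E] [InnerProductSpace ℝ E] [FiniteDimensional ℝ E]
  [MeasurableSpace E] [BorelSpace E] {k ρ u v P : E → ℝ} {ε M A B b : ℝ} {x z : E}

omit [InnerProductSpace ℝ E] [FiniteDimensional ℝ E] [MeasurableSpace E] [BorelSpace E] in
lemma abs_secondDiff_sub_mul_le {q : ℝ} (hu : |secondDiff u x z| ≤ A * q)
    (hv : |secondDiff v x z| ≤ B * q) :
    |secondDiff (fun y => u y - b * v y) x z| ≤ (A + |b| * B) * q := by
  have hsub : secondDiff (fun y => u y - b * v y) x z =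
      secondDiff u x z - b * secondDiff v x z := by
    unfold secondDiff
    ring
  rw [hsub, add_mul, mul_assoc]
  refine (abs_sub _ _).trans (add_le_add hu ?_)
  rw [abs_mul]
  exact mul_le_mul_of_nonneg_left hv (abs_nonneg b)

lemma IsLevyKernel.levyOp_sub_mul (hk : IsLevyKernel k) (hu : Measurable u)
    (hA : ∀ z, |secondDiff u x z| ≤ A * levyWeight z) (hv : Measurable v)
    (hB : ∀ z, |secondDiff v x z| ≤ B * levyWeight z) (b : ℝ) :
    levyOp k (fun y => u y - b * v y) x = levyOp k u x - b * levyOp k v x := by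
  unfold levyOp
  rw [← integral_const_mul, ← integral_sub (hk.integrable_secondDiff_mul hu hA)
    ((hk.integrable_secondDiff_mul hv hB).const_mul b)]
  congr 1 with z
  unfold secondDiff
  ring

lemma exists_isBddMeasurable_mollify_sub_mul (hρ : IsRadialMollifier ρ ε)
    (hu : IsBddMeasurable u M) (hP : Continuous P) (hc : HasCompactSupport P) (b : ℝ) :
    ∃ M', IsBddMeasurable (fun y => mollify ρ u y - b * P y) M' := by
  obtain ⟨B, hB⟩ := hc.exists_bound_of_continuous hP
  refine ⟨M + |b| * B, (continuous_mollify hρ hu).measurable.sub (hP.measurable.const_mul b),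
    fun y => (abs_sub _ _).trans (add_le_add ((isBddMeasurable_mollify hρ hu).abs_le y) ?_)⟩
  rw [abs_mul]
  exact mul_le_mul_of_nonneg_left (hB y) (abs_nonneg b)

lemma exists_abs_secondDiff_mollify_sub_mul_le (hρ : IsRadialMollifier ρ ε)
    (hu : IsBddMeasurable u M) (hP : ContDiff ℝ 2 P) (hc : HasCompactSupport P) (b : ℝ) :
    ∃ N, ∀ x z, |secondDiff (fun y => mollify ρ u y - b * P y) x z| ≤ N * levyWeight z := by
  obtain ⟨A, -, hA⟩ := hρ.exists_abs_secondDiff_mollify_le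
  obtain ⟨B, -, hB⟩ := exists_abs_secondDiff_le_of_contDiff hP hc
  exact ⟨M * A + |b| * B, fun x z => abs_secondDiff_sub_mul_le (hA u M hu x z) (hB x z)⟩

lemma IsLevyKernel.levyOp_mollify_sub_mul (hk : IsLevyKernel k) (hρ : IsRadialMollifier ρ ε)
    (hu : IsBddMeasurable u M) (hP : ContDiff ℝ 2 P) (hc : HasCompactSupport P) (b : ℝ) (x : E) :
    levyOp k (fun y => mollify ρ u y - b * P y) x =
      levyOp k (mollify ρ u) x - b * levyOp k P x := by
  obtain ⟨A, -, hA⟩ := hρ.exists_abs_secondDiff_mollify_le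
  obtain ⟨B, -, hB⟩ := exists_abs_secondDiff_le_of_contDiff hP hc
  exact hk.levyOp_sub_mul (continuous_mollify hρ hu).measurable (hA u M hu x)
    hP.continuous.measurable (hB x) b

end SubtractBarrier

section TouchingHopfBarrier

variable {n : ℕ} [NeZero n] {lam c p ε ε₁ m₀ b A M : ℝ} {ρ ρ₁ u : Eucl n → ℝ}
  {x x₀ xs y : Eucl n}

/-- The density `J` of the kernel difference in `mul_mollifier_le_indicator_sub_reflect`: for `x`
near `x₀ ∈ ∂Σ` and `y` near `xs`, `k(x - y) - k(x - y^λ)` is at least `J (x₁ - λ) ρ₁(xs - y)`. -/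
def hopfDensity (c p ε₁ : ℝ) (ρ₁ : Eucl n → ℝ) (x₀ xs : Eucl n) : ℝ :=
  c * (2 * ε₁) / ((2 * ε₁ + dist x₀ xs) ^ 2 * (2 * ε₁ + dist x₀ xs) ^ p) / ρ₁ 0

omit [NeZero n] in
lemma hopfDensity_pos (hc : 0 < c) (hρ₁ : IsRadialMollifier ρ₁ ε₁) (x₀ xs : Eucl n) :
    0 < hopfDensity c p ε₁ ρ₁ x₀ xs := by
  have hε₁ := hρ₁.pos
  have hρ₁0 := hρ₁.apply_zero_pos
  have : 0 < 2 * ε₁ + dist x₀ xs := by positivity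
  unfold hopfDensity
  positivity

lemma mem_of_mollifier_ne_zero (hρ₁ : IsRadialMollifier ρ₁ ε₁) (hx₀ : x₀ 0 = lam)
    (hxs : lam + 3 * ε₁ < xs 0) (hy : ρ₁ (xs - y) ≠ 0) :
    lam + 2 * ε₁ < y 0 ∧ 2 * ε₁ ≤ dist y x₀ ∧ dist xs y < ε₁ := by
  have hdist : dist xs y < ε₁ := (dist_eq_norm xs y).trans_lt (hρ₁.norm_lt hy)
  have hy0 : lam + 2 * ε₁ < y 0 := by
    linarith [(abs_le.1 (abs_coord_sub_le_dist xs y)).2]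
  exact ⟨hy0, by linarith [(abs_le.1 (abs_coord_sub_le_dist y x₀)).2], hdist⟩

lemma mul_mollifier_le_indicator_sub_reflect (hc : 0 < c) (hp : 1 ≤ p)
    (hρ₁ : IsRadialMollifier ρ₁ ε₁) (hx₀ : x₀ 0 = lam) (hxs : lam + 3 * ε₁ < xs 0)
    (hx : lam < x 0) (hxr : dist x x₀ ≤ ε₁) (y : Eucl n) :
    hopfDensity c p ε₁ ρ₁ x₀ xs * (x 0 - lam) * ρ₁ (xs - y) ≤
      (halfSpace n lam \ ball x₀ (2 * ε₁)).indicator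
        (fun y => fracKernel c p (x - y) - fracKernel c p (x - reflect lam y)) y := by
  have hε₁ := hρ₁.pos
  have hne : ∀ z ∉ ball x₀ (2 * ε₁), x ≠ z := by
    rintro z hz rfl
    exact hz (mem_ball.2 (by linarith))
  rcases eq_or_ne (ρ₁ (xs - y)) 0 with hy | hy
  · rw [hy, mul_zero]
    exact indicator_nonneg (fun z hz => sub_nonneg.2
      (fracKernel_sub_reflect_le hc.le (by linarith) hx.le (le_of_lt hz.1) (hne z hz.2))) y
  · obtain ⟨hy0, hfar, hnear⟩ := mem_of_mollifier_ne_zero hρ₁ hx₀ hxs hy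
    have hyb : y ∉ ball x₀ (2 * ε₁) := fun hyb => hfar.not_gt hyb
    have hD : ‖x - reflect lam y‖ ≤ 2 * ε₁ + dist x₀ xs := by
      have hrefl : ‖x₀ - reflect lam y‖ = dist x₀ y := by
        rw [dist_eq_norm, ← norm_reflect_sub_reflect (lam := lam) x₀ y,
          reflect_of_apply_zero_eq hx₀]
      have htri := norm_sub_le_norm_sub_add_norm_sub x x₀ (reflect lam y)
      rw [hrefl, ← dist_eq_norm x x₀] at htri
      linarith [dist_triangle x₀ xs y]
    rw [indicator_of_mem (show y ∈ halfSpace n lam \ ball x₀ (2 * ε₁) from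
      ⟨(by linarith : lam < y 0), hyb⟩)]
    refine le_trans ?_ (mul_le_fracKernel_sub_fracKernel_reflect hc.le hp hx.le hε₁.le
      (by linarith) (hne y hyb) hD)
    rw [mul_right_comm]
    refine mul_le_mul_of_nonneg_right ?_ (by linarith)
    rw [hopfDensity, div_mul_eq_mul_div, div_le_iff₀ hρ₁.apply_zero_pos]
    exact mul_le_mul_of_nonneg_left (hρ₁.le_apply_zero _) (by positivity)

lemma le_integral_mul_mollify_sub_hopfBarrier (hρ : IsRadialMollifier ρ ε)
    (hρ₁ : IsRadialMollifier ρ₁ ε₁) (hε : ε ≤ ε₁) (hx₀ : x₀ 0 = lam)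
    (hxs : lam + 3 * ε₁ < xs 0) (hu : IsBddMeasurable u M)
    (hm : ∀ y ∈ closedBall xs ε₁, m₀ ≤ mollify ρ₁ u y) :
    m₀ ≤ ∫ y, ρ₁ (xs - y) * (mollify ρ u y - b * hopfBarrier lam x₀ ε₁ y) := by
  have hcongr : ∀ y, ρ₁ (xs - y) * (mollify ρ u y - b * hopfBarrier lam x₀ ε₁ y) =
      ρ₁ (xs - y) * mollify ρ u y := fun y => by
    rcases eq_or_ne (ρ₁ (xs - y)) 0 with hy | hy
    · rw [hy, zero_mul, zero_mul]
    · have hfar := (mem_of_mollifier_ne_zero hρ₁ hx₀ hxs hy).2.1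
      rw [hopfBarrier_eq_zero hρ₁.pos (by linarith [hρ₁.pos]), mul_zero, sub_zero]
  simp only [hcongr]
  rw [← mollify_apply_swap, mollify_comm hρ₁ hρ hu]
  refine le_mollify hρ (integrable_mollify hρ (isBddMeasurable_mollify hρ₁ hu) xs) fun y hy =>
    hm _ ?_
  rw [mem_closedBall, dist_self_sub_left]
  exact hy.le.trans hε

/- The mass of `u` near `xs`, discounted by the antisymmetric kernel difference, contributes an
amount linear in the distance to the hyperplane, which beats the `O(x₁ - λ)` cost of the barrier. -/
lemma hopfDensity_mul_sub_le_neg_half_levyOp (hk : IsLevyKernel (fracKernel c p : Eucl n → ℝ))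
    (hc : 0 < c) (hp : 1 ≤ p) (hρ : IsRadialMollifier ρ ε) (hρ₁ : IsRadialMollifier ρ₁ ε₁)
    (hε : ε ≤ ε₁) (hx₀ : x₀ 0 = lam) (hxs : lam + 3 * ε₁ < xs 0) (hu : IsBddMeasurable u M)
    (hanti : IsReflAntisymm lam u) (hm : ∀ y ∈ closedBall xs ε₁, m₀ ≤ mollify ρ₁ u y)
    (hx : lam < x 0) (hxr : dist x x₀ ≤ ε₁)
    (hvx : mollify ρ u x - b * hopfBarrier lam x₀ ε₁ x ≤ 0)
    (hmin : ∀ y ∈ halfSpace n lam ∩ ball x₀ (2 * ε₁),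
      mollify ρ u x - b * hopfBarrier lam x₀ ε₁ x ≤
        mollify ρ u y - b * hopfBarrier lam x₀ ε₁ y) :
    hopfDensity c p ε₁ ρ₁ x₀ xs * (x 0 - lam) * m₀ -
        2 ^ p * ∫ y, mollify ρ (halfSpaceNegPart lam u) y *
          kernelTail (fracKernel c p) x₀ (2 * ε₁) y ≤
      -(1 / 2) * (levyOp (fracKernel c p) (mollify ρ u) x -
        b * levyOp (fracKernel c p) (hopfBarrier lam x₀ ε₁) x) := by
  have hJ : 0 ≤ hopfDensity c p ε₁ ρ₁ x₀ xs * (x 0 - lam) :=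
    mul_nonneg (hopfDensity_pos hc hρ₁ x₀ xs).le (by linarith)
  have hP := contDiff_hopfBarrier lam x₀ ε₁
  have hPc := hasCompactSupport_hopfBarrier lam x₀ hρ₁.pos
  have hP2 : ContDiff ℝ 2 (hopfBarrier lam x₀ ε₁) := hP.of_le (by norm_num)
  obtain ⟨A, hA⟩ := exists_abs_secondDiff_mollify_sub_mul_le hρ hu hP2 hPc b
  obtain ⟨M', hM'⟩ := exists_isBddMeasurable_mollify_sub_mul hρ hu hP.continuous hPc b
  have hv_anti : IsReflAntisymm lam fun y => mollify ρ u y - b * hopfBarrier lam x₀ ε₁ y :=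
    fun y => by
      simp only [isReflAntisymm_mollify hρ hanti y, isReflAntisymm_hopfBarrier hx₀ y]
      ring
  have hneg := isBddMeasurable_halfSpaceNegPart hu lam
  have htouch := integral_mul_sub_le_neg_half_levyOp_of_touching hk hc.le (by linarith) hρ₁.pos hM'
    hv_anti (hA x) hx hxr hvx hmin
    (isBddMeasurable_mollify hρ hneg)
    (fun y => integral_nonneg fun z => mul_nonneg (hρ.nonneg _) (halfSpaceNegPart_nonneg _ _ _))
    (fun y hy => by
      have hfar : ε₁ ≤ dist y x₀ := by
        linarith [not_lt.1 (mem_ball.not.1 hy.2), hρ₁.pos]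
      rw [hopfBarrier_eq_zero hρ₁.pos hfar, mul_zero, sub_zero]
      exact neg_mollify_halfSpaceNegPart_le hρ hu hanti (le_of_lt hy.1))
    ((hρ₁.integrable.comp_sub_left xs).const_mul _)
    (fun y => mul_nonneg hJ (hρ₁.nonneg _))
    (mul_mollifier_le_indicator_sub_reflect hc hp hρ₁ hx₀ hxs hx hxr)
  simp only [mul_assoc _ (ρ₁ _), integral_const_mul] at htouch
  rw [hk.levyOp_mollify_sub_mul hρ hu hP2 hPc] at htouch
  have hlow := mul_le_mul_of_nonneg_left
    (le_integral_mul_mollify_sub_hopfBarrier (b := b) hρ hρ₁ hε hx₀ hxs hu hm) hJ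
  linarith

end TouchingHopfBarrier

section Comparison

variable {n : ℕ} [NeZero n] {lam c p C M A a δ b κ η ε ε₁ m₀ t : ℝ} {ρ ρ₁ u : Eucl n → ℝ}
  {w : Eucl n → ℝ → ℝ} {x x₀ xs : Eucl n}

/-- The negative part of `u` on the half-space, mollified, is of size `η` both near `x₀` and as seen
through the tail of the kernel; it measures how far `u` is from satisfying the sign condition of the
maximum principle. -/
structure IsNegPartSmall (lam : ℝ) (k : Eucl n → ℝ) (p C : ℝ) (ρ : Eucl n → ℝ) (x₀ : Eucl n)
    (r η : ℝ) (u : Eucl n → ℝ) : Prop where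
  mollify_le : ∀ y ∈ closedBall x₀ r, (C + 1) * mollify ρ (halfSpaceNegPart lam u) y ≤ η
  integral_le : 2 ^ p * ∫ y, mollify ρ (halfSpaceNegPart lam u) y * kernelTail k x₀ r y ≤ η

lemma IsNegPartSmall.neg_le_mollify {k : Eucl n → ℝ} {r : ℝ}
    (hsmall : IsNegPartSmall lam k p C ρ x₀ r η u) (hC : 0 ≤ C) (hρ : IsRadialMollifier ρ ε)
    (hu : IsBddMeasurable u M) (hanti : IsReflAntisymm lam u) (hx : lam ≤ x 0)
    (hxr : x ∈ closedBall x₀ r) : -η ≤ mollify ρ u x := by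
  have hneg : 0 ≤ mollify ρ (halfSpaceNegPart lam u) x :=
    integral_nonneg fun z => mul_nonneg (hρ.nonneg _) (halfSpaceNegPart_nonneg _ _ _)
  linarith [neg_mollify_halfSpaceNegPart_le hρ hu hanti hx, hsmall.mollify_le x hxr,
    mul_nonneg hC hneg]

/- If the minimum over the part of the ball at distance at least `2ε` from the hyperplane is at most
`-η`, it is a minimum over the whole half ball: closer to the hyperplane the barrier is at most
`2ε`, and away from the ball it vanishes. -/
lemma IsNegPartSmall.isMin_of_isMin_strip
    (hsmall : IsNegPartSmall lam (fracKernel c p) p C ρ x₀ (2 * ε₁) (η / 8) u)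
    (hC : 0 ≤ C) (hρ : IsRadialMollifier ρ ε) (hε₁ : 0 < ε₁) (hu : IsBddMeasurable u M)
    (hanti : IsReflAntisymm lam u) (hη : 0 < η) (hb : 0 ≤ b) (hbε : b * (2 * ε) ≤ η / 2)
    {m : ℝ} (hm : m ≤ -η)
    (hmin : ∀ y ∈ closedBall x₀ ε₁ ∩ {y : Eucl n | lam + 2 * ε ≤ y 0},
      m ≤ mollify ρ u y - b * hopfBarrier lam x₀ ε₁ y) :
    ∀ y ∈ halfSpace n lam ∩ ball x₀ (2 * ε₁), m ≤ mollify ρ u y - b * hopfBarrier lam x₀ ε₁ y := by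
  rintro y ⟨hylam, hyball⟩
  have hy0 : lam ≤ y 0 := le_of_lt hylam
  have hlow := hsmall.neg_le_mollify hC hρ hu hanti hy0 (ball_subset_closedBall hyball)
  by_cases hy₁ : dist y x₀ ≤ ε₁
  · by_cases hy₂ : lam + 2 * ε ≤ y 0
    · exact hmin y ⟨hy₁, hy₂⟩
    · have hP : b * hopfBarrier lam x₀ ε₁ y ≤ b * (2 * ε) :=
        mul_le_mul_of_nonneg_left (by linarith [hopfBarrier_le (x₀ := x₀) (r := ε₁) hy0]) hb
      linarith
  · rw [hopfBarrier_eq_zero hε₁ (not_le.1 hy₁).le, mul_zero]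
    linarith

lemma lt_neg_levyOp_sub_of_touching (hk : IsLevyKernel (fracKernel c p : Eucl n → ℝ))
    (hc : 0 < c) (hp : 1 ≤ p) (hC : 0 ≤ C) (hρ : IsRadialMollifier ρ ε)
    (hρ₁ : IsRadialMollifier ρ₁ ε₁) (hε : ε ≤ ε₁) (hx₀ : x₀ 0 = lam) (hxs : lam + 3 * ε₁ < xs 0)
    (hu : IsBddMeasurable u M) (hanti : IsReflAntisymm lam u)
    (hm : ∀ y ∈ closedBall xs ε₁, m₀ ≤ mollify ρ₁ u y)
    (hsmall : IsNegPartSmall lam (fracKernel c p) p C ρ x₀ (2 * ε₁) (η / 8) u) (hη : 0 < η)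
    (hA : |levyOp (fracKernel c p) (hopfBarrier lam x₀ ε₁) x| ≤ A * |x 0 - lam|)
    (hδ : 0 < δ) (hκ : κ * (A + C + 1 / δ) ≤ 2 * hopfDensity c p ε₁ ρ₁ x₀ xs * m₀)
    (hb : 0 ≤ b) (hbκ : b ≤ κ) (hx : lam + ε < x 0) (hxr : dist x x₀ ≤ ε₁)
    (hvx : mollify ρ u x - b * hopfBarrier lam x₀ ε₁ x ≤ 0)
    (hmin : ∀ y ∈ halfSpace n lam ∩ ball x₀ (2 * ε₁),
      mollify ρ u x - b * hopfBarrier lam x₀ ε₁ x ≤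
        mollify ρ u y - b * hopfBarrier lam x₀ ε₁ y) :
    κ / δ * hopfBarrier lam x₀ ε₁ x - η <
      -levyOp (fracKernel c p) (mollify ρ u) x - C * mollify ρ (fun y => |u y|) x := by
  have hd : 0 < x 0 - lam := by linarith [hρ.pos]
  have htouch := hopfDensity_mul_sub_le_neg_half_levyOp hk hc hp hρ hρ₁ hε hx₀ hxs hu hanti hm
    (by linarith) hxr hvx hmin
  have hκ0 : 0 ≤ κ := hb.trans hbκ
  have hbarrier : b * levyOp (fracKernel c p) (hopfBarrier lam x₀ ε₁) x ≤
      κ * (A * (x 0 - lam)) := by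
    rw [abs_of_pos hd] at hA
    exact (mul_le_mul_of_nonneg_left ((le_abs_self _).trans hA) hb).trans
      (mul_le_mul_of_nonneg_right hbκ ((abs_nonneg _).trans hA))
  have hP_le := hopfBarrier_le (x₀ := x₀) (r := ε₁) (by linarith : lam ≤ x 0)
  have hP_nonneg := hopfBarrier_nonneg (x₀ := x₀) (r := ε₁) (by linarith : lam ≤ x 0)
  have habs : C * mollify ρ (fun y => |u y|) x ≤ C * (κ * (x 0 - lam)) + η / 4 := by
    have hneg := hsmall.mollify_le x (closedBall_subset_closedBall (by linarith [hρ₁.pos]) hxr)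
    have hneg0 : 0 ≤ mollify ρ (halfSpaceNegPart lam u) x :=
      integral_nonneg fun z => mul_nonneg (hρ.nonneg _) (halfSpaceNegPart_nonneg _ _ _)
    have hmass : mollify ρ (fun y => |u y|) x ≤
        κ * (x 0 - lam) + 2 * mollify ρ (halfSpaceNegPart lam u) x := by
      linarith [mollify_abs_le_add hρ hu hx, mul_le_mul hbκ hP_le hP_nonneg hκ0]
    linarith [mul_le_mul_of_nonneg_left hmass hC]
  have htime : κ / δ * hopfBarrier lam x₀ ε₁ x ≤ κ * (1 / δ) * (x 0 - lam) := by
    rw [mul_one_div]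
    exact mul_le_mul_of_nonneg_left hP_le (div_nonneg hκ0 hδ.le)
  linarith [mul_le_mul_of_nonneg_right hκ hd.le, hsmall.integral_le]

lemma IsSolution.eventually_exists_hasDerivWithinAt_pos
    (h : IsSolution (halfSpace n lam) (fracKernel c p) C M w) (hρ : IsRadialMollifier ρ ε)
    (hx : lam + ε < x 0) (ht : 0 < t) {s P : ℝ}
    (hs : s * P - η <
      -levyOp (fracKernel c p) (mollify ρ fun y => w y t) x - C * mollify ρ (fun y => |w y t|) x) :
    ∀ᶠ τ in 𝓝[<] t, ∃ d > 0, HasDerivWithinAt (fun τ => mollify ρ (fun y => w y τ) x -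
      s * (τ - a) * P + η * (1 + (τ - a))) d (Ici τ) τ := by
  have hcont : ContinuousAt (fun τ => -levyOp (fracKernel c p) (mollify ρ fun y => w y τ) x -
      C * mollify ρ (fun y => |w y τ|) x) t :=
    (((h.continuousOn_levyOp_mollify h.kernel hρ x).neg.sub
      ((h.toIsBddEvolution.abs.continuousOn_mollify_time hρ x).const_mul C)).continuousAt
        (Ioi_mem_nhds ht))
  filter_upwards [nhdsWithin_le_nhds (hcont.eventually (lt_mem_nhds hs)),
    nhdsWithin_le_nhds (Ioi_mem_nhds ht)] with τ hτ hτ0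
  obtain ⟨d, hd, hle⟩ := h.exists_hasDerivWithinAt_mollify hρ hx hτ0
  have hlin : HasDerivWithinAt (fun τ => τ - a) 1 (Ici τ) τ := (hasDerivWithinAt_id τ _).sub_const a
  refine ⟨d - s * 1 * P + η * 1, ?_, (hd.fun_sub ((hlin.const_mul s).mul_const P)).fun_add
    ((hlin.const_add 1).const_mul η)⟩
  linarith [(abs_le.1 hle).1]

/- Comparison with the growing barrier `κ (t - a) / δ * hopfBarrier - η (1 + (t - a))`. -/
lemma IsSolution.mul_hopfBarrier_sub_lt_mollify
    (h : IsSolution (halfSpace n lam) (fracKernel c p) C M w) (hc : 0 < c) (hp : 1 ≤ p)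
    (hanti : ∀ t > 0, IsReflAntisymm lam fun y => w y t)
    (hρ : IsRadialMollifier ρ ε) (hρ₁ : IsRadialMollifier ρ₁ ε₁) (hε : ε ≤ ε₁) (hx₀ : x₀ 0 = lam)
    (hxs : lam + 3 * ε₁ < xs 0) (ha : 0 < a) (hδ : 0 < δ) (hκ : 0 < κ) (hη : 0 < η)
    (hm : ∀ t ∈ Icc a (a + δ), ∀ y ∈ closedBall xs ε₁, m₀ ≤ mollify ρ₁ (fun y => w y t) y)
    (hA : ∀ x, |levyOp (fracKernel c p) (hopfBarrier lam x₀ ε₁) x| ≤ A * |x 0 - lam|)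
    (hsmall : ∀ t ∈ Icc a (a + δ),
      IsNegPartSmall lam (fracKernel c p) p C ρ x₀ (2 * ε₁) (η / 8) fun y => w y t)
    (hκε : κ * (2 * ε) ≤ η / 2)
    (hκA : κ * (A + C + 1 / δ) ≤ 2 * hopfDensity c p ε₁ ρ₁ x₀ xs * m₀)
    (hx : dist x x₀ ≤ ε₁) (hxε : lam + 2 * ε ≤ x 0) :
    κ * hopfBarrier lam x₀ ε₁ x - η * (1 + δ) < mollify ρ (fun y => w y (a + δ)) x := by
  have hε0 := hρ.pos
  have hpos : ∀ t ∈ Icc a (a + δ), 0 < t := fun t ht => ha.trans_le ht.1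
  have hcompact : IsCompact (closedBall x₀ ε₁ ∩ {y : Eucl n | lam + 2 * ε ≤ y 0}) :=
    (isCompact_closedBall x₀ ε₁).inter_right (isClosed_le continuous_const (by fun_prop))
  suffices key : ∀ y ∈ closedBall x₀ ε₁ ∩ {y : Eucl n | lam + 2 * ε ≤ y 0}, ∀ t ∈ Icc a (a + δ),
      0 < mollify ρ (fun z => w z t) y - κ / δ * (t - a) * hopfBarrier lam x₀ ε₁ y +
        η * (1 + (t - a)) by
    have hend := key x ⟨hx, hxε⟩ (a + δ) (right_mem_Icc.2 (by linarith))
    rw [add_sub_cancel_left, div_mul_cancel₀ _ hδ.ne'] at hend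
    linarith
  refine pos_of_forall_first_touch hcompact ?_ (fun y hy => ?_) fun y hy t ht htouch hmin => ?_
  · have hP := (contDiff_hopfBarrier lam x₀ ε₁).continuous
    refine (((h.continuousOn_mollify hρ).mono fun q hq => ⟨mem_univ _, hpos _ hq.2⟩).sub ?_).add ?_
    · exact Continuous.continuousOn (by fun_prop)
    · exact Continuous.continuousOn (by fun_prop)
  · have hlow := (hsmall a (left_mem_Icc.2 (by linarith))).neg_le_mollify h.C_nonneg hρ
      (h.slice a ha) (hanti a ha) (x := y) (by linarith [hy.2.out])
      (closedBall_subset_closedBall (by linarith [hρ₁.pos]) hy.1)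
    rw [sub_self]
    linarith
  · have htI : t ∈ Icc a (a + δ) := Ioc_subset_Icc_self ht
    have hta : 0 < t - a := sub_pos.2 ht.1
    have hslope0 : 0 ≤ κ / δ * (t - a) := by positivity
    have hslope : κ / δ * (t - a) ≤ κ := by
      rw [div_mul_eq_mul_div, div_le_iff₀ hδ]
      exact mul_le_mul_of_nonneg_left (by linarith [ht.2]) hκ.le
    have hyx := hy.2.out
    have hηt : 0 ≤ η * (t - a) := by positivity
    refine h.eventually_exists_hasDerivWithinAt_pos hρ (by linarith) (hpos t htI)
      (lt_neg_levyOp_sub_of_touching h.kernel hc hp h.C_nonneg hρ hρ₁ hε hx₀ hxs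
        (h.slice t (hpos t htI)) (hanti t (hpos t htI)) (hm t htI) (hsmall t htI) hη (hA y) hδ hκA
        hslope0 hslope (by linarith) hy.1 (by linarith) ?_)
    refine (hsmall t htI).isMin_of_isMin_strip h.C_nonneg hρ hρ₁.pos (h.slice t (hpos t htI))
      (hanti t (hpos t htI)) hη hslope0
      ((mul_le_mul_of_nonneg_right hslope (by linarith)).trans hκε) (by linarith) fun z hz => ?_
    linarith [hmin z hz]

end Comparison

section Limit

lemma eventually_forall_mollify_le {E ι : Type*} [NormedAddCommGroup E] [InnerProductSpace ℝ E]
    [FiniteDimensional ℝ E] [MeasurableSpace E] [BorelSpace E] {l : Filter ι} {v : ι → E → ℝ}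
    {ψ : E → ℝ} {Ω : Set E} {x : E} {M η : ℝ} (hv : ∀ᶠ j in l, IsBddMeasurable (v j) M)
    (hconv : TendstoUniformlyOn v ψ l Ω) (hΩ : Ω ∈ 𝓝 x) (hψ : ContinuousAt ψ x) (hη : 0 < η) :
    ∀ᶠ ε in 𝓝[>] (0 : ℝ), ∀ ρ, IsRadialMollifier ρ ε →
      ∀ᶠ j in l, mollify ρ (v j) x ≤ ψ x + η := by
  obtain ⟨d, hd, hball⟩ := Metric.eventually_nhds_iff_ball.1
    ((hψ.eventually (gt_mem_nhds (lt_add_of_pos_right (ψ x) (half_pos hη)))).and hΩ)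
  filter_upwards [Ioc_mem_nhdsGT hd] with ε hε ρ hρ
  filter_upwards [hv, Metric.tendstoUniformlyOn_iff.1 hconv (η / 2) (half_pos hη)] with j hj hclose
  have hle : -(ψ x + η) ≤ mollify ρ (fun y => -v j y) x := by
    refine le_mollify hρ (integrable_mollify hρ hj.neg x) fun y hy => ?_
    obtain ⟨hψy, hyΩ⟩ := hball (x - y) (by
      rw [mem_ball, dist_eq_norm, sub_sub_cancel_left, norm_neg]; exact hy.trans_le hε.2)
    have hdist := hclose _ hyΩ
    rw [Real.dist_eq] at hdist
    linarith [(abs_lt.1 hdist).1]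
  rw [mollify_neg] at hle
  linarith

variable {n : ℕ} [NeZero n] {lam c p C M A δ κ η ε ε₁ m₀ : ℝ} {k ρ ρ₁ ψ : Eucl n → ℝ}
  {w : Eucl n → ℝ → ℝ} {x x₀ xs : Eucl n} {tk : ℕ → ℝ}

lemma tendsto_halfSpaceNegPart
    (hliminf : ∀ x ∈ halfSpace n lam, ∀ ε > 0, ∀ᶠ t in atTop, -ε ≤ w x t) (x : Eucl n) :
    Tendsto (fun t => halfSpaceNegPart lam (fun y => w y t) x) atTop (𝓝 0) := by
  rcases lt_or_ge lam (x 0) with hx | hx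
  · simp only [halfSpaceNegPart_of_mem _ hx]
    rw [Metric.tendsto_nhds]
    intro η hη
    filter_upwards [hliminf x hx (η / 2) (half_pos hη)] with t ht
    rw [Real.dist_0_eq_abs, abs_of_nonneg (negPart_nonneg _)]
    exact max_lt (by linarith) hη
  · simp only [halfSpaceNegPart_of_le _ hx, tendsto_const_nhds]

lemma IsBddEvolution.eventually_isNegPartSmall (hw : IsBddEvolution w M) (hk : IsLevyKernel k)
    (hC : 0 ≤ C) (hliminf : ∀ x ∈ halfSpace n lam, ∀ ε > 0, ∀ᶠ t in atTop, -ε ≤ w x t)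
    (hρ : IsRadialMollifier ρ ε) (p : ℝ) (x₀ : Eucl n) {r : ℝ} (hr : 0 < r) (hη : 0 < η) :
    ∀ᶠ t in atTop, IsNegPartSmall lam k p C ρ x₀ r η fun y => w y t := by
  have hbdd : ∀ᶠ t in atTop, IsBddMeasurable (halfSpaceNegPart lam fun y => w y t) M :=
    (eventually_gt_atTop 0).mono fun t ht => isBddMeasurable_halfSpaceNegPart (hw.slice t ht) lam
  have hlim := tendsto_halfSpaceNegPart hliminf
  have hC1 : 0 < C + 1 := by linarith
  have htail := (tendsto_integral_mollify_mul_zero hρ hbdd hlim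
    (hk.integrable_kernelTail x₀ hr)).const_mul (2 ^ p)
  rw [mul_zero] at htail
  filter_upwards [htail.eventually_le_const hη, eventually_forall_mem_closedBall_mollify_le hρ hbdd
    (fun t => halfSpaceNegPart_nonneg lam _) hlim x₀ r (div_pos hη hC1)] with t htail_le hsup
  exact ⟨fun y hy => (le_div_iff₀' hC1).1 (hsup y hy), htail_le⟩

lemma IsSolution.mul_hopfBarrier_le_limit
    (h : IsSolution (halfSpace n lam) (fracKernel c p) C M w) (hc : 0 < c) (hp : 1 ≤ p)
    (hanti : ∀ t > 0, IsReflAntisymm lam fun y => w y t)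
    (hliminf : ∀ x ∈ halfSpace n lam, ∀ ε > 0, ∀ᶠ t in atTop, -ε ≤ w x t)
    (htk : Tendsto tk atTop atTop)
    (hconv : TendstoUniformlyOn (fun j y => w y (tk j)) ψ atTop (halfSpace n lam))
    (hρ₁ : IsRadialMollifier ρ₁ ε₁) (hx₀ : x₀ 0 = lam) (hxs : lam + 3 * ε₁ < xs 0)
    (hδ : 0 < δ) (hκ : 0 < κ)
    (hm : ∀ᶠ j in atTop, δ < tk j ∧ ∀ t ∈ Icc (tk j - δ) (tk j), ∀ y ∈ closedBall xs ε₁,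
      m₀ ≤ mollify ρ₁ (fun z => w z t) y)
    (hA : ∀ x, |levyOp (fracKernel c p) (hopfBarrier lam x₀ ε₁) x| ≤ A * |x 0 - lam|)
    (hκA : κ * (A + C + 1 / δ) ≤ 2 * hopfDensity c p ε₁ ρ₁ x₀ xs * m₀)
    (hx : x ∈ halfSpace n lam) (hxr : dist x x₀ ≤ ε₁) :
    κ * hopfBarrier lam x₀ ε₁ x ≤ ψ x := by
  refine le_of_forall_pos_le_add fun e he => ?_
  obtain ⟨η, hη, hηe⟩ : ∃ η > 0, η * (2 + δ) = e :=
    ⟨e / (2 + δ), by positivity, div_mul_cancel₀ _ (by positivity)⟩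
  have hψ := (h.continuousOn_of_tendstoUniformlyOn htk hconv).continuousAt
    (isOpen_halfSpace.mem_nhds hx)
  have hbdd : ∀ᶠ j in atTop, IsBddMeasurable (fun y => w y (tk j)) M :=
    (htk.eventually_gt_atTop 0).mono fun j hj => h.slice _ hj
  have hx' : 0 < (x 0 - lam) / 2 := half_pos (sub_pos.2 hx)
  have hη' : 0 < η / (4 * κ) := by positivity
  obtain ⟨ε, hle_limit, hεη, hεx, hεε₁⟩ := ((eventually_forall_mollify_le hbdd hconv
    (isOpen_halfSpace.mem_nhds hx) hψ hη).and (inter_mem (Ioc_mem_nhdsGT hη')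
      (inter_mem (Ioc_mem_nhdsGT hx') (Ioc_mem_nhdsGT hρ₁.pos)))).exists
  obtain ⟨ρ, hρ⟩ := exists_isRadialMollifier (E := Eucl n) hεη.1
  obtain ⟨T, hT⟩ := eventually_atTop.1 (h.toIsBddEvolution.eventually_isNegPartSmall h.kernel
    h.C_nonneg hliminf hρ p x₀ (mul_pos two_pos hρ₁.pos) (by positivity : 0 < η / 8))
  obtain ⟨j, ⟨hδj, hmj⟩, hlimit, hTj⟩ := (hm.and ((hle_limit ρ hρ).and
    (htk.eventually_ge_atTop (T + δ)))).exists
  have hκε : κ * (2 * ε) ≤ η / 2 := by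
    have := (le_div_iff₀ (by positivity)).1 hεη.2
    linarith
  have hcompare := h.mul_hopfBarrier_sub_lt_mollify hc hp hanti hρ hρ₁ hεε₁.2 hx₀ hxs
    (sub_pos.2 hδj) hδ hκ hη (by rwa [sub_add_cancel]) hA
    (fun t ht => hT t (by linarith [ht.1])) hκε hκA hxr (by linarith [hεx.2])
  rw [sub_add_cancel] at hcompare
  linarith

theorem IsSolution.exists_mul_coord_sub_le_limit
    (h : IsSolution (halfSpace n lam) (fracKernel c p) C M w) (hc : 0 < c) (hp : 1 ≤ p)
    (hanti : ∀ t > 0, IsReflAntisymm lam fun y => w y t)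
    (hliminf : ∀ x ∈ halfSpace n lam, ∀ ε > 0, ∀ᶠ t in atTop, -ε ≤ w x t)
    (htk : Tendsto tk atTop atTop)
    (hconv : TendstoUniformlyOn (fun j y => w y (tk j)) ψ atTop (halfSpace n lam))
    (hxs : xs ∈ halfSpace n lam) (hpos : 0 < ψ xs) (hx₀ : x₀ 0 = lam) :
    ∃ κ > 0, ∃ r > 0, ∀ x ∈ halfSpace n lam, dist x x₀ ≤ r → κ * (x 0 - lam) ≤ ψ x := by
  obtain ⟨ε₁, ρ₁, m₀, δ, hρ₁, hm₀, hδ, hxs_far, hm⟩ := h.exists_le_mollify_near htk hconv hxs hpos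
  have hε₁ := hρ₁.pos
  obtain ⟨A, hA, hbarrier⟩ := h.kernel.exists_abs_levyOp_le_mul_abs_coord_sub
    (fun z => by rw [fracKernel, norm_reflect_zero, fracKernel])
    (contDiff_hopfBarrier lam x₀ ε₁) (hasCompactSupport_hopfBarrier lam x₀ hε₁)
    (isReflAntisymm_hopfBarrier hx₀)
  have hdensity := hopfDensity_pos (p := p) hc hρ₁ x₀ xs
  have hden : 0 < A + C + 1 / δ :=
    add_pos_of_nonneg_of_pos (add_nonneg hA h.C_nonneg) (by positivity)
  have hκ : 0 < 2 * hopfDensity c p ε₁ ρ₁ x₀ xs * m₀ / (A + C + 1 / δ) := by positivity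
  refine ⟨_, hκ, ε₁ / 2, half_pos hε₁, fun x hx hxr => ?_⟩
  rw [← hopfBarrier_eq_coord_sub hε₁ hxr]
  exact h.mul_hopfBarrier_le_limit hc hp hanti hliminf htk hconv hρ₁ hx₀ hxs_far hδ hκ hm hbarrier
    (div_mul_cancel₀ _ hden.ne').le hx (by linarith)

end Limit

section PrincipalValue

variable {E : Type*} [NormedAddCommGroup E] [InnerProductSpace ℝ E] [FiniteDimensional ℝ E]
  [MeasurableSpace E] [BorelSpace E] {k v : E → ℝ} {x : E} {A M ε : ℝ}

lemma IsLevyKernel.integrableOn_lt_norm (hk : IsLevyKernel k) (hε : 0 < ε) :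
    IntegrableOn k {z | ε < ‖z‖} := by
  have htail := (integrable_indicator_iff measurableSet_ball.compl).1
    (hk.integrable_kernelTail 0 hε)
  simp only [sub_zero] at htail
  exact htail.mono_set fun z hz => mt mem_ball_zero_iff.1 (not_lt.2 hz.out.le)

lemma IsLevyKernel.setIntegral_lt_dist_eq (hk : IsLevyKernel k) (heven : ∀ z, k (-z) = k z)
    (hv : IsBddMeasurable v M) (hε : 0 < ε) :
    ∫ y in {y | ε < dist x y}, (v x - v y) * k (y - x) =
      (∫ z in {z | ε < ‖z‖}, secondDiff v x z * k z) / 2 := by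
  have hint : ∀ u : E → ℝ, IsBddMeasurable u M →
      IntegrableOn (fun z => (v x - u z) * k z) {z | ε < ‖z‖} := fun u hu =>
    (hk.integrableOn_lt_norm hε).bdd_mul (c := M + M)
      (measurable_const.sub hu.measurable).aestronglyMeasurable
      (ae_of_all _ fun z => (abs_sub _ _).trans (add_le_add (hv.abs_le _) (hu.abs_le _)))
  have htranslate : ∫ y in {y | ε < dist x y}, (v x - v y) * k (y - x) =
      ∫ z in {z | ε < ‖z‖}, (v x - v (x + z)) * k z := by
    rw [← (measurePreserving_add_left volume x).setIntegral_preimage_emb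
      (measurableEmbedding_addLeft x)]
    simp only [preimage_ofPred_eq, dist_self_add_right, add_sub_cancel_left]
  have hreflect : ∫ z in {z | ε < ‖z‖}, (v x - v (x - z)) * k z =
      ∫ z in {z | ε < ‖z‖}, (v x - v (x + z)) * k z := by
    rw [← (Measure.measurePreserving_neg volume).setIntegral_preimage_emb
      (MeasurableEquiv.neg E).measurableEmbedding]
    simp only [preimage_ofPred_eq, norm_neg, sub_neg_eq_add, heven]
  have hsum : ∫ z in {z | ε < ‖z‖}, secondDiff v x z * k z =
      (∫ z in {z | ε < ‖z‖}, (v x - v (x + z)) * k z) +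
        ∫ z in {z | ε < ‖z‖}, (v x - v (x - z)) * k z := by
    rw [← integral_add (hint (fun z => v (x + z)) (hv.comp (by fun_prop)))
      (hint (fun z => v (x - z)) (hv.comp (by fun_prop)))]
    exact integral_congr_ae (ae_of_all _ fun z => by simp only [secondDiff]; ring)
  rw [htranslate, hsum, hreflect]
  ring

lemma IsLevyKernel.tendsto_setIntegral_lt_dist [Nontrivial E] (hk : IsLevyKernel k)
    (heven : ∀ z, k (-z) = k z) (hv : IsBddMeasurable v M)
    (hA : ∀ z, |secondDiff v x z| ≤ A * levyWeight z) :
    Tendsto (fun ε => ∫ y in {y | ε < dist x y}, (v x - v y) * k (y - x)) (𝓝[>] 0)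
      (𝓝 (levyOp k v x / 2)) := by
  have hcover : AECover (volume : Measure E) (𝓝[>] (0 : ℝ)) fun ε => {z | ε < ‖z‖} :=
    ⟨by
      have hne : ∀ᵐ z : E, z ≠ 0 := compl_mem_ae_iff.2 (measure_singleton 0)
      filter_upwards [hne] with z hz
      exact mem_nhdsWithin_of_mem_nhds (gt_mem_nhds (norm_pos_iff.2 hz)),
    fun _ => measurableSet_lt measurable_const measurable_norm⟩
  refine ((hcover.integral_tendsto_of_countably_generated
    (hk.integrable_secondDiff_mul hv.measurable hA)).div_const 2).congr' ?_
  filter_upwards [self_mem_nhdsWithin] with ε hε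
  exact (hk.setIntegral_lt_dist_eq heven hv hε).symm

end PrincipalValue

section FractionalLaplacian

variable {n : ℕ} {Ω S : Set (Eucl n)} {Cns s L M A : ℝ} {u v : Eucl n → ℝ} {x : Eucl n}

lemma IsFracLap.congr_ae (hu : IsFracLap Cns s u x L) (huv : u =ᵐ[volume] v) (hx : u x = v x) :
    IsFracLap Cns s v x L :=
  hu.congr fun ε => by
    rw [hx]
    congr 1
    refine integral_congr_ae (ae_restrict_of_ae ?_)
    filter_upwards [huv] with y hy
    rw [hy]

lemma IsFracLap.eq_levyOp [NeZero n]
    (hL : IsFracLap Cns s v x L)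
    (hk : IsLevyKernel (fracKernel (Cns / 2) (n + 2 * s) : Eucl n → ℝ))
    (hv : IsBddMeasurable v M) (hA : ∀ z, |secondDiff v x z| ≤ A * levyWeight z) :
    L = levyOp (fracKernel (Cns / 2) (n + 2 * s)) v x := by
  have hlim := (hk.tendsto_setIntegral_lt_dist (fracKernel_neg _ _) hv hA).const_mul 2
  rw [mul_div_cancel₀ _ two_ne_zero] at hlim
  refine tendsto_nhds_unique (hL.congr fun ε => ?_) hlim
  rw [← integral_const_mul, ← integral_const_mul]
  congr 1 with y
  rw [fracKernel, ← dist_eq_norm, dist_comm y x]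
  ring

lemma C11loc.congr (hu : C11loc Ω u) (huv : EqOn v u Ω) : C11loc Ω v := by
  intro x hx
  obtain ⟨r, hr, hΩ, hd, K, hK⟩ := hu x hx
  have hfderiv : EqOn (fderiv ℝ v) (fderiv ℝ u) (ball x r) := fun y hy =>
    (huv.mono hΩ |>.eventuallyEq_of_mem (isOpen_ball.mem_nhds hy)).fderiv_eq
  exact ⟨r, hr, hΩ, hd.congr (huv.mono hΩ), K, fun y hy z hz => by
    rw [hfderiv hy, hfderiv hz]; exact hK hy hz⟩

lemma C11loc.continuousAt (hv : C11loc Ω v) (hx : x ∈ Ω) : ContinuousAt v x := by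
  obtain ⟨r, hr, -, hd, -⟩ := hv x hx
  exact (hd.differentiableAt (ball_mem_nhds x hr)).continuousAt

lemma C11loc.exists_eventually_abs_secondDiff_le (hv : C11loc Ω v) (hM : ∀ x, |v x| ≤ M)
    (hx : x ∈ Ω) : ∃ N, 0 ≤ N ∧ ∀ᶠ y in 𝓝 x, ∀ z, |secondDiff v y z| ≤ N * ‖z‖ ^ 2 := by
  obtain ⟨r, hr, -, hd, K, hK⟩ := hv x hx
  refine ⟨max (2 * (K : ℝ)) (4 * M / (r / 2) ^ 2), le_max_of_le_left (by positivity),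
    mem_of_superset (ball_mem_nhds x (half_pos hr)) fun y hy z => ?_⟩
  have hsub : ball y (r / 2) ⊆ ball x r :=
    ball_subset_ball' (by linarith [mem_ball.1 hy])
  rcases lt_or_ge ‖z‖ (r / 2) with hz | hz
  · exact (abs_secondDiff_le_of_lipschitzOnWith_fderiv (hd.mono hsub) (hK.mono hsub) hz).trans
      (mul_le_mul_of_nonneg_right (le_max_left _ _) (sq_nonneg _))
  · have : 0 ≤ M := (abs_nonneg _).trans (hM 0)
    calc |secondDiff v y z| ≤ 4 * M := abs_secondDiff_le_of_bdd hM y z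
      _ = 4 * M / (r / 2) ^ 2 * (r / 2) ^ 2 := by field_simp
      _ ≤ max (2 * (K : ℝ)) (4 * M / (r / 2) ^ 2) * ‖z‖ ^ 2 := by
        gcongr
        exact le_max_right _ _

lemma C11loc.exists_abs_secondDiff_le (hv : C11loc Ω v) (hM : ∀ x, |v x| ≤ M)
    (hSΩ : S ⊆ Ω) (hS : IsCompact S) :
    ∃ N, 0 ≤ N ∧ ∀ x ∈ S, ∀ z, |secondDiff v x z| ≤ N * levyWeight z := by
  suffices hquad : ∃ N, 0 ≤ N ∧ ∀ x ∈ S, ∀ z, |secondDiff v x z| ≤ N * ‖z‖ ^ 2 by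
    obtain ⟨N, hN, hle⟩ := hquad
    exact ⟨_, le_max_of_le_left hN, fun x hx z => abs_secondDiff_le_levyWeight hM (hle x hx z)⟩
  refine hS.induction_on (p := fun S => ∃ N, 0 ≤ N ∧ ∀ x ∈ S, ∀ z, |secondDiff v x z| ≤ N * ‖z‖ ^ 2)
    ⟨0, le_rfl, fun _ hx => hx.elim⟩
    (fun _ _ hsub ⟨N, hN, hle⟩ => ⟨N, hN, fun x hx => hle x (hsub hx)⟩) ?_ fun x hx => ?_
  · rintro S S' ⟨N, hN, hle⟩ ⟨N', -, hle'⟩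
    refine ⟨max N N', le_max_of_le_left hN, ?_⟩
    rintro x (hx | hx) z
    · exact (hle x hx z).trans (by gcongr; exact le_max_left _ _)
    · exact (hle' x hx z).trans (by gcongr; exact le_max_right _ _)
  · obtain ⟨N, hN, hle⟩ := hv.exists_eventually_abs_secondDiff_le hM (hSΩ hx)
    exact ⟨_, mem_nhdsWithin_of_mem_nhds hle, N, hN, fun _ hy => hy⟩

lemma ae_apply_zero_ne [NeZero n] (lam : ℝ) : ∀ᵐ x : Eucl n, x 0 ≠ lam :=
  (PiLp.volume_preserving_ofLp (Fin n)).quasiMeasurePreserving.ae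
    (Measure.ae_eval_ne (fun _ => volume) 0 lam)

end FractionalLaplacian

section ZeroOnHyperplane

variable {n : ℕ} [NeZero n] {lam s Cns C M : ℝ} {v : Eucl n → ℝ} {x : Eucl n}

lemma IsReflAntisymm.measurable (hv : IsReflAntisymm lam v)
    (hcont : ContinuousOn v (halfSpace n lam)) : Measurable v := by
  classical
  have hind : Measurable ((halfSpace n lam).indicator v) := by
    rw [← piecewise_eq_indicator]
    exact hcont.measurable_piecewise continuousOn_const isOpen_halfSpace.measurableSet
  convert hind.sub (hind.comp (measurePreserving_reflect (lam := lam)).measurable) using 1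
  ext x
  simp only [Pi.sub_apply, Function.comp_apply, indicator_apply, halfSpace, mem_ofPred_eq,
    reflect_apply_zero, hv x]
  rcases lt_trichotomy (x 0) lam with hx | hx | hx
  · rw [if_neg hx.not_gt, if_pos (by linarith)]; ring
  · rw [if_neg hx.not_gt, if_neg (by linarith), hv.eq_zero hx, sub_zero]
  · rw [if_pos hx, if_neg (by linarith), sub_zero]

/-- `v` with its values on the hyperplane `{x₁ = λ}` replaced by zero. An antisymmetry relation
required only on `Σ̃_λ` says nothing about `v` there, while antisymmetry on `ℝⁿ` forces zero. -/
def zeroOnHyperplane (lam : ℝ) (v : Eucl n → ℝ) : Eucl n → ℝ := {x | x 0 ≠ lam}.indicator v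

lemma zeroOnHyperplane_of_ne (v : Eucl n → ℝ) (hx : x 0 ≠ lam) : zeroOnHyperplane lam v x = v x :=
  indicator_of_mem (s := {x : Eucl n | x 0 ≠ lam}) hx v

lemma eqOn_zeroOnHyperplane (v : Eucl n → ℝ) :
    EqOn (zeroOnHyperplane lam v) v (halfSpace n lam) := fun _ hx =>
  zeroOnHyperplane_of_ne v hx.out.ne'

lemma ae_eq_zeroOnHyperplane (lam : ℝ) (v : Eucl n → ℝ) :
    v =ᵐ[volume] zeroOnHyperplane lam v := by
  filter_upwards [ae_apply_zero_ne lam] with x hx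
  exact (zeroOnHyperplane_of_ne v hx).symm

lemma isReflAntisymm_zeroOnHyperplane
    (hv : ∀ x ∈ halfSpace n lam, v (reflect lam x) = -v x) :
    IsReflAntisymm lam (zeroOnHyperplane lam v) := fun x => by
  rcases lt_trichotomy (x 0) lam with hx | hx | hx
  · have hmem := reflect_mem_halfSpace hx
    have hanti := hv _ hmem
    rw [reflect_reflect] at hanti
    rw [eqOn_zeroOnHyperplane v hmem, zeroOnHyperplane_of_ne v hx.ne, hanti, neg_neg]
  · have hzero : zeroOnHyperplane lam v x = 0 := indicator_of_notMem (not_not.2 hx) v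
    rw [reflect_of_apply_zero_eq hx, hzero, neg_zero]
  · rw [zeroOnHyperplane_of_ne v hx.ne', zeroOnHyperplane_of_ne v, hv x hx]
    rw [reflect_apply_zero]; linarith

lemma isBddMeasurable_zeroOnHyperplane (hreg : C11loc (halfSpace n lam) v) (hM : ∀ x, |v x| ≤ M)
    (hanti : ∀ x ∈ halfSpace n lam, v (reflect lam x) = -v x) :
    IsBddMeasurable (zeroOnHyperplane lam v) M where
  measurable := (isReflAntisymm_zeroOnHyperplane hanti).measurable fun _ hx =>
    ((hreg.congr (eqOn_zeroOnHyperplane v)).continuousAt hx).continuousWithinAt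
  abs_le x := (norm_indicator_le_norm_self v x).trans (hM x)

lemma eventually_le_div_of_mul_coord_sub_le {κ r : ℝ} {x₀ : Eucl n} (hr : 0 < r) (hx₀ : x₀ 0 = lam)
    (hv : ∀ x ∈ halfSpace n lam, dist x x₀ ≤ r → κ * (x 0 - lam) ≤ v x) :
    ∀ᶠ h in 𝓝[>] (0 : ℝ), κ ≤ v (x₀ + h • EuclideanSpace.single (0 : Fin n) (1 : ℝ)) / h := by
  filter_upwards [Ioc_mem_nhdsGT hr] with h hh
  have hcoord : (x₀ + h • EuclideanSpace.single (0 : Fin n) (1 : ℝ)) 0 = lam + h := by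
    simp [hx₀]
  have hdist : dist (x₀ + h • EuclideanSpace.single (0 : Fin n) (1 : ℝ)) x₀ = h := by
    simp [norm_smul, abs_of_pos hh.1]
  have hmem : x₀ + h • EuclideanSpace.single (0 : Fin n) (1 : ℝ) ∈ halfSpace n lam :=
    (lt_add_of_pos_right lam hh.1).trans_eq hcoord.symm
  have hle := hv _ hmem (hdist.trans_le hh.2)
  rwa [hcoord, add_sub_cancel_left, ← le_div_iff₀ hh.1] at hle

variable {w Lw c : Eucl n → ℝ → ℝ}

lemma isBddEvolution_zeroOnHyperplane
    (hreg : ∀ t > 0, C11loc (halfSpace n lam) fun x => w x t)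
    (htime : ∀ x ∈ halfSpace n lam, ContDiffOn ℝ 1 (w x) (Ioi 0))
    (hM : ∀ x, ∀ t > 0, |w x t| ≤ M)
    (hanti : ∀ x ∈ halfSpace n lam, ∀ t > 0, w (reflect lam x) t = -w x t) :
    IsBddEvolution (fun x t => zeroOnHyperplane lam (fun y => w y t) x) M where
  slice t ht := isBddMeasurable_zeroOnHyperplane (hreg t ht) (fun x => hM x t ht)
    fun x hx => hanti x hx t ht
  continuousOn x := by
    have hanti' : ∀ t > 0, IsReflAntisymm lam (zeroOnHyperplane lam fun y => w y t) :=
      fun t ht => isReflAntisymm_zeroOnHyperplane fun x hx => hanti x hx t ht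
    rcases lt_trichotomy (x 0) lam with hx | hx | hx
    · have hmem := reflect_mem_halfSpace hx
      refine (htime _ hmem).continuousOn.neg.congr fun t ht => ?_
      have hval := eqOn_zeroOnHyperplane (fun y => w y t) hmem
      rw [hanti' t ht] at hval
      exact neg_eq_iff_eq_neg.1 hval
    · exact continuousOn_const.congr fun t ht => (hanti' t ht).eq_zero hx
    · exact (htime x hx).continuousOn.congr fun t _ => eqOn_zeroOnHyperplane (fun y => w y t) hx

lemma isSolution_zeroOnHyperplane (hs : 0 < s) (hs1 : s < 1) (hCns : 0 < Cns)
    (hreg : ∀ t > 0, C11loc (halfSpace n lam) fun x => w x t)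
    (htime : ∀ x ∈ halfSpace n lam, ContDiffOn ℝ 1 (w x) (Ioi 0))
    (hM : ∀ x, ∀ t > 0, |w x t| ≤ M)
    (hC : ∀ x ∈ halfSpace n lam, ∀ t > 0, |c x t| ≤ C)
    (hLw : ∀ x ∈ halfSpace n lam, ∀ t > 0, IsFracLap Cns s (fun y => w y t) x (Lw x t))
    (heq : ∀ x ∈ halfSpace n lam, ∀ t > 0, deriv (w x) t + Lw x t = c x t * w x t)
    (hanti : ∀ x ∈ halfSpace n lam, ∀ t > 0, w (reflect lam x) t = -w x t) :
    IsSolution (halfSpace n lam) (fracKernel (Cns / 2) (n + 2 * s)) |C| M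
      (fun x t => zeroOnHyperplane lam (fun y => w y t) x) := by
  have hbdd := isBddEvolution_zeroOnHyperplane hreg htime hM hanti
  have hk : IsLevyKernel (fracKernel (Cns / 2) (n + 2 * s) : Eucl n → ℝ) :=
    isLevyKernel_fracKernel (half_pos hCns).le (by rw [finrank_euclideanSpace_fin]; linarith)
      (by rw [finrank_euclideanSpace_fin]; linarith)
  have hslice : ∀ x ∈ halfSpace n lam,
      (fun t => zeroOnHyperplane lam (fun y => w y t) x) = w x := fun x hx =>
    funext fun t => eqOn_zeroOnHyperplane (fun y => w y t) hx
  have hreg' : ∀ t > 0, C11loc (halfSpace n lam) (zeroOnHyperplane lam fun y => w y t) :=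
    fun t ht => (hreg t ht).congr (eqOn_zeroOnHyperplane _)
  have hdiff : ∀ t > 0, ∀ S ⊆ halfSpace n lam, IsCompact S → ∃ N, 0 ≤ N ∧ ∀ x ∈ S, ∀ z,
      |secondDiff (zeroOnHyperplane lam fun y => w y t) x z| ≤ N * levyWeight z :=
    fun t ht S hSΩ hS => (hreg' t ht).exists_abs_secondDiff_le (hbdd.slice t ht).abs_le hSΩ hS
  refine { hbdd with
    kernel := hk
    C_nonneg := abs_nonneg C
    continuousAt_slice := fun t ht x hx => (hreg' t ht).continuousAt hx
    exists_abs_secondDiff_le := hdiff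
    differentiableAt := fun x hx t ht => ?_
    abs_deriv_add_levyOp_le := fun x hx t ht => ?_ }
  · rw [hslice x hx]
    exact (htime x hx).differentiableOn_one.differentiableAt (Ioi_mem_nhds ht)
  · obtain ⟨N, -, hN⟩ := hdiff t ht {x} (singleton_subset_iff.2 hx) isCompact_singleton
    have hval := eqOn_zeroOnHyperplane (fun y => w y t) hx
    have hop := ((hLw x hx t ht).congr_ae (ae_eq_zeroOnHyperplane lam _) hval.symm).eq_levyOp hk
      (hbdd.slice t ht) (hN x rfl)
    rw [hslice x hx, ← hop, heq x hx t ht, hval, abs_mul]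
    exact mul_le_mul_of_nonneg_right ((hC x hx t ht).trans (le_abs_self C)) (abs_nonneg _)

end ZeroOnHyperplane

/-- asymptotic Hopf's lemma for antisymmetric functions. -/
theorem asymptotic_hopf_lemma_antisymmetric
    {n : ℕ} [NeZero n] {s lam Cns : ℝ} (hs : 0 < s) (hs1 : s < 1) (hCns : 0 < Cns)
    (w Lw clam : Eucl n → ℝ → ℝ) (ψ : Eucl n → ℝ)
    -- regularity of `w_λ` in `x` on `Σ̃_λ = {x | x₁ > λ}` and `C¹` in `t` on `(0,∞)`
    (hxreg : ∀ t > (0 : ℝ),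
      C11loc {x : Eucl n | lam < x 0} (fun x => w x t) ∧ L2s s (fun x => w x t))
    (htreg : ∀ x : Eucl n, lam < x 0 → ContDiffOn ℝ 1 (w x) (Set.Ioi 0))
    -- `w_λ` is bounded on `ℝⁿ × (0,∞)`
    (hbdd : ∃ M : ℝ, ∀ x : Eucl n, ∀ t > (0 : ℝ), |w x t| ≤ M)
    -- `c_λ` is bounded uniformly in `t`
    (hcbdd : ∃ M : ℝ, ∀ x : Eucl n, lam < x 0 → ∀ t > (0 : ℝ), |clam x t| ≤ M)
    -- (i)  the equation, with `Lw` the fractional Laplacian of `w_λ(·,t)`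
    (hLw : ∀ x : Eucl n, lam < x 0 → ∀ t > (0 : ℝ),
      IsFracLap Cns s (fun y => w y t) x (Lw x t))
    (hpde : ∀ x : Eucl n, lam < x 0 → ∀ t > (0 : ℝ),
      deriv (w x) t + Lw x t = clam x t * w x t)
    -- (ii)  antisymmetry
    (hanti : ∀ x : Eucl n, lam < x 0 → ∀ t > (0 : ℝ), w (reflect lam x) t = - w x t)
    -- (iii)  `liminf_{t → ∞} w_λ(x,t) ≥ 0`
    (hliminf : ∀ x : Eucl n, lam < x 0 → ∀ ε > (0 : ℝ), ∀ᶠ t in atTop, -ε ≤ w x t)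
    -- `ψ_λ` is an ω-limit of `w_λ`
    (tk : ℕ → ℝ) (htk : Tendsto tk atTop atTop)
    (hconv : TendstoUniformly (fun k x => w x (tk k)) ψ atTop)
    -- `ψ_λ ≥ 0` on `Σ̃_λ` and `ψ_λ > 0` somewhere in `Σ̃_λ`
    (hψpos : ∀ x : Eucl n, lam < x 0 → 0 ≤ ψ x)
    (hψsome : ∃ x : Eucl n, lam < x 0 ∧ 0 < ψ x) :
    -- conclusion: `∂ψ_λ/∂ν < 0` on `T_λ`, i.e. `liminf_{h→0⁺} ψ_λ(x + h e₁)/h > 0`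
    ∀ x : Eucl n, x 0 = lam →
      ∃ c > (0 : ℝ), ∀ᶠ h in 𝓝[>] (0 : ℝ),
        c ≤ ψ (x + h • EuclideanSpace.single (0 : Fin n) (1 : ℝ)) / h := by
  obtain ⟨M, hM⟩ := hbdd
  obtain ⟨C, hC⟩ := hcbdd
  obtain ⟨xs, hxs, hpos⟩ := hψsome
  intro x hx
  have hsol := isSolution_zeroOnHyperplane hs hs1 hCns (fun t ht => (hxreg t ht).1) htreg hM hC
    hLw hpde hanti
  have hn : (1 : ℝ) ≤ n := Nat.one_le_cast.2 (NeZero.one_le (n := n))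
  obtain ⟨κ, hκ, r, hr, hψ⟩ := hsol.exists_mul_coord_sub_le_limit (half_pos hCns)
    (by linarith) (fun t ht => isReflAntisymm_zeroOnHyperplane fun y hy => hanti y hy t ht)
    (fun y hy ε hε => by
      simpa only [eqOn_zeroOnHyperplane (fun y => w y _) hy] using hliminf y hy ε hε)
    htk (hconv.tendstoUniformlyOn.congr <| .of_forall fun k _ hy =>
      (eqOn_zeroOnHyperplane (fun y => w y (tk k)) hy).symm) hxs hpos hx
  exact ⟨κ, hκ, eventually_le_div_of_mul_coord_sub_le hr hx hψ⟩
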